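/- arXiv:gr-qc/9812061 — 6 statements merged into one kernel-verified Lean document; each statement's English description precedes it below -/
import Mathlib

section
/- Let φ : (0,∞) → [0,∞) be measurable with φ(E) = 0 for E ≥ E₀ for some E₀ > 0, and on every compact subset of (0,∞) bounded by C(E₀−E)₊^k for some k > −1. Let l > −1/2 with k + l + 3/2 > 0, and let μ₀ ∈ ℝ. Then there exists a unique pair (λ, μ) ∈ C¹([0,∞))² with λ(0) = 0 and μ(0) = μ₀ satisfying, for all r > 0, e^{−2λ(r)}(2rλ'(r) − 1) + 1 = 16π² c_{l,−1/2} r^{2l+2} H_l(e^{μ(r)}) and e^{−2λ(r)}(2rμ'(r) + 1) − 1 = 16π² c_{l,1/2} r^{2l+2} e^{−(2l+4)μ(r)} h_{l+3/2}(e^{μ(r)}), where h_m(u) = ∫_u^{E₀} φ(E)(E² − u²)^m dE, H_l(e^{μ}) = e^{−(2l+4)μ} h_{l+3/2}(e^{μ}) + e^{−(2l+2)μ} h_{l+1/2}(e^{μ}), and c_{a,b} = ∫₀¹ s^a(1−s)^b ds. -/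
/-!
With `x = e^{-2λ}` the first equation integrates to an expression for `x` in terms of `μ`, so that
the system is a fixed point equation `μ = T μ` for an integral operator `T`. At the vacuum boundary
`e^μ = E₀` the density need not be Lipschitz in `μ`, so contraction arguments are not available.
Instead, density and pressure decrease in `μ`, hence `T` is antitone on the nondecreasing functions
bounded below by `μ₀`; cut off at the vacuum boundary, these form a complete lattice. By
Knaster–Tarski `T ∘ T` has a least fixed point `f`, and every fixed point of `T` lies between `f`
and `T f`. On the ball where `T f` stays below the vacuum boundary the matter functions are
Lipschitz, so Grönwall's inequality gives `f = T f` there; beyond it both generate vacuum. Thus `T`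
has exactly one fixed point.

No horizon forms: where `x ≤ 1/2` the second equation gives `4 r x μ' ≥ 1`, so that the growth of
`μ` absorbs the negative part `-r^{2l+1} ρ(μ)` of `x'` and `log (2x) ≥ -C r^{2l+2} (μ - μ₀)`; past
the vacuum boundary `x` increases. Since `x` has this positive lower bound, `T` may be defined with
`x` truncated from below.
-/

open MeasureTheory Real Set

/-- The constant `c_{a,b} = ∫₀¹ s^a (1-s)^b ds`. -/
noncomputable def cab (a b : ℝ) : ℝ := ∫ s in (0:ℝ)..1, s ^ a * (1 - s) ^ b

/-- The function `h_m(u) = ∫_u^{E₀} φ(E) (E² - u²)^m dE`. -/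
noncomputable def hfun (φ : ℝ → ℝ) (E₀ m u : ℝ) : ℝ :=
  ∫ E in u..E₀, φ E * (E ^ 2 - u ^ 2) ^ m

/-- `(λ, μ)` is a `C¹` solution on `[0,∞)` of the reduced static spherically
symmetric Vlasov-Einstein problem with a regular center and `μ(0) = μ₀`. -/
def IsReducedVESolution (E₀ l : ℝ) (φ : ℝ → ℝ) (μ₀ : ℝ) (lam mu : ℝ → ℝ) : Prop :=
  lam 0 = 0 ∧ mu 0 = μ₀ ∧
    ContDiffOn ℝ 1 lam (Set.Ici 0) ∧ ContDiffOn ℝ 1 mu (Set.Ici 0) ∧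
    (∀ r ∈ Set.Ioi (0 : ℝ),
      Real.exp (-2 * lam r) * (2 * r * deriv lam r - 1) + 1 =
        16 * Real.pi ^ 2 * cab l (-(1/2)) * r ^ (2 * l + 2) *
          (Real.exp (-(2 * l + 4) * mu r) * hfun φ E₀ (l + 3/2) (Real.exp (mu r)) +
            Real.exp (-(2 * l + 2) * mu r) * hfun φ E₀ (l + 1/2) (Real.exp (mu r)))) ∧
    (∀ r ∈ Set.Ioi (0 : ℝ),
      Real.exp (-2 * lam r) * (2 * r * deriv mu r + 1) - 1 =
        16 * Real.pi ^ 2 * cab l (1/2) * r ^ (2 * l + 2) *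
          Real.exp (-(2 * l + 4) * mu r) * hfun φ E₀ (l + 3/2) (Real.exp (mu r)))

/-- The power `r ^ n` on `[0, ∞)`, extended by `0` to the negative half-line, so that radial
functions can be differentiated on the whole line. -/
noncomputable def posPow (n r : ℝ) : ℝ := (max r 0) ^ n

section posPow

variable {n r : ℝ}

lemma posPow_nonneg (n r : ℝ) : 0 ≤ posPow n r := rpow_nonneg (le_max_right _ _) _

lemma posPow_of_nonneg (hr : 0 ≤ r) : posPow n r = r ^ n := by
  rw [posPow, max_eq_left hr]

lemma posPow_of_nonpos (hn : 0 < n) (hr : r ≤ 0) : posPow n r = 0 := by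
  rw [posPow, max_eq_right hr, zero_rpow hn.ne']

lemma continuous_posPow (hn : 0 < n) : Continuous (posPow n) :=
  (continuous_id.max continuous_const).rpow_const fun _ => Or.inr hn.le

lemma monotone_posPow (hn : 0 < n) : Monotone (posPow n) := fun _ _ h =>
  rpow_le_rpow (le_max_right _ _) (max_le_max_right 0 h) hn.le

lemma posPow_eq_mul (hn : 1 < n) (r : ℝ) : posPow n r = r * posPow (n - 1) r := by
  rcases le_or_gt r 0 with hr | hr
  · rw [posPow_of_nonpos (by linarith) hr, posPow_of_nonpos (by linarith) hr, mul_zero]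
  · rw [posPow_of_nonneg hr.le, posPow_of_nonneg hr.le, mul_comm, ← rpow_add_one hr.ne',
      sub_add_cancel]

lemma hasDerivAt_posPow (hn : 1 < n) (r : ℝ) :
    HasDerivAt (posPow n) (n * posPow (n - 1) r) r := by
  have hn₀ : 0 < n := by linarith
  have hn₁ : 0 < n - 1 := by linarith
  refine hasDerivAt_of_hasDerivAt_of_ne' (x := 0) (g := fun r => n * posPow (n - 1) r)
    (fun s hs => ?_) (continuous_posPow hn₀).continuousAt
    (continuous_const.mul (continuous_posPow hn₁)).continuousAt r
  rcases hs.lt_or_gt with hneg | hpos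
  · rw [posPow_of_nonpos hn₁ hneg.le, mul_zero]
    refine (hasDerivAt_const s 0).congr_of_eventuallyEq ?_
    filter_upwards [Iio_mem_nhds hneg] with t ht using posPow_of_nonpos hn₀ (le_of_lt ht)
  · rw [posPow_of_nonneg hpos.le]
    refine (hasDerivAt_rpow_const (Or.inl hpos.ne')).congr_of_eventuallyEq ?_
    filter_upwards [Ioi_mem_nhds hpos] with t ht using posPow_of_nonneg (le_of_lt ht)

lemma contDiff_posPow (hn : 1 < n) : ContDiff ℝ 1 (posPow n) := by
  refine contDiff_one_iff_deriv.2 ⟨fun r => (hasDerivAt_posPow hn r).differentiableAt, ?_⟩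
  rw [deriv_eq (hasDerivAt_posPow hn)]
  exact continuous_const.mul (continuous_posPow (sub_pos.2 hn))

end posPow

lemma continuousAt_of_norm_le {α E : Type*} [TopologicalSpace α] [NormedAddCommGroup E]
    {u : α → E} {v : α → ℝ} {a : α} (hv : ContinuousAt v a) (hva : v a = 0)
    (huv : ∀ x, ‖u x‖ ≤ v x) : ContinuousAt u a := by
  have hua : u a = 0 := norm_le_zero_iff.1 (hva ▸ huv a)
  rw [ContinuousAt, hua]
  exact squeeze_zero_norm huv (hva ▸ hv.tendsto)

lemma nonneg_of_deriv_nonneg_of_neg {ψ ψ' : ℝ → ℝ} {a b : ℝ} (hab : a ≤ b)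
    (hψ : ContinuousOn ψ (Icc a b)) (ha : 0 ≤ ψ a)
    (hd : ∀ r ∈ Ioo a b, ψ r < 0 → HasDerivAt ψ (ψ' r) r ∧ 0 ≤ ψ' r) : 0 ≤ ψ b := by
  by_contra! hneg
  have hK : IsCompact (Icc a b ∩ ψ ⁻¹' Ici 0) :=
    isCompact_Icc.of_isClosed_subset (hψ.preimage_isClosed_of_isClosed isClosed_Icc isClosed_Ici)
      inter_subset_left
  obtain ⟨t, ⟨⟨hat, htb⟩, hψt⟩, hmax⟩ := hK.exists_isGreatest ⟨a, ⟨⟨le_rfl, hab⟩, ha⟩⟩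
  have hneg_after : ∀ r ∈ Ioo t b, ψ r < 0 := fun r hr =>
    not_le.1 fun h => (hmax ⟨⟨hat.trans hr.1.le, hr.2.le⟩, h⟩).not_gt hr.1
  have hd_after : ∀ r ∈ interior (Icc t b), HasDerivAt ψ (ψ' r) r ∧ 0 ≤ ψ' r := by
    rw [interior_Icc]
    exact fun r hr => hd r ⟨hat.trans_lt hr.1, hr.2⟩ (hneg_after r hr)
  have hmono : MonotoneOn ψ (Icc t b) :=
    monotoneOn_of_hasDerivWithinAt_nonneg (convex_Icc t b) (hψ.mono (Icc_subset_Icc_left hat))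
      (fun r hr => (hd_after r hr).1.hasDerivWithinAt) fun r hr => (hd_after r hr).2
  exact (hψt.trans (hmono ⟨le_rfl, htb⟩ ⟨htb, le_rfl⟩ htb)).not_gt hneg

lemma existsUnique_fixedPoint_of_antitone {α : Type*} [CompleteLattice α] {T : α → α}
    (hT : Antitone T) (hcycle : ∀ a b, a ≤ b → T a = b → T b = a → a = b) : ∃! a, T a = a := by
  -- The least fixed point of `T ∘ T` and its image under `T` form a 2-cycle that encloses all the
  -- fixed points of `T`.
  let T₂ : α →o α := ⟨T ∘ T, hT.comp hT⟩
  have lfp_le {c : α} (hc : T c = c) : T₂.lfp ≤ c :=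
    T₂.lfp_le_fixed (show T (T c) = c by rw [hc, hc])
  have hTT : T (T T₂.lfp) = T₂.lfp := T₂.map_lfp
  have hfix : T₂.lfp = T T₂.lfp :=
    hcycle _ _ (T₂.lfp_le_fixed (congrArg T hTT)) rfl hTT
  exact ⟨T₂.lfp, hfix.symm, fun c hc =>
    ((hc ▸ hT (lfp_le hc)).trans hfix.ge).antisymm (lfp_le hc)⟩

section LocallyLipschitz

variable {α β γ : Type*} [PseudoEMetricSpace α] [PseudoEMetricSpace β] [PseudoEMetricSpace γ]

lemma locallyLipschitzOn_mul {A : Type*} [NormedRing A] [NormedAlgebra ℝ A] {f g : α → A}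
    {s : Set α} (hf : LocallyLipschitzOn s f) (hg : LocallyLipschitzOn s g) :
    LocallyLipschitzOn s fun x => f x * g x :=
  locallyLipschitzOn_iff_restrict.2 <|
    (contDiff_fst.mul contDiff_snd : ContDiff ℝ 1 fun z : A × A => z.1 * z.2).locallyLipschitz.comp
      (hf.restrict.prodMk hg.restrict)

lemma locallyLipschitzOn_comp {f : β → γ} {g : α → β} {s : Set α} {t : Set β}
    (hf : LocallyLipschitzOn t f) (hg : LocallyLipschitzOn s g) (hst : MapsTo g s t) :
    LocallyLipschitzOn s (f ∘ g) := by
  intro x hx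
  obtain ⟨K, u, hu, hKu⟩ := hf (hst hx)
  obtain ⟨K', v, hv, hKv⟩ := hg hx
  have hgu : g ⁻¹' u ∈ nhdsWithin x s :=
    (hg.continuousOn x hx).tendsto_nhdsWithin hst hu
  exact ⟨K * K', v ∩ g ⁻¹' u, Filter.inter_mem hv hgu,
    hKu.comp (hKv.mono inter_subset_left) fun _ hy => hy.2⟩

lemma locallyLipschitz_of_dist_le {X Y Z : Type*} [PseudoMetricSpace X] [PseudoMetricSpace Y]
    [PseudoMetricSpace Z] {f : X → Y} {g : X → Z} {C : NNReal} (hg : LocallyLipschitz g)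
    (hfg : ∀ x y, dist (f x) (f y) ≤ C * dist (g x) (g y)) : LocallyLipschitz f := by
  intro x
  obtain ⟨K, t, ht, hK⟩ := hg x
  refine ⟨C * K, t, ht, LipschitzOnWith.of_dist_le_mul fun y hy z hz => ?_⟩
  calc dist (f y) (f z) ≤ C * dist (g y) (g z) := hfg y z
    _ ≤ C * (K * dist y z) := by
        gcongr
        exact hK.dist_le_mul y hy z hz
    _ = (C * K : NNReal) * dist y z := by rw [NNReal.coe_mul, mul_assoc]

end LocallyLipschitz

/-- The dependence of an energy density or pressure on the potential: matter is present only where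
the potential lies below the cut-off `y₁`, at which the density may fail to be Lipschitz. -/
structure IsMatterProfile (y₀ y₁ : ℝ) (g : ℝ → ℝ) : Prop where
  nonneg : ∀ y, 0 ≤ g y
  antitone : Antitone g
  continuous : Continuous g
  eq_zero : ∀ y, y₁ ≤ y → g y = 0
  locallyLipschitzOn : LocallyLipschitzOn (Ico y₀ y₁) g

namespace IsMatterProfile

variable {y₀ y₁ : ℝ} {g q a : ℝ → ℝ}

lemma add (hg : IsMatterProfile y₀ y₁ g) (hq : IsMatterProfile y₀ y₁ q) :
    IsMatterProfile y₀ y₁ fun y => g y + q y where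
  nonneg y := add_nonneg (hg.nonneg y) (hq.nonneg y)
  antitone := hg.antitone.add hq.antitone
  continuous := hg.continuous.add hq.continuous
  eq_zero y hy := by rw [hg.eq_zero y hy, hq.eq_zero y hy, add_zero]
  locallyLipschitzOn := hg.locallyLipschitzOn.add hq.locallyLipschitzOn

lemma mul (hg : IsMatterProfile y₀ y₁ g) (ha : ∀ y, 0 ≤ a y) (ha_anti : Antitone a)
    (ha_lip : LocallyLipschitz a) : IsMatterProfile y₀ y₁ fun y => a y * g y where
  nonneg y := mul_nonneg (ha y) (hg.nonneg y)
  antitone _ y h := mul_le_mul (ha_anti h) (hg.antitone h) (hg.nonneg y) (ha _)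
  continuous := ha_lip.continuous.mul hg.continuous
  eq_zero y hy := by rw [hg.eq_zero y hy, mul_zero]
  locallyLipschitzOn := locallyLipschitzOn_mul ha_lip.locallyLipschitzOn hg.locallyLipschitzOn

lemma exists_sub_le (hg : IsMatterProfile y₀ y₁ g) {z : ℝ} (hz : z < y₁) :
    ∃ L, 0 ≤ L ∧ ∀ a b, y₀ ≤ a → a ≤ b → b ≤ z → g a - g b ≤ L * (b - a) := by
  obtain ⟨L, hL⟩ := (hg.locallyLipschitzOn.mono
    (Icc_subset_Ico_right hz)).exists_lipschitzOnWith_of_compact isCompact_Icc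
  refine ⟨L, L.2, fun a b ha hab hb => ?_⟩
  have hLab := hL.dist_le_mul a ⟨ha, hab.trans hb⟩ b ⟨ha.trans hab, hb⟩
  rw [dist_comm a b, Real.dist_eq, Real.dist_eq, abs_of_nonneg (sub_nonneg.2 hab)] at hLab
  exact (le_abs_self _).trans hLab

end IsMatterProfile

/-- The data of the radial system `(r (1 - x))' = r ^ n ρ(μ)`, `x (2 r μ' + 1) - 1 = r ^ n p(μ)`
with `x(0) = 1` and `μ(0) = y₀`, where `x = e^{-2λ}`. -/
structure RadialSystem where
  (n y₀ y₁ : ℝ)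
  (ρ p : ℝ → ℝ)
  one_lt_n : 1 < n
  y₀_le_y₁ : y₀ ≤ y₁
  isMatterProfile_ρ : IsMatterProfile y₀ y₁ ρ
  isMatterProfile_p : IsMatterProfile y₀ y₁ p

namespace RadialSystem

variable (S : RadialSystem) {f h : ℝ → ℝ} {r : ℝ}

lemma n_pos : 0 < S.n := one_pos.trans S.one_lt_n

lemma n_sub_one_pos : 0 < S.n - 1 := sub_pos.2 S.one_lt_n

lemma ρ_nonneg (y : ℝ) : 0 ≤ S.ρ y := S.isMatterProfile_ρ.nonneg y

lemma p_nonneg (y : ℝ) : 0 ≤ S.p y := S.isMatterProfile_p.nonneg y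

/-- The candidate potentials `μ`: the nondecreasing functions bounded below by the central value. -/
structure Admissible (f : ℝ → ℝ) : Prop where
  monotone : Monotone f
  le_apply : ∀ r, S.y₀ ≤ f r

/-- The mass function `r (1 - x(r))` generated by the potential `f`. -/
noncomputable def mass (f : ℝ → ℝ) (r : ℝ) : ℝ := ∫ s in (0 : ℝ)..r, posPow S.n s * S.ρ (f s)

/-- The metric coefficient `x = e^{-2λ}` generated by the potential `f`. At `r = 0` the junk value
of the division makes it `1`, which is also its limit. -/
noncomputable def coeff (f : ℝ → ℝ) (r : ℝ) : ℝ := 1 - S.mass f r / r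

/-- The a priori lower bound of `coeff` at a radius where the potential has the value `y`. -/
noncomputable def horizonBound (y r : ℝ) : ℝ :=
  1 / 2 * exp (-(4 * S.ρ S.y₀ * posPow S.n r * (y - S.y₀)))

/-- The metric coefficient truncated at its a priori lower bound, which makes the integral operator
`picard` globally defined and is removed afterwards by `horizonBound_le_coeff`. -/
noncomputable def truncCoeff (f : ℝ → ℝ) (r : ℝ) : ℝ := max (S.coeff f r) (S.horizonBound S.y₁ r)

/-- The derivative that the equation for `μ'` prescribes when its right-hand side is evaluated at
the potential `f`. -/
noncomputable def slope (f : ℝ → ℝ) (r : ℝ) : ℝ :=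
  ((1 + posPow S.n r * S.p (f r)) / S.truncCoeff f r - 1) / (2 * r)

/-- The integral operator whose fixed points are the potentials solving the system. -/
noncomputable def picard (f : ℝ → ℝ) (r : ℝ) : ℝ := S.y₀ + ∫ s in (0 : ℝ)..r, S.slope f s

/-- A continuous bound of `slope`, uniform in the potential and vanishing at the center. -/
noncomputable def slopeBound (r : ℝ) : ℝ :=
  posPow (S.n - 1) r * (S.ρ S.y₀ + S.p S.y₀) / (2 * S.horizonBound S.y₁ r)

/-- The derivative of `coeff`. -/
noncomputable def coeffDeriv (f : ℝ → ℝ) (r : ℝ) : ℝ :=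
  S.mass f r / r / r - posPow S.n r * S.ρ (f r) / r

lemma horizonBound_pos (y r : ℝ) : 0 < S.horizonBound y r := by unfold horizonBound; positivity

lemma horizonBound_le_half {y : ℝ} (hy : S.y₀ ≤ y) (r : ℝ) : S.horizonBound y r ≤ 1 / 2 := by
  have hexponent : 0 ≤ 4 * S.ρ S.y₀ * posPow S.n r * (y - S.y₀) :=
    mul_nonneg (mul_nonneg (mul_nonneg (by norm_num) (S.ρ_nonneg _)) (posPow_nonneg _ _))
      (sub_nonneg.2 hy)
  have hexp := exp_le_one_iff.2 (neg_nonpos.2 hexponent)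
  unfold horizonBound
  linarith

lemma continuous_horizonBound (y : ℝ) : Continuous (S.horizonBound y) := by
  have := continuous_posPow S.n_pos
  unfold horizonBound
  fun_prop

lemma antitone_horizonBound : Antitone (S.horizonBound S.y₁) := by
  intro r s hrs
  have := S.ρ_nonneg S.y₀
  have := sub_nonneg.2 S.y₀_le_y₁
  have := monotone_posPow S.n_pos hrs
  unfold horizonBound
  gcongr

lemma horizonBound_anti_left (r : ℝ) : Antitone fun y => S.horizonBound y r := by
  intro y z hyz
  have := S.ρ_nonneg S.y₀
  have := posPow_nonneg S.n r
  dsimp only [horizonBound]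
  gcongr

lemma horizonBound_le_truncCoeff (f : ℝ → ℝ) (r : ℝ) : S.horizonBound S.y₁ r ≤ S.truncCoeff f r :=
  le_max_right _ _

lemma coeff_le_truncCoeff (f : ℝ → ℝ) (r : ℝ) : S.coeff f r ≤ S.truncCoeff f r := le_max_left _ _

lemma truncCoeff_pos (f : ℝ → ℝ) (r : ℝ) : 0 < S.truncCoeff f r :=
  (S.horizonBound_pos S.y₁ r).trans_le (S.horizonBound_le_truncCoeff f r)

lemma mass_of_nonpos (f : ℝ → ℝ) (hr : r ≤ 0) : S.mass f r = 0 := by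
  refine (intervalIntegral.integral_congr (g := fun _ => 0) fun s hs => ?_).trans (by simp)
  rw [uIcc_of_ge hr] at hs
  simp [posPow_of_nonpos S.n_pos hs.2]

lemma mass_div_nonneg (f : ℝ → ℝ) (r : ℝ) : 0 ≤ S.mass f r / r := by
  rcases le_total r 0 with hr | hr
  · simp [S.mass_of_nonpos f hr]
  · exact div_nonneg (intervalIntegral.integral_nonneg hr fun s _ =>
      mul_nonneg (posPow_nonneg _ _) (S.ρ_nonneg _)) hr

lemma coeff_of_nonpos (f : ℝ → ℝ) (hr : r ≤ 0) : S.coeff f r = 1 := by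
  simp [coeff, S.mass_of_nonpos f hr]

lemma coeff_le_one (f : ℝ → ℝ) (r : ℝ) : S.coeff f r ≤ 1 := sub_le_self 1 (S.mass_div_nonneg f r)

lemma truncCoeff_le_one (f : ℝ → ℝ) (r : ℝ) : S.truncCoeff f r ≤ 1 :=
  max_le (S.coeff_le_one f r) ((S.horizonBound_le_half S.y₀_le_y₁ r).trans (by norm_num))

lemma truncCoeff_of_nonpos (f : ℝ → ℝ) (hr : r ≤ 0) : S.truncCoeff f r = 1 :=
  (S.truncCoeff_le_one f r).antisymm (le_max_of_le_left (S.coeff_of_nonpos f hr).ge)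

lemma slope_of_nonpos (f : ℝ → ℝ) (hr : r ≤ 0) : S.slope f r = 0 := by
  simp [slope, S.truncCoeff_of_nonpos f hr, posPow_of_nonpos S.n_pos hr]

lemma one_sub_truncCoeff_le (f : ℝ → ℝ) (hr : 0 < r) :
    1 - S.truncCoeff f r ≤ 2 * r * S.truncCoeff f r * S.slope f r := by
  have hx := S.truncCoeff_pos f r
  have hP := mul_nonneg (posPow_nonneg S.n r) (S.p_nonneg (f r))
  have heq : 2 * r * S.truncCoeff f r * S.slope f r =
      1 + posPow S.n r * S.p (f r) - S.truncCoeff f r := by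
    unfold slope
    field_simp
  linarith

lemma slope_nonneg (f : ℝ → ℝ) (r : ℝ) : 0 ≤ S.slope f r := by
  rcases le_or_gt r 0 with hr | hr
  · rw [S.slope_of_nonpos f hr]
  · have hx := S.truncCoeff_pos f r
    have hle := (sub_nonneg.2 (S.truncCoeff_le_one f r)).trans (S.one_sub_truncCoeff_le f hr)
    exact nonneg_of_mul_nonneg_right hle (by positivity)

lemma continuous_slopeBound : Continuous S.slopeBound :=
  ((continuous_posPow S.n_sub_one_pos).mul continuous_const).div
    (continuous_const.mul (S.continuous_horizonBound S.y₁))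
    fun r => (mul_pos two_pos (S.horizonBound_pos S.y₁ r)).ne'

lemma slopeBound_zero : S.slopeBound 0 = 0 := by
  simp [slopeBound, posPow_of_nonpos S.n_sub_one_pos le_rfl]

lemma picard_of_nonpos (f : ℝ → ℝ) (hr : r ≤ 0) : S.picard f r = S.y₀ := by
  have hint : ∫ s in (0 : ℝ)..r, S.slope f s = 0 := by
    refine (intervalIntegral.integral_congr (g := fun _ => 0) fun s hs => ?_).trans (by simp)
    rw [uIcc_of_ge hr] at hs
    exact S.slope_of_nonpos f hs.2
  rw [picard, hint, add_zero]

lemma picard_congr (hρ : ∀ r, 0 ≤ r → S.ρ (f r) = S.ρ (h r))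
    (hp : ∀ r, 0 ≤ r → S.p (f r) = S.p (h r)) : S.picard f = S.picard h := by
  have hmass (r : ℝ) : S.mass f r = S.mass h r := by
    rcases le_total r 0 with hr | hr
    · rw [S.mass_of_nonpos f hr, S.mass_of_nonpos h hr]
    · refine intervalIntegral.integral_congr fun s hs => ?_
      rw [uIcc_of_le hr] at hs
      simp only [hρ s hs.1]
  have hslope : S.slope f = S.slope h := by
    ext r
    rcases le_total r 0 with hr | hr
    · rw [S.slope_of_nonpos f hr, S.slope_of_nonpos h hr]
    · rw [slope, slope, truncCoeff, truncCoeff, coeff, coeff, hmass, hp r hr]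
  ext r
  rw [picard, picard, hslope]

namespace Admissible

variable {S}

lemma ρ_le (hf : S.Admissible f) (r : ℝ) : S.ρ (f r) ≤ S.ρ S.y₀ :=
  S.isMatterProfile_ρ.antitone (hf.le_apply r)

lemma p_le (hf : S.Admissible f) (r : ℝ) : S.p (f r) ≤ S.p S.y₀ :=
  S.isMatterProfile_p.antitone (hf.le_apply r)

lemma intervalIntegrable_mass (hf : S.Admissible f) (a b : ℝ) :
    IntervalIntegrable (fun s => posPow S.n s * S.ρ (f s)) volume a b := by
  have hpow := continuous_posPow S.n_pos
  have hmeas : Measurable fun s => posPow S.n s * S.ρ (f s) :=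
    hpow.measurable.mul (S.isMatterProfile_ρ.continuous.measurable.comp hf.monotone.measurable)
  refine ((hpow.mul continuous_const).intervalIntegrable (μ := volume) a b).mono_fun'
    (g := fun s => posPow S.n s * S.ρ S.y₀) hmeas.aestronglyMeasurable (.of_forall fun s => ?_)
  dsimp only
  rw [norm_of_nonneg (mul_nonneg (posPow_nonneg _ _) (S.ρ_nonneg _))]
  exact mul_le_mul_of_nonneg_left (hf.ρ_le s) (posPow_nonneg _ _)

lemma continuous_mass (hf : S.Admissible f) : Continuous (S.mass f) :=
  intervalIntegral.continuous_primitive hf.intervalIntegrable_mass 0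

lemma mass_sub_le (hf : S.Admissible f) (hh : S.Admissible h) {K : ℝ} (hr : 0 ≤ r) (hK : 0 ≤ K)
    (hle : ∀ s ∈ Icc 0 r, S.ρ (f s) - S.ρ (h s) ≤ K) :
    S.mass f r - S.mass h r ≤ posPow S.n r * K * r := by
  rw [mass, mass, ← intervalIntegral.integral_sub (hf.intervalIntegrable_mass _ _)
    (hh.intervalIntegrable_mass _ _)]
  calc ∫ s in (0 : ℝ)..r, (posPow S.n s * S.ρ (f s) - posPow S.n s * S.ρ (h s))
      ≤ ∫ _ in (0 : ℝ)..r, posPow S.n r * K := by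
        refine intervalIntegral.integral_mono_on hr ((hf.intervalIntegrable_mass _ _).sub
          (hh.intervalIntegrable_mass _ _)) (by simp) fun s hs => ?_
        rw [← mul_sub]
        exact (mul_le_mul_of_nonneg_left (hle s hs) (posPow_nonneg _ _)).trans
          (mul_le_mul_of_nonneg_right (monotone_posPow S.n_pos hs.2) hK)
    _ = posPow S.n r * K * r := by
        rw [intervalIntegral.integral_const, sub_zero, smul_eq_mul, mul_comm]

lemma mass_div_le (hf : S.Admissible f) (r : ℝ) : S.mass f r / r ≤ posPow S.n r * S.ρ S.y₀ := by
  rcases le_or_gt r 0 with hr | hr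
  · simp [S.mass_of_nonpos f hr, posPow_of_nonpos S.n_pos hr]
  · rw [div_le_iff₀ hr]
    calc S.mass f r ≤ ∫ _ in (0 : ℝ)..r, posPow S.n r * S.ρ S.y₀ :=
          intervalIntegral.integral_mono_on hr.le (hf.intervalIntegrable_mass _ _) (by simp)
            fun s hs => mul_le_mul (monotone_posPow S.n_pos hs.2) (hf.ρ_le s) (S.ρ_nonneg _)
              (posPow_nonneg _ _)
      _ = posPow S.n r * S.ρ S.y₀ * r := by
          rw [intervalIntegral.integral_const, sub_zero, smul_eq_mul, mul_comm]

lemma continuous_coeff (hf : S.Admissible f) : Continuous (S.coeff f) := by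
  refine continuous_const.sub (continuous_iff_continuousAt.2 fun r => ?_)
  rcases eq_or_ne r 0 with rfl | hr
  · refine continuousAt_of_norm_le (v := fun r => posPow S.n r * S.ρ S.y₀)
      ((continuous_posPow S.n_pos).mul continuous_const).continuousAt
      (by simp [posPow_of_nonpos S.n_pos le_rfl]) fun r => ?_
    rw [norm_of_nonneg (S.mass_div_nonneg f r)]
    exact hf.mass_div_le r
  · exact hf.continuous_mass.continuousAt.div continuousAt_id hr

lemma continuous_truncCoeff (hf : S.Admissible f) : Continuous (S.truncCoeff f) :=
  hf.continuous_coeff.max (S.continuous_horizonBound S.y₁)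

lemma slope_le (hf : S.Admissible f) (r : ℝ) : S.slope f r ≤ S.slopeBound r := by
  have hρ := S.ρ_nonneg S.y₀
  have hp := S.p_nonneg S.y₀
  have hlow := S.horizonBound_pos S.y₁ r
  have hpow := posPow_nonneg S.n r
  rcases le_or_gt r 0 with hr | hr
  · rw [S.slope_of_nonpos f hr]
    exact div_nonneg (mul_nonneg (posPow_nonneg _ _) (by linarith)) (by linarith)
  have hx := S.truncCoeff_pos f r
  have hlx := S.horizonBound_le_truncCoeff f r
  have hmass : 1 - S.truncCoeff f r ≤ posPow S.n r * S.ρ S.y₀ := by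
    have hcoeff := S.coeff_le_truncCoeff f r
    rw [coeff] at hcoeff
    linarith [hf.mass_div_le r]
  calc S.slope f r
      = (1 - S.truncCoeff f r + posPow S.n r * S.p (f r)) / (2 * r * S.truncCoeff f r) := by
        unfold slope
        field_simp
        ring
    _ ≤ (posPow S.n r * S.ρ S.y₀ + posPow S.n r * S.p S.y₀) / (2 * r * S.horizonBound S.y₁ r) := by
        gcongr
        exact hf.p_le r
    _ = S.slopeBound r := by
        rw [slopeBound, posPow_eq_mul S.one_lt_n]
        field_simp

lemma measurable_slope (hf : S.Admissible f) : Measurable (S.slope f) := by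
  have hpow := (continuous_posPow S.n_pos).measurable
  have hp := S.isMatterProfile_p.continuous.measurable.comp hf.monotone.measurable
  exact (((measurable_const.add (hpow.mul hp)).div hf.continuous_truncCoeff.measurable).sub
    measurable_const).div (measurable_const.mul measurable_id)

lemma intervalIntegrable_slope (hf : S.Admissible f) (a b : ℝ) :
    IntervalIntegrable (S.slope f) volume a b :=
  (S.continuous_slopeBound.intervalIntegrable a b).mono_fun'
    hf.measurable_slope.aestronglyMeasurable
    (.of_forall fun s => (norm_of_nonneg (S.slope_nonneg f s)).trans_le (hf.slope_le s))

lemma continuous_picard (hf : S.Admissible f) : Continuous (S.picard f) :=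
  continuous_const.add (intervalIntegral.continuous_primitive hf.intervalIntegrable_slope 0)

lemma monotone_picard (hf : S.Admissible f) : Monotone (S.picard f) := fun a b hab => by
  have hadd := intervalIntegral.integral_add_adjacent_intervals
    (hf.intervalIntegrable_slope 0 a) (hf.intervalIntegrable_slope a b)
  have hnonneg := intervalIntegral.integral_nonneg (μ := volume) hab fun s _ => S.slope_nonneg f s
  unfold picard
  linarith

lemma picard (hf : S.Admissible f) : S.Admissible (S.picard f) where
  monotone := hf.monotone_picard
  le_apply r := (S.picard_of_nonpos f (min_le_right r 0)).ge.trans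
    (hf.monotone_picard (min_le_left r 0))

section Order

variable (hf : S.Admissible f) (hh : S.Admissible h) (hfh : f ≤ h) (r : ℝ)
include hf hh hfh

lemma truncCoeff_mono : S.truncCoeff f r ≤ S.truncCoeff h r := by
  rcases le_or_gt r 0 with hr | hr
  · rw [S.truncCoeff_of_nonpos f hr, S.truncCoeff_of_nonpos h hr]
  · have hmass : S.mass h r ≤ S.mass f r :=
      intervalIntegral.integral_mono_on hr.le (hh.intervalIntegrable_mass _ _)
        (hf.intervalIntegrable_mass _ _) fun s _ =>
          mul_le_mul_of_nonneg_left (S.isMatterProfile_ρ.antitone (hfh s)) (posPow_nonneg _ _)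
    unfold truncCoeff coeff
    gcongr

lemma slope_anti : S.slope h r ≤ S.slope f r := by
  rcases le_or_gt r 0 with hr | hr
  · rw [S.slope_of_nonpos f hr, S.slope_of_nonpos h hr]
  · have := truncCoeff_mono hf hh hfh r
    have := S.isMatterProfile_p.antitone (hfh r)
    have := S.truncCoeff_pos f r
    have := posPow_nonneg S.n r
    have := S.p_nonneg (f r)
    unfold RadialSystem.slope
    gcongr

lemma picard_anti : S.picard h r ≤ S.picard f r := by
  rcases le_or_gt r 0 with hr | hr
  · rw [S.picard_of_nonpos f hr, S.picard_of_nonpos h hr]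
  · exact add_le_add_right (intervalIntegral.integral_mono_on hr.le
      (hh.intervalIntegrable_slope _ _) (hf.intervalIntegrable_slope _ _)
      fun s _ => slope_anti hf hh hfh s) S.y₀

end Order

section Continuous

variable (hf : S.Admissible f) (hc : Continuous f)
include hf hc

lemma continuous_coeffDeriv : Continuous (S.coeffDeriv f) := by
  have hpow := continuous_posPow S.n_pos
  have hpow' := continuous_posPow S.n_sub_one_pos
  refine continuous_iff_continuousAt.2 fun r => ?_
  rcases eq_or_ne r 0 with rfl | hr
  · refine continuousAt_of_norm_le (v := fun r => posPow (S.n - 1) r * S.ρ S.y₀)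
      (hpow'.mul continuous_const).continuousAt
      (by simp [posPow_of_nonpos S.n_sub_one_pos le_rfl]) fun r => ?_
    rcases le_or_gt r 0 with hr | hr
    · simp [coeffDeriv, S.mass_of_nonpos f hr, posPow_of_nonpos S.n_pos hr,
        posPow_of_nonpos S.n_sub_one_pos hr]
    · have hmass := hf.mass_div_le r
      have hmass₀ := S.mass_div_nonneg f r
      have hρ := mul_le_mul_of_nonneg_left (hf.ρ_le r) (posPow_nonneg S.n r)
      have hρ₀ := mul_nonneg (posPow_nonneg S.n r) (S.ρ_nonneg (f r))
      calc ‖S.coeffDeriv f r‖ = |S.mass f r / r - posPow S.n r * S.ρ (f r)| / r := by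
            rw [coeffDeriv, ← sub_div, norm_div, norm_eq_abs, norm_of_nonneg hr.le]
        _ ≤ posPow S.n r * S.ρ S.y₀ / r := by
            gcongr
            exact abs_le.2 ⟨by linarith, by linarith⟩
        _ = posPow (S.n - 1) r * S.ρ S.y₀ := by
            rw [posPow_eq_mul S.one_lt_n]
            field_simp
  · have hmass := hf.continuous_mass.continuousAt (x := r)
    have hρ := (hpow.mul (S.isMatterProfile_ρ.continuous.comp hc)).continuousAt (x := r)
    exact ((hmass.div continuousAt_id hr).div continuousAt_id hr).sub (hρ.div continuousAt_id hr)

lemma hasDerivAt_coeff (r : ℝ) : HasDerivAt (S.coeff f) (S.coeffDeriv f r) r := by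
  refine hasDerivAt_of_hasDerivAt_of_ne' (x := 0) (fun r hr => ?_)
    hf.continuous_coeff.continuousAt (hf.continuous_coeffDeriv hc).continuousAt r
  have hρ : Continuous fun s => posPow S.n s * S.ρ (f s) :=
    (continuous_posPow S.n_pos).mul (S.isMatterProfile_ρ.continuous.comp hc)
  have hmass : HasDerivAt (S.mass f) (posPow S.n r * S.ρ (f r)) r :=
    intervalIntegral.integral_hasDerivAt_right (hρ.intervalIntegrable _ _)
      (hρ.stronglyMeasurableAtFilter _ _) hρ.continuousAt
  refine HasDerivAt.congr_deriv (f := S.coeff f)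
    ((hmass.div (hasDerivAt_id r) hr).const_sub 1) ?_
  simp only [coeffDeriv, id]
  field_simp
  ring

lemma continuous_slope : Continuous (S.slope f) := by
  refine continuous_iff_continuousAt.2 fun r => ?_
  rcases eq_or_ne r 0 with rfl | hr
  · exact continuousAt_of_norm_le S.continuous_slopeBound.continuousAt S.slopeBound_zero
      fun r => (norm_of_nonneg (S.slope_nonneg f r)).trans_le (hf.slope_le r)
  · have hnum : Continuous fun r => (1 + posPow S.n r * S.p (f r)) / S.truncCoeff f r - 1 :=
      ((continuous_const.add ((continuous_posPow S.n_pos).mul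
        (S.isMatterProfile_p.continuous.comp hc))).div hf.continuous_truncCoeff
          fun r => (S.truncCoeff_pos f r).ne').sub continuous_const
    exact hnum.continuousAt.div (continuousAt_const.mul continuousAt_id) (by simpa using hr)

lemma hasDerivAt_picard (r : ℝ) : HasDerivAt (S.picard f) (S.slope f r) r := by
  have hslope := hf.continuous_slope hc
  exact (intervalIntegral.integral_hasDerivAt_right (hslope.intervalIntegrable _ _)
      (hslope.stronglyMeasurableAtFilter _ _) hslope.continuousAt).const_add S.y₀

end Continuous

end Admissible

lemma slope_sub_slope (f h : ℝ → ℝ) (r : ℝ) :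
    S.slope f r - S.slope h r =
      (posPow S.n r * (S.p (f r) - S.p (h r)) / S.truncCoeff f r +
        (1 + posPow S.n r * S.p (h r)) * (S.truncCoeff h r - S.truncCoeff f r) /
          (S.truncCoeff f r * S.truncCoeff h r)) / (2 * r) := by
  have hf := S.truncCoeff_pos f r
  have hh := S.truncCoeff_pos h r
  rw [slope, slope, ← sub_div]
  congr 1
  field_simp
  ring

namespace Admissible

variable {S} {f' : ℝ → ℝ} {R : ℝ}

lemma hasDerivAt_horizonBound {d : ℝ} (hd : HasDerivAt f d r) :
    HasDerivAt (fun r => S.horizonBound (f r) r)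
      (-(S.horizonBound (f r) r * (4 * S.ρ S.y₀ *
        (S.n * posPow (S.n - 1) r * (f r - S.y₀) + posPow S.n r * d)))) r := by
  have hexponent := ((hasDerivAt_posPow S.one_lt_n r).const_mul (4 * S.ρ S.y₀)).mul
    (hd.sub_const S.y₀)
  refine HasDerivAt.congr_deriv (f := fun r => S.horizonBound (f r) r)
    (hexponent.neg.exp.const_mul (1 / 2)) ?_
  simp only [horizonBound, Pi.mul_apply, Pi.neg_apply]
  ring

lemma one_le_mul_of_coeff_lt (hf : S.Admissible f) (hr : 0 < r) {d : ℝ} (hd₀ : 0 ≤ d)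
    (hd : 1 - S.truncCoeff f r ≤ 2 * r * S.truncCoeff f r * d)
    (hlt : S.coeff f r < S.horizonBound (f r) r) (hy : f r ≤ S.y₁) :
    1 ≤ 4 * r * S.horizonBound (f r) r * d := by
  have hx : S.truncCoeff f r ≤ S.horizonBound (f r) r :=
    max_le hlt.le (S.horizonBound_anti_left r hy)
  have hhalf := S.horizonBound_le_half (hf.le_apply r) r
  calc (1 : ℝ) ≤ 2 * (1 - S.truncCoeff f r) := by linarith
    _ ≤ 4 * r * S.truncCoeff f r * d := by linarith
    _ ≤ 4 * r * S.horizonBound (f r) r * d := by gcongr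

lemma density_div_le_of_coeff_lt (hf : S.Admissible f) (hr : 0 < r) {d : ℝ} (hd₀ : 0 ≤ d)
    (hd : 1 - S.truncCoeff f r ≤ 2 * r * S.truncCoeff f r * d)
    (hlt : S.coeff f r < S.horizonBound (f r) r) :
    posPow S.n r * S.ρ (f r) / r ≤
      S.horizonBound (f r) r * (4 * S.ρ S.y₀ * (posPow S.n r * d)) := by
  have hpow := posPow_nonneg S.n r
  have hρ := S.ρ_nonneg S.y₀
  have he := S.horizonBound_pos (f r) r
  rcases le_total S.y₁ (f r) with hy | hy
  · rw [S.isMatterProfile_ρ.eq_zero _ hy, mul_zero, zero_div]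
    positivity
  · calc posPow S.n r * S.ρ (f r) / r ≤ posPow S.n r * S.ρ S.y₀ / r := by
          gcongr
          exact hf.ρ_le r
      _ ≤ posPow S.n r * S.ρ S.y₀ / r * (4 * r * S.horizonBound (f r) r * d) :=
          le_mul_of_one_le_right (by positivity) (hf.one_le_mul_of_coeff_lt hr hd₀ hd hlt hy)
      _ = S.horizonBound (f r) r * (4 * S.ρ S.y₀ * (posPow S.n r * d)) := by field_simp

lemma coeff_le_coeff_of_vacuum (hf : S.Admissible f) {t : ℝ} (ht : 0 ≤ t) (htR : t ≤ R)
    (hvac : S.y₁ ≤ f t) : S.coeff f t ≤ S.coeff f R := by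
  have hmass : S.mass f R = S.mass f t := by
    rw [mass, ← intervalIntegral.integral_add_adjacent_intervals
      (hf.intervalIntegrable_mass 0 t) (hf.intervalIntegrable_mass t R), mass, add_eq_left]
    refine (intervalIntegral.integral_congr (g := fun _ => 0) fun s hs => ?_).trans (by simp)
    rw [uIcc_of_le htR] at hs
    simp [S.isMatterProfile_ρ.eq_zero _ (hvac.trans (hf.monotone hs.1))]
  rcases ht.eq_or_lt with rfl | ht
  · rw [coeff, coeff, hmass, S.mass_of_nonpos f le_rfl, zero_div, zero_div]
  · have hmass₀ : 0 ≤ S.mass f t := by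
      have := S.mass_div_nonneg f t
      rwa [le_div_iff₀ ht, zero_mul] at this
    rw [coeff, coeff, hmass]
    gcongr

section NoHorizon

variable (hf : S.Admissible f) (hc : Continuous f) (hd : ∀ r, 0 < r → HasDerivAt f (f' r) r)
  (hf' : ∀ r, 0 < r → 1 - S.truncCoeff f r ≤ 2 * r * S.truncCoeff f r * f' r)
include hf hc hd hf'

lemma horizonBound_apply_le_coeff (hR : 0 ≤ R) : S.horizonBound (f R) R ≤ S.coeff f R := by
  have hρ := S.ρ_nonneg S.y₀
  have hbound : Continuous fun r => S.horizonBound (f r) r := by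
    have := continuous_posPow S.n_pos
    unfold horizonBound
    fun_prop
  refine sub_nonneg.1 (nonneg_of_deriv_nonneg_of_neg
    (ψ := fun r => S.coeff f r - S.horizonBound (f r) r) hR
    (hf.continuous_coeff.sub hbound).continuousOn ?_ fun r hr hneg =>
      ⟨(hf.hasDerivAt_coeff hc r).sub (hasDerivAt_horizonBound (hd r hr.1)), ?_⟩)
  · have := S.horizonBound_le_half (hf.le_apply 0) 0
    rw [S.coeff_of_nonpos f le_rfl]
    linarith
  · have hx := S.truncCoeff_pos f r
    have hr₀ : 0 < r := hr.1
    have hf'₀ : 0 ≤ f' r := nonneg_of_mul_nonneg_right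
      ((sub_nonneg.2 (S.truncCoeff_le_one f r)).trans (hf' r hr₀)) (by positivity)
    have hdensity := hf.density_div_le_of_coeff_lt hr₀ hf'₀ (hf' r hr₀) (sub_neg.1 hneg)
    have hmass := div_nonneg (S.mass_div_nonneg f r) hr₀.le
    have hpow : 0 ≤ S.horizonBound (f r) r * (4 * S.ρ S.y₀ *
        (S.n * posPow (S.n - 1) r * (f r - S.y₀))) := by
      have := S.horizonBound_pos (f r) r
      have := S.n_pos
      have := posPow_nonneg (S.n - 1) r
      have := sub_nonneg.2 (hf.le_apply r)
      positivity
    rw [coeffDeriv]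
    linarith

lemma horizonBound_le_coeff (R : ℝ) : S.horizonBound S.y₁ R ≤ S.coeff f R := by
  rcases le_total R 0 with hR | hR
  · rw [S.coeff_of_nonpos f hR]
    exact (S.horizonBound_le_half S.y₀_le_y₁ R).trans (by norm_num)
  have of_le {t : ℝ} (ht : 0 ≤ t) (hy : f t ≤ S.y₁) : S.horizonBound S.y₁ t ≤ S.coeff f t :=
    (S.horizonBound_anti_left t hy).trans (hf.horizonBound_apply_le_coeff hc hd hf' ht)
  rcases le_total (f R) S.y₁ with hyR | hyR
  · exact of_le hR hyR
  suffices ∃ t ∈ Icc 0 R, S.y₁ ≤ f t ∧ S.horizonBound S.y₁ t ≤ S.coeff f t by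
    obtain ⟨t, ⟨ht₀, htR⟩, hvac, hbound⟩ := this
    exact (S.antitone_horizonBound htR).trans
      (hbound.trans (hf.coeff_le_coeff_of_vacuum ht₀ htR hvac))
  rcases le_total S.y₁ (f 0) with hy₀ | hy₀
  · refine ⟨0, left_mem_Icc.2 hR, hy₀, ?_⟩
    rw [S.coeff_of_nonpos f le_rfl]
    exact (S.horizonBound_le_half S.y₀_le_y₁ 0).trans (by norm_num)
  · obtain ⟨t, ht, hft⟩ := intermediate_value_Icc hR hc.continuousOn ⟨hy₀, hyR⟩
    exact ⟨t, ht, hft.ge, of_le ht.1 hft.le⟩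

end NoHorizon

section Cycle

variable (hf : S.Admissible f) (hh : S.Admissible h)
include hf hh

lemma truncCoeff_sub_le (hr : 0 < r) {K : ℝ} (hK : 0 ≤ K)
    (hle : ∀ s ∈ Icc 0 r, S.ρ (f s) - S.ρ (h s) ≤ K) :
    S.truncCoeff h r - S.truncCoeff f r ≤ posPow S.n r * K := by
  have hmass : S.mass f r / r - S.mass h r / r ≤ posPow S.n r * K := by
    rw [← sub_div, div_le_iff₀ hr]
    exact hf.mass_sub_le hh hr.le hK hle
  have hpow := mul_nonneg (posPow_nonneg S.n r) hK
  rw [sub_le_iff_le_add']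
  refine max_le ?_ ((S.horizonBound_le_truncCoeff f r).trans (le_add_of_nonneg_right hpow))
  have hcoeff := S.coeff_le_truncCoeff f r
  rw [coeff] at hcoeff ⊢
  linarith

lemma slope_sub_le (hfh : f ≤ h) {s D Lρ Lp : ℝ} (hs : 0 < s) (hsr : s ≤ r) (hD : 0 ≤ D)
    (hLρ : 0 ≤ Lρ) (hLp : 0 ≤ Lp) (hρ : ∀ t ∈ Icc 0 s, S.ρ (f t) - S.ρ (h t) ≤ Lρ * D)
    (hp : S.p (f s) - S.p (h s) ≤ Lp * D) :
    S.slope f s - S.slope h s ≤ posPow (S.n - 1) r * (Lp / S.horizonBound S.y₁ r +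
      (1 + posPow S.n r * S.p S.y₀) * Lρ / (S.horizonBound S.y₁ r * S.horizonBound S.y₁ r)) / 2
        * D := by
  have hlow := S.horizonBound_pos S.y₁ r
  have hxf := (S.antitone_horizonBound hsr).trans (S.horizonBound_le_truncCoeff f s)
  have hxh := (S.antitone_horizonBound hsr).trans (S.horizonBound_le_truncCoeff h s)
  have hxf₀ := S.truncCoeff_pos f s
  have hx₀ := sub_nonneg.2 (truncCoeff_mono hf hh hfh s)
  have hx := truncCoeff_sub_le hf hh hs (mul_nonneg hLρ hD) hρ
  have hpow := posPow_nonneg S.n s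
  have hpow_r := posPow_nonneg S.n r
  have hpow_sr := monotone_posPow S.n_pos hsr
  have hpow_sr' := monotone_posPow S.n_sub_one_pos hsr
  have hp₀ := S.p_nonneg S.y₀
  have hph₀ := S.p_nonneg (h s)
  have hph := hh.p_le s
  rw [S.slope_sub_slope]
  calc (posPow S.n s * (S.p (f s) - S.p (h s)) / S.truncCoeff f s +
          (1 + posPow S.n s * S.p (h s)) * (S.truncCoeff h s - S.truncCoeff f s) /
            (S.truncCoeff f s * S.truncCoeff h s)) / (2 * s)
      ≤ (posPow S.n s * (Lp * D) / S.horizonBound S.y₁ r +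
          (1 + posPow S.n r * S.p S.y₀) * (posPow S.n s * (Lρ * D)) /
            (S.horizonBound S.y₁ r * S.horizonBound S.y₁ r)) / (2 * s) := by
        gcongr
    _ = posPow (S.n - 1) s * (Lp / S.horizonBound S.y₁ r +
          (1 + posPow S.n r * S.p S.y₀) * Lρ /
            (S.horizonBound S.y₁ r * S.horizonBound S.y₁ r)) / 2 * D := by
        rw [posPow_eq_mul S.one_lt_n s]
        field_simp
    _ ≤ _ := by
        gcongr

variable (hpf : S.picard f = h) (hph : S.picard h = f)
include hpf hph

lemma hasDerivAt_sub_of_cycle (r : ℝ) :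
    HasDerivAt (fun s => h s - f s) (S.slope f r - S.slope h r) r := by
  have hderiv_h := hf.hasDerivAt_picard (hph ▸ hh.continuous_picard) r
  have hderiv_f := hh.hasDerivAt_picard (hpf ▸ hf.continuous_picard) r
  rw [hpf] at hderiv_h
  rw [hph] at hderiv_f
  exact hderiv_h.sub hderiv_f

variable (hfh : f ≤ h)
include hfh

lemma exists_slope_sub_le_of_cycle (hlt : h r < S.y₁) :
    ∃ C, ∀ s ∈ Ioc 0 r, S.slope f s - S.slope h s ≤ C * (h s - f s) := by
  have hmono : Monotone fun s => h s - f s :=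
    monotone_of_hasDerivAt_nonneg (hasDerivAt_sub_of_cycle hf hh hpf hph)
      fun r => sub_nonneg.2 (slope_anti hf hh hfh r)
  obtain ⟨Lρ, hLρ₀, hLρ⟩ := S.isMatterProfile_ρ.exists_sub_le hlt
  obtain ⟨Lp, hLp₀, hLp⟩ := S.isMatterProfile_p.exists_sub_le hlt
  refine ⟨_, fun s hs => slope_sub_le hf hh hfh hs.1 hs.2 (sub_nonneg.2 (hfh s)) hLρ₀ hLp₀
    (fun t ht => ?_) (hLp _ _ (hf.le_apply s) (hfh s) (hh.monotone hs.2))⟩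
  exact (hLρ _ _ (hf.le_apply t) (hfh t) (hh.monotone (ht.2.trans hs.2))).trans
    (mul_le_mul_of_nonneg_left (hmono ht.2) hLρ₀)

lemma eqOn_of_cycle_of_lt (hlt : h r < S.y₁) : EqOn f h (Icc 0 r) := by
  obtain ⟨C, hC⟩ := exists_slope_sub_le_of_cycle hf hh hpf hph hfh hlt
  have hderiv := hasDerivAt_sub_of_cycle hf hh hpf hph
  have hzero : h 0 - f 0 = 0 := by
    rw [← hpf, ← hph, S.picard_of_nonpos _ le_rfl, S.picard_of_nonpos _ le_rfl, sub_self]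
  have heq := eq_zero_of_abs_deriv_le_mul_abs_self_of_eq_zero_right (K := C) (a := 0) (b := r)
    (fun s _ => (hderiv s).continuousAt.continuousWithinAt)
    (fun s _ => (hderiv s).hasDerivWithinAt) hzero fun s hs => ?_
  · exact fun s hs => (sub_eq_zero.1 (heq s hs)).symm
  · rw [norm_of_nonneg (sub_nonneg.2 (slope_anti hf hh hfh s)),
      norm_of_nonneg (sub_nonneg.2 (hfh s))]
    rcases hs.1.eq_or_lt with rfl | hs₀
    · rw [S.slope_of_nonpos _ le_rfl, S.slope_of_nonpos _ le_rfl, hzero, sub_zero, mul_zero]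
    · exact hC s ⟨hs₀, hs.2.le⟩

lemma le_of_cycle_of_le (hr : 0 ≤ r) (hle : S.y₁ ≤ h r) : S.y₁ ≤ f r := by
  by_contra! hlt
  obtain ⟨c, hfc, hc⟩ := exists_between hlt
  have hh₀ : h 0 = S.y₀ := hpf ▸ S.picard_of_nonpos f le_rfl
  obtain ⟨t, ht, hht⟩ := intermediate_value_Icc hr (hpf ▸ hf.continuous_picard).continuousOn
    ⟨hh₀.trans_le ((hf.le_apply r).trans hfc.le), hc.le.trans hle⟩
  have hft : f t = c :=
    (eqOn_of_cycle_of_lt hf hh hpf hph hfh (hht.trans_lt hc) ⟨ht.1, le_rfl⟩).trans hht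
  exact (hft ▸ hf.monotone ht.2 : c ≤ f r).not_gt hfc

lemma eq_of_cycle : f = h := by
  have hprofile {q : ℝ → ℝ} (hq : ∀ y, S.y₁ ≤ y → q y = 0) (r : ℝ) (hr : 0 ≤ r) :
      q (f r) = q (h r) := by
    rcases lt_or_ge (h r) S.y₁ with hlt | hge
    · rw [eqOn_of_cycle_of_lt hf hh hpf hph hfh hlt ⟨hr, le_rfl⟩]
    · rw [hq _ hge, hq _ (le_of_cycle_of_le hf hh hpf hph hfh hr hge)]
  rw [← hph, ← S.picard_congr (hprofile S.isMatterProfile_ρ.eq_zero)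
    (hprofile S.isMatterProfile_p.eq_zero), hpf]

end Cycle

end Admissible

section FixedPoint

lemma apply_projIcc_of_eq_zero {q : ℝ → ℝ} (hq : ∀ y, S.y₁ ≤ y → q y = 0) {y : ℝ}
    (hy : S.y₀ ≤ y) : q (projIcc S.y₀ S.y₁ S.y₀_le_y₁ y) = q y := by
  rcases le_total y S.y₁ with h | h
  · rw [projIcc_of_mem S.y₀_le_y₁ ⟨hy, h⟩]
  · rw [projIcc_of_right_le S.y₀_le_y₁ h, hq _ h, hq _ le_rfl]

lemma admissible_coe (u : ℝ →o Icc S.y₀ S.y₁) : S.Admissible fun r => (u r : ℝ) :=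
  ⟨fun _ _ h => u.monotone h, fun r => (u r).2.1⟩

/-- The order-theoretic form of an admissible potential: it is cut off at `y₁`, beyond which there
is no matter, so as to live in a complete lattice. -/
noncomputable def clamp (hf : S.Admissible f) : ℝ →o Icc S.y₀ S.y₁ where
  toFun r := projIcc S.y₀ S.y₁ S.y₀_le_y₁ (f r)
  monotone' _ _ h := monotone_projIcc S.y₀_le_y₁ (hf.monotone h)

/-- The operator `picard` on the complete lattice of potentials cut off at `y₁`. -/
noncomputable def clampedPicard (u : ℝ →o Icc S.y₀ S.y₁) : ℝ →o Icc S.y₀ S.y₁ :=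
  S.clamp (S.admissible_coe u).picard

lemma picard_clamp (hf : S.Admissible f) : S.picard (fun r => S.clamp hf r) = S.picard f :=
  S.picard_congr (fun r _ => S.apply_projIcc_of_eq_zero S.isMatterProfile_ρ.eq_zero (hf.le_apply r))
    fun r _ => S.apply_projIcc_of_eq_zero S.isMatterProfile_p.eq_zero (hf.le_apply r)

lemma coe_clampedPicard (u : ℝ →o Icc S.y₀ S.y₁) (r : ℝ) : (S.clampedPicard u r : ℝ) =
    projIcc S.y₀ S.y₁ S.y₀_le_y₁ (S.picard (fun s => u s) r) := rfl

lemma antitone_clampedPicard : Antitone S.clampedPicard := fun u v huv r =>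
  monotone_projIcc S.y₀_le_y₁
    (Admissible.picard_anti (S.admissible_coe u) (S.admissible_coe v) (fun s => huv s) r)

lemma picard_clampedPicard (u : ℝ →o Icc S.y₀ S.y₁) :
    S.picard (fun r => S.clampedPicard u r) = S.picard (S.picard fun r => u r) :=
  S.picard_clamp _

lemma existsUnique_clampedPicard_eq : ∃! u, S.clampedPicard u = u := by
  have : Fact (S.y₀ ≤ S.y₁) := ⟨S.y₀_le_y₁⟩
  refine existsUnique_fixedPoint_of_antitone S.antitone_clampedPicard fun a b hab ha hb => ?_
  have hpicard : S.picard (fun r => b r) = S.picard fun r => a r :=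
    Admissible.eq_of_cycle (S.admissible_coe b).picard (S.admissible_coe a).picard
      (by rw [← picard_clampedPicard, hb]) (by rw [← picard_clampedPicard, ha])
      (Admissible.picard_anti (S.admissible_coe a) (S.admissible_coe b) fun r => hab r)
  calc a = S.clampedPicard b := hb.symm
    _ = S.clampedPicard a := by
      ext r
      rw [coe_clampedPicard, coe_clampedPicard, hpicard]
    _ = b := ha

theorem existsUnique_picard_eq : ∃! f, S.Admissible f ∧ S.picard f = f := by
  obtain ⟨u, hu, huniq⟩ := S.existsUnique_clampedPicard_eq
  have hfix : S.picard (S.picard fun r => u r) = S.picard fun r => u r := by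
    rw [← picard_clampedPicard, hu]
  refine ⟨_, ⟨(S.admissible_coe u).picard, hfix⟩, fun h ⟨hh, hph⟩ => ?_⟩
  have hclamp : S.clampedPicard (S.clamp hh) = S.clamp hh := by
    ext r
    simp only [clampedPicard, picard_clamp, hph]
  rw [← huniq _ hclamp, picard_clamp, hph]

end FixedPoint

/-- `C¹` solutions of the radial system on `[0, ∞)` with a regular center. -/
structure IsSolution (lam mu : ℝ → ℝ) : Prop where
  lam_zero : lam 0 = 0
  mu_zero : mu 0 = S.y₀
  contDiffOn_lam : ContDiffOn ℝ 1 lam (Ici 0)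
  contDiffOn_mu : ContDiffOn ℝ 1 mu (Ici 0)
  eq_lam : ∀ r, 0 < r → exp (-2 * lam r) * (2 * r * deriv lam r - 1) + 1 =
    posPow S.n r * S.ρ (mu r)
  eq_mu : ∀ r, 0 < r → exp (-2 * lam r) * (2 * r * deriv mu r + 1) - 1 =
    posPow S.n r * S.p (mu r)

section FixedPointSolution

variable {S} (hf : S.Admissible f) (hfix : S.picard f = f)
include hf hfix

lemma continuous_of_picard_eq : Continuous f := hfix ▸ hf.continuous_picard

lemma hasDerivAt_of_picard_eq (r : ℝ) : HasDerivAt f (S.slope f r) r := by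
  have hderiv := hf.hasDerivAt_picard (continuous_of_picard_eq hf hfix) r
  rwa [hfix] at hderiv

lemma contDiff_of_picard_eq : ContDiff ℝ 1 f := by
  have hderiv := hasDerivAt_of_picard_eq hf hfix
  refine contDiff_one_iff_deriv.2 ⟨fun r => (hderiv r).differentiableAt, ?_⟩
  rw [deriv_eq hderiv]
  exact hf.continuous_slope (continuous_of_picard_eq hf hfix)

lemma horizonBound_le_coeff_of_picard_eq (r : ℝ) : S.horizonBound S.y₁ r ≤ S.coeff f r :=
  hf.horizonBound_le_coeff (continuous_of_picard_eq hf hfix)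
    (fun r _ => hasDerivAt_of_picard_eq hf hfix r) (fun _ => S.one_sub_truncCoeff_le f) r

lemma coeff_pos_of_picard_eq (r : ℝ) : 0 < S.coeff f r :=
  (S.horizonBound_pos S.y₁ r).trans_le (horizonBound_le_coeff_of_picard_eq hf hfix r)

lemma hasDerivAt_log_coeff (r : ℝ) : HasDerivAt (fun r => -(1 / 2) * log (S.coeff f r))
    (-(1 / 2) * (S.coeffDeriv f r / S.coeff f r)) r :=
  ((hf.hasDerivAt_coeff (continuous_of_picard_eq hf hfix) r).log
    (coeff_pos_of_picard_eq hf hfix r).ne').const_mul _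

lemma contDiff_log_coeff : ContDiff ℝ 1 fun r => -(1 / 2) * log (S.coeff f r) := by
  have hderiv := hasDerivAt_log_coeff hf hfix
  refine contDiff_one_iff_deriv.2 ⟨fun r => (hderiv r).differentiableAt, ?_⟩
  rw [deriv_eq hderiv]
  exact continuous_const.mul ((hf.continuous_coeffDeriv (continuous_of_picard_eq hf hfix)).div
    hf.continuous_coeff fun r => (coeff_pos_of_picard_eq hf hfix r).ne')

theorem isSolution_of_picard_eq : S.IsSolution (fun r => -(1 / 2) * log (S.coeff f r)) f := by
  have hpos := coeff_pos_of_picard_eq hf hfix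
  have hexp (r : ℝ) : exp (-2 * (-(1 / 2) * log (S.coeff f r))) = S.coeff f r := by
    rw [show -2 * (-(1 / 2) * log (S.coeff f r)) = log (S.coeff f r) by ring, exp_log (hpos r)]
  refine ⟨by simp [S.coeff_of_nonpos f le_rfl], hfix ▸ S.picard_of_nonpos f le_rfl,
    (contDiff_log_coeff hf hfix).contDiffOn, (contDiff_of_picard_eq hf hfix).contDiffOn,
    fun r hr => ?_, fun r hr => ?_⟩
  · have hx := (hpos r).ne'
    calc _ = 1 - S.coeff f r - r * S.coeffDeriv f r := by
          rw [hexp, (hasDerivAt_log_coeff hf hfix r).deriv]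
          field_simp
          ring
      _ = _ := by
          rw [coeffDeriv, coeff]
          field_simp
          ring
  · rw [hexp, (hasDerivAt_of_picard_eq hf hfix r).deriv, slope, truncCoeff,
      max_eq_left (horizonBound_le_coeff_of_picard_eq hf hfix r)]
    have hx := (hpos r).ne'
    field_simp
    ring

end FixedPointSolution

namespace IsSolution

variable {S} {lam mu : ℝ → ℝ} (hsol : S.IsSolution lam mu)
include hsol

lemma hasDerivAt_lam (hr : 0 < r) : HasDerivAt lam (deriv lam r) r :=
  ((hsol.contDiffOn_lam.differentiableOn one_ne_zero).differentiableAt (Ici_mem_nhds hr)).hasDerivAt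

lemma hasDerivAt_mu (hr : 0 < r) : HasDerivAt mu (deriv mu r) r :=
  ((hsol.contDiffOn_mu.differentiableOn one_ne_zero).differentiableAt (Ici_mem_nhds hr)).hasDerivAt

lemma continuous_mu_max : Continuous fun r => mu (max r 0) :=
  hsol.contDiffOn_mu.continuousOn.comp_continuous (by fun_prop)
    fun r => mem_Ici.2 (le_max_right r 0)

lemma hasDerivAt_mu_max (hr : 0 < r) : HasDerivAt (fun r => mu (max r 0)) (deriv mu r) r := by
  refine (hsol.hasDerivAt_mu hr).congr_of_eventuallyEq ?_
  filter_upwards [Ioi_mem_nhds hr] with s hs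
  rw [max_eq_left hs.le]

lemma exp_lam_eq_coeff (hr : 0 ≤ r) :
    exp (-2 * lam r) = S.coeff (fun r => mu (max r 0)) r := by
  rcases hr.eq_or_lt with rfl | hr₀
  · simp [hsol.lam_zero, S.coeff_of_nonpos _ le_rfl]
  have hmass : S.mass (fun r => mu (max r 0)) r = r * (1 - exp (-2 * lam r)) := by
    rw [mass, intervalIntegral.integral_eq_sub_of_hasDerivAt_of_le
      (f := fun s => s * (1 - exp (-2 * lam s))) hr ?_ ?_ ?_]
    · simp
    · exact (continuousOn_id.mul (continuousOn_const.sub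
        (continuousOn_const.mul hsol.contDiffOn_lam.continuousOn).rexp)).mono Icc_subset_Ici_self
    · intro s hs
      refine ((hasDerivAt_id s).mul
        (((hsol.hasDerivAt_lam hs.1).const_mul (-2)).exp.const_sub 1)).congr_deriv ?_
      rw [max_eq_left hs.1.le, ← hsol.eq_lam s hs.1]
      simp only [id]
      ring
    · exact ((continuous_posPow S.n_pos).mul
        (S.isMatterProfile_ρ.continuous.comp hsol.continuous_mu_max)).intervalIntegrable _ _
  rw [coeff, hmass]
  field_simp
  ring

lemma one_sub_coeff_le (hr : 0 < r) : 1 - S.coeff (fun r => mu (max r 0)) r ≤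
    2 * r * S.coeff (fun r => mu (max r 0)) r * deriv mu r := by
  have heq := hsol.eq_mu r hr
  have hP := mul_nonneg (posPow_nonneg S.n r) (S.p_nonneg (mu r))
  rw [hsol.exp_lam_eq_coeff hr.le] at heq
  linarith

lemma coeff_pos (hr : 0 < r) : 0 < S.coeff (fun r => mu (max r 0)) r :=
  hsol.exp_lam_eq_coeff hr.le ▸ exp_pos _

lemma deriv_mu_nonneg (hr : 0 < r) : 0 ≤ deriv mu r := by
  have hx := hsol.coeff_pos hr
  exact nonneg_of_mul_nonneg_right
    ((sub_nonneg.2 (S.coeff_le_one _ r)).trans (hsol.one_sub_coeff_le hr)) (by positivity)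

lemma admissible : S.Admissible fun r => mu (max r 0) := by
  have hmono : MonotoneOn mu (Ici 0) := by
    refine monotoneOn_of_deriv_nonneg (convex_Ici 0) hsol.contDiffOn_mu.continuousOn ?_ ?_ <;>
      rw [interior_Ici]
    · exact fun r hr => (hsol.hasDerivAt_mu hr).differentiableAt.differentiableWithinAt
    · exact fun r hr => hsol.deriv_mu_nonneg hr
  refine ⟨fun a b hab => hmono (le_max_right a 0) (le_max_right b 0) (max_le_max_right 0 hab),
    fun r => ?_⟩
  rw [← hsol.mu_zero]
  exact hmono self_mem_Ici (le_max_right r 0) (le_max_right r 0)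

lemma one_sub_truncCoeff_le (hr : 0 < r) : 1 - S.truncCoeff (fun r => mu (max r 0)) r ≤
    2 * r * S.truncCoeff (fun r => mu (max r 0)) r * deriv mu r := by
  have hle := S.coeff_le_truncCoeff (fun r => mu (max r 0)) r
  have hderiv := hsol.deriv_mu_nonneg hr
  calc _ ≤ 1 - S.coeff (fun r => mu (max r 0)) r := by gcongr
    _ ≤ 2 * r * S.coeff (fun r => mu (max r 0)) r * deriv mu r := hsol.one_sub_coeff_le hr
    _ ≤ _ := by gcongr

lemma deriv_mu_eq_slope (hr : 0 < r) : deriv mu r = S.slope (fun r => mu (max r 0)) r := by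
  have hlow := hsol.admissible.horizonBound_le_coeff hsol.continuous_mu_max
    (fun _ => hsol.hasDerivAt_mu_max) (fun _ => hsol.one_sub_truncCoeff_le) r
  have hx := (hsol.coeff_pos hr).ne'
  rw [slope, truncCoeff, max_eq_left hlow, max_eq_left hr.le, ← hsol.eq_mu r hr,
    hsol.exp_lam_eq_coeff hr.le]
  field_simp
  ring

lemma picard_eq : S.picard (fun r => mu (max r 0)) = fun r => mu (max r 0) := by
  funext r
  rcases le_total r 0 with hr | hr
  · rw [S.picard_of_nonpos _ hr, max_eq_right hr, hsol.mu_zero]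
  · rw [picard, intervalIntegral.integral_eq_sub_of_hasDerivAt_of_le hr
      hsol.continuous_mu_max.continuousOn
      (fun s hs => (hsol.hasDerivAt_mu_max hs.1).congr_deriv (hsol.deriv_mu_eq_slope hs.1))
      ((hsol.admissible.continuous_slope hsol.continuous_mu_max).intervalIntegrable _ _)]
    simp [hsol.mu_zero]

end IsSolution

theorem exists_isSolution_forall_eqOn :
    ∃ lam mu, S.IsSolution lam mu ∧ ∀ lam' mu', S.IsSolution lam' mu' →
      EqOn lam lam' (Ici 0) ∧ EqOn mu mu' (Ici 0) := by
  obtain ⟨f, ⟨hf, hfix⟩, huniq⟩ := S.existsUnique_picard_eq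
  refine ⟨_, f, isSolution_of_picard_eq hf hfix, fun lam' mu' hsol => ?_⟩
  have hmu := huniq _ ⟨hsol.admissible, hsol.picard_eq⟩
  refine ⟨fun r hr => ?_, fun r hr => ?_⟩
  · dsimp only
    rw [← hmu, ← hsol.exp_lam_eq_coeff hr, log_exp]
    ring
  · rw [← hmu]
    dsimp only
    rw [max_eq_left hr]

end RadialSystem

section PosPowIntegral

variable {m a b : ℝ} {φ : ℝ → ℝ}

lemma locallyIntegrable_posPow (hm : -1 < m) : LocallyIntegrable (posPow m) := by
  refine locallyIntegrable_of_norm_le_rpow (C := 1) (α := -m) (by simp) (by simpa using neg_lt.1 hm)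
    (Filter.Eventually.of_forall fun r => ?_)
    ((measurable_id.max measurable_const).pow_const m).aestronglyMeasurable
  rw [norm_of_nonneg (posPow_nonneg m r), neg_neg, one_mul]
  rcases le_or_gt 0 r with hr | hr
  · rw [posPow_of_nonneg hr, norm_of_nonneg hr]
  · rcases eq_or_ne m 0 with rfl | hm₀
    · rw [posPow, rpow_zero, rpow_zero]
    · rw [posPow, max_eq_right hr.le, zero_rpow hm₀]
      positivity

lemma continuousOn_posPow (m : ℝ) : ContinuousOn (posPow m) (Ioi 0) :=
  (continuous_id.max continuous_const).continuousOn.rpow_const fun _ hr =>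
    Or.inl (lt_max_of_lt_left hr).ne'

lemma locallyLipschitzOn_posPow (m : ℝ) : LocallyLipschitzOn (Ioi 0) (posPow m) := by
  have hrpow : ContDiffOn ℝ 1 (fun r : ℝ => r ^ m) (Ioi 0) := fun r hr =>
    (contDiffAt_rpow_const_of_ne (ne_of_gt hr)).contDiffWithinAt
  exact (hrpow.congr fun r hr => posPow_of_nonneg (le_of_lt hr)).locallyLipschitzOn (convex_Ioi 0)

lemma continuous_posPow_sq_sub (hm : 0 < m) (w : ℝ) : Continuous fun E => posPow m (E ^ 2 - w) :=
  (continuous_posPow hm).comp (by fun_prop)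

lemma intervalIntegrable_mul_posPow (hm : 0 < m) (hφ : IntervalIntegrable φ volume a b) (w : ℝ) :
    IntervalIntegrable (fun E => φ E * posPow m (E ^ 2 - w)) volume a b :=
  hφ.mul_continuousOn (continuous_posPow_sq_sub hm w).continuousOn

lemma antitone_integral_mul_posPow (hm : 0 < m) (hab : a ≤ b)
    (hφ : IntervalIntegrable φ volume a b) (hφ₀ : ∀ E ∈ Icc a b, 0 ≤ φ E) :
    Antitone fun w => ∫ E in a..b, φ E * posPow m (E ^ 2 - w) := fun v w hvw =>
  intervalIntegral.integral_mono_on hab (intervalIntegrable_mul_posPow hm hφ w)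
    (intervalIntegrable_mul_posPow hm hφ v) fun E hE =>
      mul_le_mul_of_nonneg_left (monotone_posPow hm (by linarith)) (hφ₀ E hE)

lemma continuous_integral_mul_posPow (hm : 0 < m) (hφ : IntervalIntegrable φ volume a b) :
    Continuous fun w => ∫ E in a..b, φ E * posPow m (E ^ 2 - w) := by
  refine continuous_iff_continuousAt.2 fun w₀ =>
    intervalIntegral.continuousAt_of_dominated_interval
      (Filter.Eventually.of_forall fun w =>
        (intervalIntegrable_mul_posPow hm hφ w).def'.aestronglyMeasurable)
      (Filter.eventually_of_mem (Ioi_mem_nhds (sub_one_lt w₀)) fun w hw =>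
        Filter.Eventually.of_forall fun E _ => ?_)
      (intervalIntegrable_mul_posPow hm hφ.norm (w₀ - 1))
      (Filter.Eventually.of_forall fun E _ =>
        (continuous_const.mul ((continuous_posPow hm).comp (by fun_prop))).continuousAt)
  have hw : w₀ - 1 < w := hw
  rw [norm_mul, norm_of_nonneg (posPow_nonneg _ _)]
  exact mul_le_mul_of_nonneg_left (monotone_posPow hm (by linarith)) (norm_nonneg _)

lemma integral_mul_posPow_sq_sub (hm : 0 < m) (a b w : ℝ) :
    ∫ E in a..b, E * posPow m (E ^ 2 - w) =
      (posPow (m + 1) (b ^ 2 - w) - posPow (m + 1) (a ^ 2 - w)) / (2 * (m + 1)) := by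
  have hderiv (E : ℝ) : HasDerivAt (fun E => posPow (m + 1) (E ^ 2 - w) / (2 * (m + 1)))
      (E * posPow m (E ^ 2 - w)) E := by
    have hinner : HasDerivAt (fun E => E ^ 2 - w) (2 * E) E := by
      simpa using (hasDerivAt_pow 2 E).sub_const w
    refine (((hasDerivAt_posPow (by linarith) _).comp E hinner).div_const _).congr_deriv ?_
    rw [add_sub_cancel_right]
    field_simp
  rw [intervalIntegral.integral_eq_sub_of_hasDerivAt (fun E _ => hderiv E)
    (intervalIntegrable_mul_posPow hm (continuous_id.intervalIntegrable a b) w), sub_div]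

lemma contDiff_integral_mul_posPow (hm : 0 < m) (a b : ℝ) :
    ContDiff ℝ 1 fun w => ∫ E in a..b, E * posPow m (E ^ 2 - w) := by
  have hposPow : ContDiff ℝ 1 (posPow (m + 1)) := contDiff_posPow (by linarith)
  simp only [integral_mul_posPow_sq_sub hm]
  fun_prop

lemma locallyLipschitz_integral_mul_posPow {C : NNReal} (hm : 0 < m) (hab : a ≤ b)
    (hφ : IntervalIntegrable φ volume a b) (hφ₀ : ∀ E ∈ Icc a b, 0 ≤ φ E)
    (hφC : ∀ E ∈ Icc a b, φ E ≤ C * E) :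
    LocallyLipschitz fun w => ∫ E in a..b, φ E * posPow m (E ^ 2 - w) := by
  have hE : IntervalIntegrable (fun E => E) volume a b :=
    continuous_id.intervalIntegrable a b
  refine locallyLipschitz_of_dist_le (C := C)
    (contDiff_integral_mul_posPow hm a b).locallyLipschitz fun v w => ?_
  wlog hvw : v ≤ w generalizing v w
  · simpa only [dist_comm] using this w v (le_of_not_ge hvw)
  have hmono := antitone_integral_mul_posPow hm hab hφ hφ₀ hvw
  rw [Real.dist_eq, Real.dist_eq, abs_of_nonneg (sub_nonneg.2 hmono)]
  refine le_trans ?_ (mul_le_mul_of_nonneg_left (le_abs_self _) C.2)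
  rw [← intervalIntegral.integral_sub (intervalIntegrable_mul_posPow hm hφ v)
    (intervalIntegrable_mul_posPow hm hφ w), ← intervalIntegral.integral_sub
    (intervalIntegrable_mul_posPow hm hE v) (intervalIntegrable_mul_posPow hm hE w),
    ← intervalIntegral.integral_const_mul]
  simp only [← mul_sub, ← mul_assoc]
  have hdiff := (continuous_posPow_sq_sub hm v).sub (continuous_posPow_sq_sub hm w)
  exact intervalIntegral.integral_mono_on hab (hφ.mul_continuousOn hdiff.continuousOn)
    ((hE.const_mul C).mul_continuousOn hdiff.continuousOn) fun E hE =>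
      mul_le_mul_of_nonneg_right (hφC E hE) (sub_nonneg.2 (monotone_posPow hm (by linarith)))

lemma locallyLipschitzOn_integral_mul_posPow (hm : 0 < m) (ha : 0 ≤ a) (hab : a ≤ b)
    (hφ : IntervalIntegrable φ volume a b) :
    LocallyLipschitzOn (Iio (a ^ 2)) fun w => ∫ E in a..b, φ E * posPow m (E ^ 2 - w) := by
  intro w₀ hw₀
  obtain ⟨c, hw₀c, hca⟩ := exists_between (show w₀ < a ^ 2 from hw₀)
  have hpos : Icc (a ^ 2 - c) (b ^ 2 - (w₀ - 1)) ⊆ Ioi 0 := fun x hx =>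
    (sub_pos.2 hca).trans_le hx.1
  obtain ⟨K, hK⟩ :=
    ((locallyLipschitzOn_posPow m).mono hpos).exists_lipschitzOnWith_of_compact isCompact_Icc
  have hmem {E w : ℝ} (hE : E ∈ Ioc a b) (hw : w ∈ Ioo (w₀ - 1) c) :
      E ^ 2 - w ∈ Icc (a ^ 2 - c) (b ^ 2 - (w₀ - 1)) := by
    have hEa := pow_le_pow_left₀ ha hE.1.le 2
    have hEb := pow_le_pow_left₀ (ha.trans hE.1.le) hE.2 2
    exact ⟨by linarith [hw.2], by linarith [hw.1]⟩
  refine ⟨(∫ E in a..b, ‖φ E‖ * K).toNNReal, Ioo (w₀ - 1) c,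
    mem_nhdsWithin_of_mem_nhds (Ioo_mem_nhds (by linarith) hw₀c),
    LipschitzOnWith.of_dist_le_mul fun v hv w hw => ?_⟩
  rw [coe_toNNReal _ (intervalIntegral.integral_nonneg hab fun E _ => by positivity), dist_eq_norm,
    ← intervalIntegral.integral_sub (intervalIntegrable_mul_posPow hm hφ v)
      (intervalIntegrable_mul_posPow hm hφ w), ← intervalIntegral.integral_mul_const]
  refine intervalIntegral.norm_integral_le_of_norm_le hab
    (Filter.Eventually.of_forall fun E hE => ?_) ((hφ.norm.mul_const _).mul_const _)
  rw [← mul_sub, norm_mul, mul_assoc]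
  gcongr
  calc ‖posPow m (E ^ 2 - v) - posPow m (E ^ 2 - w)‖ ≤ K * dist (E ^ 2 - v) (E ^ 2 - w) := by
        rw [← dist_eq_norm]
        exact hK.dist_le_mul _ (hmem hE hv) _ (hmem hE hw)
    _ = K * dist v w := by rw [dist_sub_left]

end PosPowIntegral

/-- The energy profiles `φ` of the ansatz `φ(E) L ^ l` for which the Vlasov–Einstein system is
solvable: they vanish above the cut-off energy `E₀`, where they may have an integrable
singularity. -/
structure IsEnergyProfile (E₀ : ℝ) (φ : ℝ → ℝ) : Prop where
  cutoff_pos : 0 < E₀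
  nonneg : ∀ E, 0 < E → 0 ≤ φ E
  eq_zero : ∀ E, E₀ ≤ E → φ E = 0
  locallyIntegrableOn : LocallyIntegrableOn φ (Ioi 0)
  bddAbove_image : ∀ K ⊆ Ioo 0 E₀, IsCompact K → BddAbove (φ '' K)

lemma isEnergyProfile_of_le_mul_rpow {E₀ k : ℝ} {φ : ℝ → ℝ} (hE₀ : 0 < E₀) (hk : -1 < k)
    (hmeas : Measurable φ) (hnonneg : ∀ E, 0 < E → 0 ≤ φ E) (hvanish : ∀ E, E₀ ≤ E → φ E = 0)
    (hbound : ∀ K : Set ℝ, IsCompact K → K ⊆ Ioi 0 →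
      ∃ C : ℝ, 0 ≤ C ∧ ∀ E ∈ K, φ E ≤ C * (max (E₀ - E) 0) ^ k) :
    IsEnergyProfile E₀ φ where
  cutoff_pos := hE₀
  nonneg := hnonneg
  eq_zero := hvanish
  locallyIntegrableOn := by
    refine (locallyIntegrableOn_iff isOpen_Ioi.isLocallyClosed).2 fun K hK₀ hK => ?_
    obtain ⟨C, -, hC⟩ := hbound K hK hK₀
    have hposPow : IntegrableOn (fun E => posPow k (E₀ - E)) K := by
      let sub : ℝ ≃ₜ ℝ := Homeomorph.subLeft E₀
      rw [← preimage_image_eq K sub.injective]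
      exact ((Measure.measurePreserving_sub_left volume E₀).integrableOn_comp_preimage
        sub.measurableEmbedding).2 ((locallyIntegrable_posPow hk).integrableOn_isCompact
          (hK.image sub.continuous))
    refine (hposPow.const_mul C).mono' hmeas.aestronglyMeasurable
      ((ae_restrict_iff' hK.measurableSet).2 (Filter.Eventually.of_forall fun E hE => ?_))
    rw [norm_of_nonneg (hnonneg E (hK₀ hE))]
    exact hC E hE
  bddAbove_image K hK₀ hK := by
    obtain ⟨C, -, hC⟩ := hbound K hK (hK₀.trans Ioo_subset_Ioi_self)
    have hposPow : ContinuousOn (fun E => C * posPow k (E₀ - E)) K :=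
      continuousOn_const.mul ((continuousOn_posPow k).comp (by fun_prop) fun E hE =>
        sub_pos.2 (hK₀ hE).2)
    obtain ⟨B, hB⟩ := (hK.image_of_continuousOn hposPow).bddAbove
    refine ⟨B, ?_⟩
    rintro _ ⟨E, hE, rfl⟩
    exact (hC E hE).trans (hB (mem_image_of_mem _ hE))

namespace IsEnergyProfile

variable {E₀ m a b : ℝ} {φ : ℝ → ℝ} (hφ : IsEnergyProfile E₀ φ)
include hφ

lemma intervalIntegrable (ha : 0 < a) (hb : 0 < b) : IntervalIntegrable φ volume a b := by
  have hsub : uIcc a b ⊆ Ioi 0 := fun E hE => (lt_min ha hb).trans_le hE.1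
  exact (hφ.locallyIntegrableOn.integrableOn_compact_subset hsub isCompact_uIcc).intervalIntegrable

lemma hfun_eq_integral_posPow (hm : 0 < m) (ha : 0 < a) {u : ℝ} (hau : a ≤ u) :
    hfun φ E₀ m u = ∫ E in a..E₀, φ E * posPow m (E ^ 2 - u ^ 2) := by
  have hu := ha.trans_le hau
  have hbelow : ∫ E in a..u, φ E * posPow m (E ^ 2 - u ^ 2) = 0 := by
    refine (intervalIntegral.integral_congr (g := fun _ => 0) fun E hE => ?_).trans (by simp)
    rw [uIcc_of_le hau] at hE
    have hsq := pow_le_pow_left₀ (ha.le.trans hE.1) hE.2 2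
    simp [posPow_of_nonpos hm (sub_nonpos.2 hsq)]
  rw [← intervalIntegral.integral_add_adjacent_intervals
    (intervalIntegrable_mul_posPow hm (hφ.intervalIntegrable ha hu) _)
    (intervalIntegrable_mul_posPow hm (hφ.intervalIntegrable hu hφ.cutoff_pos) _), hbelow, zero_add]
  refine intervalIntegral.integral_congr fun E hE => ?_
  rcases le_total u E₀ with huE₀ | huE₀
  · rw [uIcc_of_le huE₀] at hE
    simp only [posPow_of_nonneg (sub_nonneg.2 (pow_le_pow_left₀ hu.le hE.1 2))]
  · rw [uIcc_of_ge huE₀] at hE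
    simp only [hφ.eq_zero E hE.1, zero_mul]

lemma hfun_eq_zero {u : ℝ} (hu : E₀ ≤ u) : hfun φ E₀ m u = 0 := by
  refine (intervalIntegral.integral_congr (g := fun _ => 0) fun E hE => ?_).trans (by simp)
  rw [uIcc_of_ge hu] at hE
  simp [hφ.eq_zero E hE.1]

lemma antitoneOn_hfun (hm : 0 < m) : AntitoneOn (hfun φ E₀ m) (Ioi 0) := by
  intro u hu v _ huv
  rcases le_total u E₀ with h | h
  · rw [hφ.hfun_eq_integral_posPow hm hu le_rfl, hφ.hfun_eq_integral_posPow hm hu huv]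
    exact antitone_integral_mul_posPow hm h (hφ.intervalIntegrable hu hφ.cutoff_pos)
      (fun E hE => hφ.nonneg E (lt_of_lt_of_le hu hE.1)) (pow_le_pow_left₀ (le_of_lt hu) huv 2)
  · rw [hφ.hfun_eq_zero h, hφ.hfun_eq_zero (h.trans huv)]

lemma hfun_nonneg (hm : 0 < m) {u : ℝ} (hu : 0 < u) : 0 ≤ hfun φ E₀ m u := by
  have hanti := hφ.antitoneOn_hfun hm (mem_Ioi.2 hu) (mem_Ioi.2 (lt_max_of_lt_left hu))
    (le_max_left u E₀)
  rwa [hφ.hfun_eq_zero (le_max_right u E₀)] at hanti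

lemma continuousOn_hfun (hm : 0 < m) : ContinuousOn (hfun φ E₀ m) (Ioi 0) := by
  intro u hu
  have hu₂ : 0 < u / 2 := half_pos hu
  have hcont : Continuous fun v => ∫ E in (u / 2)..E₀, φ E * posPow m (E ^ 2 - v ^ 2) :=
    (continuous_integral_mul_posPow hm (hφ.intervalIntegrable hu₂ hφ.cutoff_pos)).comp
      (continuous_pow 2)
  refine (hcont.continuousAt.congr ?_).continuousWithinAt
  filter_upwards [Ioi_mem_nhds (half_lt_self hu)] with v hv
  exact (hφ.hfun_eq_integral_posPow hm hu₂ (le_of_lt hv)).symm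

lemma locallyLipschitzOn_integral_posPow (hm : 0 < m) (ha : 0 < a) (hab : a ≤ b) (hb : b < E₀) :
    LocallyLipschitzOn (Iio (b ^ 2)) fun w => ∫ E in a..E₀, φ E * posPow m (E ^ 2 - w) := by
  have hb₀ := ha.trans_le hab
  have hint := hφ.intervalIntegrable ha hb₀
  have hint' := hφ.intervalIntegrable hb₀ hφ.cutoff_pos
  have hpos {E : ℝ} (hE : E ∈ Icc a b) : 0 < E := ha.trans_le hE.1
  obtain ⟨B, hB⟩ := hφ.bddAbove_image (Icc a b) (fun E hE => ⟨hpos hE, hE.2.trans_lt hb⟩)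
    isCompact_Icc
  have hle : ∀ E ∈ Icc a b, φ E ≤ (B / a).toNNReal * E := fun E hE => by
    have : 0 ≤ B := (hφ.nonneg E (hpos hE)).trans (hB (mem_image_of_mem φ hE))
    calc φ E ≤ B := hB (mem_image_of_mem φ hE)
      _ = B / a * a := by field_simp
      _ ≤ (B / a).toNNReal * E := by
          gcongr
          · exact le_coe_toNNReal _
          · exact hE.1
  have hsplit := ((locallyLipschitz_integral_mul_posPow hm hab hint
    (fun E hE => hφ.nonneg E (hpos hE)) hle).locallyLipschitzOn (s := Iio (b ^ 2))).add
      (locallyLipschitzOn_integral_mul_posPow hm hb₀.le hb.le hint')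
  simpa only [intervalIntegral.integral_add_adjacent_intervals
    (intervalIntegrable_mul_posPow hm hint _) (intervalIntegrable_mul_posPow hm hint' _)]
    using hsplit

lemma locallyLipschitzOn_hfun (hm : 0 < m) : LocallyLipschitzOn (Ioo 0 E₀) (hfun φ E₀ m) := by
  intro u hu
  obtain ⟨a, ha₀, hau⟩ := exists_between hu.1
  obtain ⟨b, hub, hb⟩ := exists_between hu.2
  have hcomp : LocallyLipschitzOn (Ioo a b)
      fun v => ∫ E in a..E₀, φ E * posPow m (E ^ 2 - v ^ 2) :=
    locallyLipschitzOn_comp (hφ.locallyLipschitzOn_integral_posPow hm ha₀ (hau.trans hub).le hb)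
      (contDiff_id.pow 2 : ContDiff ℝ 1 fun v : ℝ => v ^ 2).locallyLipschitz.locallyLipschitzOn
      fun v hv => pow_lt_pow_left₀ hv.2 (ha₀.trans hv.1).le two_ne_zero
  obtain ⟨K, t, ht, hK⟩ := hcomp ⟨hau, hub⟩
  have hnhds : Ioo a b ∈ nhds u := Ioo_mem_nhds hau hub
  refine ⟨K, t ∩ Ioo a b, mem_nhdsWithin_of_mem_nhds
    (Filter.inter_mem (nhdsWithin_eq_nhds.2 hnhds ▸ ht) hnhds), fun v hv w hw => ?_⟩
  rw [hφ.hfun_eq_integral_posPow hm ha₀ hv.2.1.le, hφ.hfun_eq_integral_posPow hm ha₀ hw.2.1.le]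
  exact hK hv.1 hw.1

lemma isMatterProfile_hfun_exp (hm : 0 < m) (y₀ : ℝ) :
    IsMatterProfile y₀ (max y₀ (log E₀)) fun y => hfun φ E₀ m (exp y) where
  nonneg y := hφ.hfun_nonneg hm (exp_pos y)
  antitone y z hyz := hφ.antitoneOn_hfun hm (exp_pos y) (exp_pos z) (exp_le_exp.2 hyz)
  continuous := (hφ.continuousOn_hfun hm).comp_continuous continuous_exp exp_pos
  eq_zero y hy := hφ.hfun_eq_zero
    ((log_le_iff_le_exp hφ.cutoff_pos).1 ((le_max_right _ _).trans hy))
  locallyLipschitzOn := by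
    refine locallyLipschitzOn_comp (hφ.locallyLipschitzOn_hfun hm)
      (contDiff_exp (n := 1)).locallyLipschitz.locallyLipschitzOn fun y hy => ⟨exp_pos y, ?_⟩
    exact (lt_log_iff_exp_lt hφ.cutoff_pos).1
      ((lt_max_iff.1 hy.2).resolve_left (not_lt.2 hy.1))

end IsEnergyProfile

lemma cab_nonneg (a b : ℝ) : 0 ≤ cab a b :=
  intervalIntegral.integral_nonneg zero_le_one fun _ hs =>
    mul_nonneg (rpow_nonneg hs.1 a) (rpow_nonneg (sub_nonneg.2 hs.2) b)

lemma IsMatterProfile.exp_neg_mul {y₀ y₁ c : ℝ} {g : ℝ → ℝ} (hg : IsMatterProfile y₀ y₁ g)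
    (hc : 0 ≤ c) : IsMatterProfile y₀ y₁ fun y => exp (-c * y) * g y :=
  hg.mul (fun _ => (exp_pos _).le)
    (fun _ _ h => exp_le_exp.2 (mul_le_mul_of_nonpos_left h (neg_nonpos.2 hc)))
    (contDiff_exp.comp (contDiff_const.mul contDiff_id) : ContDiff ℝ 1 _).locallyLipschitz

lemma IsMatterProfile.const_mul {y₀ y₁ c : ℝ} {g : ℝ → ℝ} (hg : IsMatterProfile y₀ y₁ g)
    (hc : 0 ≤ c) : IsMatterProfile y₀ y₁ fun y => c * g y :=
  hg.mul (fun _ => hc) antitone_const (LipschitzWith.const c).locallyLipschitz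

section Reduction

variable {E₀ l : ℝ} {φ : ℝ → ℝ}

/-- The reduced Vlasov–Einstein problem with `μ(0) = μ₀` as a radial system. If
`E₀ ≤ exp μ₀` there is only vacuum, which the cut-off `y₁ = μ₀` encodes. -/
noncomputable def IsEnergyProfile.radialSystem (hφ : IsEnergyProfile E₀ φ) (hl : -(1 / 2 : ℝ) < l)
    (μ₀ : ℝ) : RadialSystem where
  n := 2 * l + 2
  y₀ := μ₀
  y₁ := max μ₀ (log E₀)
  ρ y := 16 * π ^ 2 * cab l (-(1 / 2)) *
    (exp (-(2 * l + 4) * y) * hfun φ E₀ (l + 3 / 2) (exp y) +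
      exp (-(2 * l + 2) * y) * hfun φ E₀ (l + 1 / 2) (exp y))
  p y := 16 * π ^ 2 * cab l (1 / 2) *
    (exp (-(2 * l + 4) * y) * hfun φ E₀ (l + 3 / 2) (exp y))
  one_lt_n := by linarith
  y₀_le_y₁ := le_max_left _ _
  isMatterProfile_ρ :=
    (((hφ.isMatterProfile_hfun_exp (by linarith) μ₀).exp_neg_mul (by linarith)).add
      ((hφ.isMatterProfile_hfun_exp (by linarith) μ₀).exp_neg_mul (by linarith))).const_mul
        (mul_nonneg (by positivity) (cab_nonneg _ _))
  isMatterProfile_p :=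
    ((hφ.isMatterProfile_hfun_exp (by linarith) μ₀).exp_neg_mul (by linarith)).const_mul
      (mul_nonneg (by positivity) (cab_nonneg _ _))

lemma IsEnergyProfile.isSolution_radialSystem_iff (hφ : IsEnergyProfile E₀ φ)
    (hl : -(1 / 2 : ℝ) < l) (μ₀ : ℝ) (lam mu : ℝ → ℝ) :
    (hφ.radialSystem hl μ₀).IsSolution lam mu ↔ IsReducedVESolution E₀ l φ μ₀ lam mu := by
  have hρ {r : ℝ} (hr : 0 < r) : posPow (2 * l + 2) r * (hφ.radialSystem hl μ₀).ρ (mu r) =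
      16 * π ^ 2 * cab l (-(1 / 2)) * r ^ (2 * l + 2) *
        (exp (-(2 * l + 4) * mu r) * hfun φ E₀ (l + 3 / 2) (exp (mu r)) +
          exp (-(2 * l + 2) * mu r) * hfun φ E₀ (l + 1 / 2) (exp (mu r))) := by
    rw [posPow_of_nonneg hr.le, radialSystem]
    ring
  have hp {r : ℝ} (hr : 0 < r) : posPow (2 * l + 2) r * (hφ.radialSystem hl μ₀).p (mu r) =
      16 * π ^ 2 * cab l (1 / 2) * r ^ (2 * l + 2) *
        exp (-(2 * l + 4) * mu r) * hfun φ E₀ (l + 3 / 2) (exp (mu r)) := by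
    rw [posPow_of_nonneg hr.le, radialSystem]
    ring
  exact ⟨fun h => ⟨h.lam_zero, h.mu_zero, h.contDiffOn_lam, h.contDiffOn_mu,
      fun r hr => (h.eq_lam r hr).trans (hρ hr), fun r hr => (h.eq_mu r hr).trans (hp hr)⟩,
    fun ⟨hlam, hmu, hlam', hmu', hρ_eq, hp_eq⟩ => ⟨hlam, hmu, hlam', hmu',
      fun r hr => (hρ_eq r hr).trans (hρ hr).symm, fun r hr => (hp_eq r hr).trans (hp hr).symm⟩⟩

theorem reduced_VE_global_existence_uniqueness_general (hφ : IsEnergyProfile E₀ φ)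
    (hl : -(1 / 2 : ℝ) < l) (μ₀ : ℝ) :
    ∃ lam mu : ℝ → ℝ, IsReducedVESolution E₀ l φ μ₀ lam mu ∧
      ∀ lam' mu' : ℝ → ℝ, IsReducedVESolution E₀ l φ μ₀ lam' mu' →
        EqOn lam lam' (Ici 0) ∧ EqOn mu mu' (Ici 0) := by
  simp only [← hφ.isSolution_radialSystem_iff hl μ₀]
  exact (hφ.radialSystem hl μ₀).exists_isSolution_forall_eqOn

end Reduction

theorem reduced_VE_global_existence_uniqueness
    (E₀ k l : ℝ) (hE₀ : 0 < E₀) (hk : -1 < k) (hl : -(1/2 : ℝ) < l)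
    (hkl : 0 < k + l + 3 / 2)
    (φ : ℝ → ℝ) (hmeas : Measurable φ) (hnonneg : ∀ E, 0 < E → 0 ≤ φ E)
    (hvanish : ∀ E, E₀ ≤ E → φ E = 0)
    (hbound : ∀ K : Set ℝ, IsCompact K → K ⊆ Ioi 0 →
      ∃ C : ℝ, 0 ≤ C ∧ ∀ E ∈ K, φ E ≤ C * (max (E₀ - E) 0) ^ k)
    (μ₀ : ℝ) :
    ∃ lam mu : ℝ → ℝ, IsReducedVESolution E₀ l φ μ₀ lam mu ∧
      ∀ lam' mu' : ℝ → ℝ, IsReducedVESolution E₀ l φ μ₀ lam' mu' →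
        EqOn lam lam' (Ici 0) ∧ EqOn mu mu' (Ici 0) :=
  reduced_VE_global_existence_uniqueness_general
    (isEnergyProfile_of_le_mul_rpow hE₀ hk hmeas hnonneg hvanish hbound) hl μ₀
end

section
/- Let k, l ∈ ℝ satisfy k > −1, l > −1/2, k + l + 1/2 > 0, and k < l + 3/2. Let φ : ℝ → [0,∞) be measurable, locally essentially bounded on (−∞, E₀), with φ(E) = 0 for E ≥ E₀, and φ(E) = c(E₀ − E)₊^k + O((E₀ − E)₊^{k+δ}) as E → E₀− for some constants c > 0 and δ > 0. Let U ∈ C¹([0,∞)) satisfy U'(r) = (4π/r²)∫₀^r s²ρ(s) ds for r > 0, where ρ(r) = 2^{l+3/2} π c_{l,−1/2} r^{2l} ∫_{U(r)}^{E₀} φ(E)(E − U(r))₊^{l+1/2} dE and c_{l,−1/2} = ∫₀¹ s^l(1−s)^{−1/2} ds. Then there exists R < ∞ such that ρ(r) = 0 for all r ≥ R, and the total mass M = 4π∫₀^∞ r²ρ(r) dr is finite. -/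
open MeasureTheory Real Set

/-- The spatial mass density of the reduced spherically symmetric steady
Vlasov-Poisson system with ansatz `f = φ(E) L^l`. -/
noncomputable def rhoRed (φ : ℝ → ℝ) (E₀ l : ℝ) (U : ℝ → ℝ) (r : ℝ) : ℝ :=
  2 ^ (l + 3 / 2) * Real.pi *
    (∫ s in (0:ℝ)..1, s ^ l * (1 - s) ^ (-(1/2) : ℝ)) * r ^ (2 * l) *
    ∫ E in (U r)..E₀, φ E * (max (E - U r) 0) ^ (l + 1 / 2)

/-!
Put `y = E₀ - U` and let `m (r)` be the mass inside radius `r`, so that `y' = -m / r²`. Scaling the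
energy integral near the cut-off gives `ρ(r) ≥ B r^{2l} y^n` with `n = k + l + 3/2`, hence
`m (r) ≥ a r^{2l+3} y^n` because `y` decreases. If `y` stayed positive, then `y ≥ m (1) / r` by
comparison with a point mass, whereas integrating `-y' ≥ a r^{2l+1} y^n` yields
`y^{1-n} ≥ b (r^{2l+2} - 1)`. As `r → ∞` the two are incompatible as soon as `n - 1 < 2l + 2`, which
is `k < l + 3/2`. The integration step needs `n > 1`, which is arranged by increasing `k`: this
preserves the lower bound on `φ` near the cut-off.
-/

open Filter Topology Asymptotics

/-! ### The energy integral -/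

lemma intervalIntegrable_sub_rpow {k : ℝ} (hk : -1 < k) (u E₀ : ℝ) :
    IntervalIntegrable (fun E => (E₀ - E) ^ k) volume u E₀ := by
  simpa using (intervalIntegral.intervalIntegrable_rpow' (a := E₀ - u) (b := 0) hk).comp_sub_left E₀

lemma integral_rpow_mul_one_sub_rpow {a b : ℝ} (ha : -1 < a) (hb : -1 < b) :
    ∫ s in (0 : ℝ)..1, s ^ a * (1 - s) ^ b = ProbabilityTheory.beta (a + 1) (b + 1) := by
  rw [ProbabilityTheory.beta_eq_betaIntegralReal _ _ (by linarith) (by linarith),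
    Complex.betaIntegral, ← Complex.ofReal_re (∫ s in (0 : ℝ)..1, s ^ a * (1 - s) ^ b),
    ← intervalIntegral.integral_ofReal]
  refine congrArg Complex.re (intervalIntegral.integral_congr fun s hs => ?_)
  rw [uIcc_of_le zero_le_one] at hs
  simp [Complex.ofReal_cpow hs.1, Complex.ofReal_cpow (sub_nonneg.2 hs.2)]

/-- The energy integral `∫ φ(E) (E - u)₊^p dE` up to the cut-off energy, as a function of the
value `u` of the potential. -/
noncomputable def energyMoment (φ : ℝ → ℝ) (E₀ p u : ℝ) : ℝ :=
  ∫ E in u..E₀, φ E * (max (E - u) 0) ^ p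

section EnergyMoment

variable {φ : ℝ → ℝ} {E₀ p : ℝ}

lemma mul_max_rpow_nonneg (hnonneg : ∀ E, 0 ≤ φ E) (u E : ℝ) :
    0 ≤ φ E * (max (E - u) 0) ^ p :=
  mul_nonneg (hnonneg E) (Real.rpow_nonneg (le_max_right _ _) _)

lemma intervalIntegrable_mul_max_rpow (hp : 0 ≤ p) {a b : ℝ}
    (hint : IntervalIntegrable φ volume a b) (u : ℝ) :
    IntervalIntegrable (fun E => φ E * (max (E - u) 0) ^ p) volume a b := by
  refine hint.mul_continuousOn (Continuous.continuousOn ?_)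
  exact ((continuous_id.sub continuous_const).max continuous_const).rpow_const
    fun _ => Or.inr hp

lemma energyMoment_eq_zero (hvanish : ∀ E, E₀ ≤ E → φ E = 0) {u : ℝ} (hu : E₀ ≤ u) :
    energyMoment φ E₀ p u = 0 := by
  refine intervalIntegral.integral_zero_ae (Eventually.of_forall fun E hE => ?_)
  rw [uIoc_of_ge hu] at hE
  rw [hvanish E hE.1.le, zero_mul]

lemma energyMoment_nonneg (hnonneg : ∀ E, 0 ≤ φ E) (hvanish : ∀ E, E₀ ≤ E → φ E = 0) (u : ℝ) :
    0 ≤ energyMoment φ E₀ p u := by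
  rcases le_total u E₀ with hu | hu
  · exact intervalIntegral.integral_nonneg hu fun E _ => mul_max_rpow_nonneg hnonneg u E
  · exact (energyMoment_eq_zero hvanish hu).ge

lemma antitone_energyMoment (hp : 0 ≤ p) (hnonneg : ∀ E, 0 ≤ φ E)
    (hvanish : ∀ E, E₀ ≤ E → φ E = 0) (hint : ∀ u ≤ E₀, IntervalIntegrable φ volume u E₀) :
    Antitone (energyMoment φ E₀ p) := by
  intro u v huv
  rcases le_total E₀ v with hv | hv
  · rw [energyMoment_eq_zero hvanish hv]
    exact energyMoment_nonneg hnonneg hvanish u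
  calc energyMoment φ E₀ p v ≤ ∫ E in v..E₀, φ E * (max (E - u) 0) ^ p := by
        refine intervalIntegral.integral_mono_on hv
          (intervalIntegrable_mul_max_rpow hp (hint v hv) v)
          (intervalIntegrable_mul_max_rpow hp (hint v hv) u) fun E _ => ?_
        have := hnonneg E
        gcongr
    _ ≤ energyMoment φ E₀ p u :=
        intervalIntegral.integral_mono_interval huv hv le_rfl
          (Eventually.of_forall fun E => mul_max_rpow_nonneg hnonneg u E)
          (intervalIntegrable_mul_max_rpow hp (hint u (huv.trans hv)) u)

lemma energyMoment_mono {ψ : ℝ → ℝ} {u : ℝ} (hp : 0 ≤ p) (hu : u ≤ E₀)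
    (hψ : IntervalIntegrable ψ volume u E₀) (hφ : IntervalIntegrable φ volume u E₀)
    (hle : ∀ E ∈ Ioo u E₀, ψ E ≤ φ E) :
    energyMoment ψ E₀ p u ≤ energyMoment φ E₀ p u :=
  intervalIntegral.integral_mono_on_of_le_Ioo hu (intervalIntegrable_mul_max_rpow hp hψ u)
    (intervalIntegrable_mul_max_rpow hp hφ u) fun E hE =>
      mul_le_mul_of_nonneg_right (hle E hE) (Real.rpow_nonneg (le_max_right _ _) _)

lemma energyMoment_const_mul_sub_rpow {k z : ℝ} (hk : -1 < k) (hp : -1 < p) (hz : 0 < z) (b : ℝ) :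
    energyMoment (fun E => b * (E₀ - E) ^ k) E₀ p (E₀ - z) =
      b * ProbabilityTheory.beta (k + 1) (p + 1) * z ^ (k + p + 1) := by
  have hscale : ∫ t in (0 : ℝ)..1, b * (E₀ - (E₀ - z * t)) ^ k *
      (max (E₀ - z * t - (E₀ - z)) 0) ^ p =
        ∫ t in (0 : ℝ)..1, b * z ^ k * z ^ p * (t ^ k * (1 - t) ^ p) := by
    refine intervalIntegral.integral_congr fun t ht => ?_
    rw [uIcc_of_le zero_le_one] at ht
    have hdepth : E₀ - (E₀ - z * t) = z * t := by ring
    have hmax : max (E₀ - z * t - (E₀ - z)) 0 = z * (1 - t) := by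
      rw [max_eq_left (by nlinarith [ht.2])]; ring
    simp only [hdepth, hmax, Real.mul_rpow hz.le ht.1, Real.mul_rpow hz.le (sub_nonneg.2 ht.2)]
    ring
  rw [intervalIntegral.integral_comp_sub_mul
      (fun E => b * (E₀ - E) ^ k * (max (E - (E₀ - z)) 0) ^ p) hz.ne', mul_one, mul_zero, sub_zero,
    intervalIntegral.integral_const_mul, integral_rpow_mul_one_sub_rpow hk hp, smul_eq_mul,
    inv_mul_eq_iff_eq_mul₀ hz.ne'] at hscale
  rw [energyMoment, hscale, Real.rpow_add hz, Real.rpow_add hz, Real.rpow_one]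
  ring

lemma exists_mul_sub_rpow_le_energyMoment {k b : ℝ} (hk : -1 < k) (hp : 0 ≤ p) (hb : 0 < b)
    (hnonneg : ∀ E, 0 ≤ φ E) (hvanish : ∀ E, E₀ ≤ E → φ E = 0)
    (hint : ∀ u ≤ E₀, IntervalIntegrable φ volume u E₀)
    (hlow : ∀ᶠ E in 𝓝[<] E₀, b * (E₀ - E) ^ k ≤ φ E) (u₀ : ℝ) :
    ∃ κ > 0, ∀ u, u₀ ≤ u → u < E₀ → κ * (E₀ - u) ^ (k + p + 1) ≤ energyMoment φ E₀ p u := by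
  obtain ⟨v, hv, hlow⟩ := mem_nhdsLT_iff_exists_Ioo_subset.1 hlow
  rw [mem_Iio] at hv
  set β := ProbabilityTheory.beta (k + 1) (p + 1)
  have hβ : 0 < β := ProbabilityTheory.beta_pos (by linarith) (by linarith)
  -- Shrinking the depth `E₀ - u` by the fixed factor `θ` brings every `u ≥ u₀` into `(v, E₀)`.
  set θ := (E₀ - v) / (E₀ - v + |E₀ - u₀|)
  have hd : 0 < E₀ - v + |E₀ - u₀| := by have := abs_nonneg (E₀ - u₀); linarith
  have hθ : 0 < θ := div_pos (by linarith) hd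
  refine ⟨b * β * θ ^ (k + p + 1), by positivity, fun u hu₀ hu => ?_⟩
  have hz : 0 < E₀ - u := sub_pos.2 hu
  have hz_abs : E₀ - u ≤ |E₀ - u₀| := (by linarith : E₀ - u ≤ E₀ - u₀).trans (le_abs_self _)
  have hθ_one : θ ≤ 1 := (div_le_one hd).2 (by linarith)
  have hθz : θ * (E₀ - u) ≤ E₀ - v := by
    rw [div_mul_eq_mul_div, div_le_iff₀ hd]
    exact mul_le_mul_of_nonneg_left (by linarith) (by linarith)
  have hle : E₀ - θ * (E₀ - u) ≤ E₀ := by linarith [mul_pos hθ hz]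
  calc b * β * θ ^ (k + p + 1) * (E₀ - u) ^ (k + p + 1)
      = energyMoment (fun E => b * (E₀ - E) ^ k) E₀ p (E₀ - θ * (E₀ - u)) := by
        rw [energyMoment_const_mul_sub_rpow hk (by linarith) (mul_pos hθ hz),
          Real.mul_rpow hθ.le hz.le, mul_assoc _ (θ ^ _)]
    _ ≤ energyMoment φ E₀ p (E₀ - θ * (E₀ - u)) :=
        energyMoment_mono hp hle ((intervalIntegrable_sub_rpow hk _ _).const_mul b)
          (hint _ hle) fun E hE => hlow ⟨by linarith [hE.1], hE.2⟩
    _ ≤ energyMoment φ E₀ p u :=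
        antitone_energyMoment hp hnonneg hvanish hint (by nlinarith)

end EnergyMoment

/-! ### Positive solutions of Lane–Emden type inequalities -/

lemma antitoneOn_Ici_of_hasDerivAt_nonpos {f f' : ℝ → ℝ} {a : ℝ}
    (hf : ∀ r, a ≤ r → HasDerivAt f (f' r) r) (hf' : ∀ r, a ≤ r → f' r ≤ 0) :
    AntitoneOn f (Ici a) :=
  antitoneOn_of_hasDerivWithinAt_nonpos (convex_Ici a)
    (fun r hr => (hf r hr).continuousAt.continuousWithinAt)
    (fun r hr => (hf r (interior_subset hr)).hasDerivWithinAt)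
    fun r hr => hf' r (interior_subset hr)

lemma div_le_of_hasDerivAt_neg_div_sq {y m : ℝ → ℝ} {M r₀ : ℝ} (hr₀ : 0 < r₀)
    (hy : ∀ r, r₀ ≤ r → HasDerivAt y (-(m r / r ^ 2)) r) (hm : ∀ r, r₀ ≤ r → M ≤ m r)
    (hnonneg : ∀ r, r₀ ≤ r → 0 ≤ y r) {r : ℝ} (hr : r₀ ≤ r) :
    M / r ≤ y r := by
  have hanti : AntitoneOn (fun s => y s - M * s⁻¹) (Ici r₀) := by
    refine antitoneOn_Ici_of_hasDerivAt_nonpos (fun s hs =>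
      (hy s hs).sub ((hasDerivAt_inv (hr₀.trans_le hs).ne').const_mul M)) fun s hs => ?_
    have : M / s ^ 2 ≤ m s / s ^ 2 := by gcongr; exact hm s hs
    rw [div_eq_mul_inv M] at this
    linarith
  have hlim : Tendsto (fun s : ℝ => -(M * s⁻¹)) atTop (𝓝 0) := by
    simpa using (tendsto_inv_atTop_zero.const_mul M).neg
  have hnonneg' : 0 ≤ y r - M * r⁻¹ := by
    refine le_of_tendsto hlim ?_
    filter_upwards [eventually_ge_atTop r] with s hs
    have := hanti hr (hr.trans hs) hs
    linarith [hnonneg s (hr.trans hs)]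
  rw [div_eq_mul_inv]
  linarith

lemma le_rpow_one_sub_of_hasDerivAt_le {y y' : ℝ → ℝ} {a n σ r₀ : ℝ} (hr₀ : 0 < r₀) (hn : 1 ≤ n)
    (hσ : σ ≠ 0) (hy : ∀ r, r₀ ≤ r → HasDerivAt y (y' r) r)
    (hy' : ∀ r, r₀ ≤ r → y' r ≤ -(a * r ^ (σ - 1) * y r ^ n))
    (hpos : ∀ r, r₀ ≤ r → 0 < y r) {r : ℝ} (hr : r₀ ≤ r) :
    (n - 1) * a / σ * (r ^ σ - r₀ ^ σ) ≤ y r ^ (1 - n) := by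
  have hanti : AntitoneOn (fun s => (n - 1) * a / σ * s ^ σ - y s ^ (1 - n)) (Ici r₀) := by
    refine antitoneOn_Ici_of_hasDerivAt_nonpos (fun s hs =>
      ((Real.hasDerivAt_rpow_const (Or.inl (hr₀.trans_le hs).ne')).const_mul _).sub
        ((hy s hs).rpow_const (Or.inl (hpos s hs).ne'))) fun s hs => ?_
    have hcancel : y s ^ n * y s ^ (1 - n - 1) = 1 := by
      rw [← Real.rpow_add (hpos s hs)]; simp
    have hmul : y' s * ((n - 1) * y s ^ (1 - n - 1)) ≤
        -(a * s ^ (σ - 1) * y s ^ n) * ((n - 1) * y s ^ (1 - n - 1)) :=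
      mul_le_mul_of_nonneg_right (hy' s hs)
        (mul_nonneg (by linarith) (Real.rpow_nonneg (hpos s hs).le _))
    calc (n - 1) * a / σ * (σ * s ^ (σ - 1)) - y' s * (1 - n) * y s ^ (1 - n - 1)
        = (n - 1) * a * s ^ (σ - 1) + y' s * ((n - 1) * y s ^ (1 - n - 1)) := by
          field_simp
          ring
      _ ≤ (n - 1) * a * s ^ (σ - 1) * (1 - y s ^ n * y s ^ (1 - n - 1)) := by linarith
      _ = 0 := by rw [hcancel, sub_self, mul_zero]
  have hle : (n - 1) * a / σ * r ^ σ - y r ^ (1 - n) ≤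
      (n - 1) * a / σ * r₀ ^ σ - y r₀ ^ (1 - n) := hanti (mem_Ici.2 le_rfl) hr hr
  linarith [Real.rpow_nonneg (hpos r₀ le_rfl).le (1 - n)]

lemma eventually_mul_rpow_lt_mul_rpow_sub {b s σ : ℝ} (hb : 0 < b) (hs : 0 < s) (hsσ : s < σ)
    (C d : ℝ) : ∀ᶠ r : ℝ in atTop, C * r ^ s < b * (r ^ σ - d) := by
  have hlim : Tendsto (fun r : ℝ => r ^ s * (b * r ^ (σ - s) + -C)) atTop atTop :=
    (tendsto_rpow_atTop hs).atTop_mul_atTop₀ <| tendsto_atTop_add_const_right _ _ <|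
      (tendsto_rpow_atTop (sub_pos.2 hsσ)).const_mul_atTop hb
  filter_upwards [hlim.eventually_gt_atTop (b * d), eventually_gt_atTop 0] with r hr hr₀
  have : r ^ σ = r ^ s * r ^ (σ - s) := by rw [← Real.rpow_add hr₀, add_sub_cancel]
  rw [this]
  linarith

lemma exists_nonpos_of_laneEmden {y m : ℝ → ℝ} {a n σ r₀ : ℝ} (hr₀ : 0 < r₀) (ha : 0 < a)
    (hn : 1 < n) (hnσ : n < σ + 1) (hy : ∀ r, r₀ ≤ r → HasDerivAt y (-(m r / r ^ 2)) r)
    (hmono : MonotoneOn m (Ici r₀))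
    (hm : ∀ r, r₀ ≤ r → 0 < y r → a * r ^ (σ + 1) * y r ^ n ≤ m r) :
    ∃ r, r₀ ≤ r ∧ y r ≤ 0 := by
  by_contra! hpos
  have hM : 0 < m r₀ := by
    have := hpos r₀ le_rfl
    exact lt_of_lt_of_le (by positivity) (hm r₀ le_rfl this)
  have hy' : ∀ r, r₀ ≤ r → -(m r / r ^ 2) ≤ -(a * r ^ (σ - 1) * y r ^ n) := by
    intro r hr
    have hr' : 0 < r := hr₀.trans_le hr
    rw [neg_le_neg_iff, le_div_iff₀ (by positivity)]
    calc a * r ^ (σ - 1) * y r ^ n * r ^ 2 = a * (r ^ (σ - 1) * r ^ (2 : ℝ)) * y r ^ n := by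
          rw [Real.rpow_two]; ring
      _ = a * r ^ (σ + 1) * y r ^ n := by rw [← Real.rpow_add hr']; ring_nf
      _ ≤ m r := hm r hr (hpos r hr)
  have hb : 0 < (n - 1) * a / σ := div_pos (mul_pos (by linarith) ha) (by linarith)
  obtain ⟨r, hlt, hr⟩ := ((eventually_mul_rpow_lt_mul_rpow_sub hb (sub_pos.2 hn)
    (by linarith : n - 1 < σ) (m r₀ ^ (1 - n)) (r₀ ^ σ)).and (eventually_ge_atTop r₀)).exists
  have hr' : 0 < r := hr₀.trans_le hr
  refine hlt.not_ge ?_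
  calc (n - 1) * a / σ * (r ^ σ - r₀ ^ σ) ≤ y r ^ (1 - n) :=
        le_rpow_one_sub_of_hasDerivAt_le hr₀ hn.le (by linarith) hy hy' hpos hr
    _ ≤ (m r₀ / r) ^ (1 - n) :=
        Real.rpow_le_rpow_of_nonpos (by positivity)
          (div_le_of_hasDerivAt_neg_div_sq hr₀ hy (fun s hs => hmono (mem_Ici.2 le_rfl) hs hs)
            (fun s hs => (hpos s hs).le) hr) (by linarith)
    _ = m r₀ ^ (1 - n) * r ^ (n - 1) := by
        rw [Real.div_rpow hM.le hr'.le, div_eq_mul_inv, ← Real.rpow_neg hr'.le, neg_sub]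

/-! ### The radial field equation -/

/-- The mass inside radius `r` of the radial density `ρ`. The field equation for the potential `U`
then reads `U' = enclosedMass ρ r / r ^ 2`. -/
noncomputable def enclosedMass (ρ : ℝ → ℝ) (r : ℝ) : ℝ :=
  4 * π * ∫ s in (0 : ℝ)..r, s ^ 2 * ρ s

section EnclosedMass

variable {ρ U : ℝ → ℝ}

lemma enclosedMass_nonneg (hρ : ∀ r, 0 ≤ r → 0 ≤ ρ r) {r : ℝ} (hr : 0 ≤ r) :
    0 ≤ enclosedMass ρ r :=
  mul_nonneg (by positivity) <| intervalIntegral.integral_nonneg hr fun s hs =>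
    mul_nonneg (sq_nonneg s) (hρ s hs.1)

lemma monotoneOn_enclosedMass (hρ : ∀ r, 0 ≤ r → 0 ≤ ρ r)
    (hint : ∀ r, 0 ≤ r → IntervalIntegrable (fun s => s ^ 2 * ρ s) volume 0 r) :
    MonotoneOn (enclosedMass ρ) (Ici 0) := by
  intro r hr t ht hrt
  refine mul_le_mul_of_nonneg_left ?_ (by positivity)
  refine intervalIntegral.integral_mono_interval le_rfl hr hrt ?_ (hint t ht)
  filter_upwards [ae_restrict_mem measurableSet_Ioc] with s hs
  exact mul_nonneg (sq_nonneg s) (hρ s hs.1.le)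

lemma mul_rpow_le_enclosedMass {B q r : ℝ} (hq : -3 < q) (hr : 0 ≤ r)
    (hint : IntervalIntegrable (fun s => s ^ 2 * ρ s) volume 0 r)
    (hρ : ∀ s ∈ Ioo 0 r, B * s ^ q ≤ ρ s) :
    4 * π * B / (q + 3) * r ^ (q + 3) ≤ enclosedMass ρ r := by
  have hpow : ∫ s in (0 : ℝ)..r, B * s ^ (q + 2) ≤ ∫ s in (0 : ℝ)..r, s ^ 2 * ρ s := by
    refine intervalIntegral.integral_mono_on_of_le_Ioo hr
      ((intervalIntegral.intervalIntegrable_rpow' (by linarith)).const_mul B) hint fun s hs => ?_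
    calc B * s ^ (q + 2) = s ^ 2 * (B * s ^ q) := by
          rw [Real.rpow_add hs.1, Real.rpow_two]; ring
      _ ≤ s ^ 2 * ρ s := mul_le_mul_of_nonneg_left (hρ s hs) (sq_nonneg s)
  rw [intervalIntegral.integral_const_mul, integral_rpow (Or.inl (by linarith)),
    Real.zero_rpow (by linarith), sub_zero, add_assoc, show (2 : ℝ) + 1 = 3 by norm_num] at hpow
  calc 4 * π * B / (q + 3) * r ^ (q + 3) = 4 * π * (B * (r ^ (q + 3) / (q + 3))) := by ring
    _ ≤ enclosedMass ρ r := mul_le_mul_of_nonneg_left hpow (by positivity)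

lemma monotoneOn_of_hasDerivAt_enclosedMass (hU₀ : ContinuousOn U (Ici 0))
    (hU : ∀ r, 0 < r → HasDerivAt U (enclosedMass ρ r / r ^ 2) r)
    (hρ : ∀ r, 0 ≤ r → 0 ≤ ρ r) :
    MonotoneOn U (Ici 0) := by
  refine monotoneOn_of_hasDerivWithinAt_nonneg (convex_Ici 0) hU₀
    (fun r hr => (hU r (by simpa using hr)).hasDerivWithinAt) fun r hr => ?_
  exact div_nonneg (enclosedMass_nonneg hρ (interior_subset hr)) (sq_nonneg r)

lemma exists_le_of_hasDerivAt_enclosedMass {E₀ B q n : ℝ} (hB : 0 < B) (hn : 1 < n)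
    (hnq : n < q + 3) (hUmono : MonotoneOn U (Ici 0))
    (hU : ∀ r, 0 < r → HasDerivAt U (enclosedMass ρ r / r ^ 2) r)
    (hint : ∀ r, 0 ≤ r → IntervalIntegrable (fun s => s ^ 2 * ρ s) volume 0 r)
    (hρ : ∀ r, 0 ≤ r → 0 ≤ ρ r)
    (hlow : ∀ r, 0 < r → U r < E₀ → B * r ^ q * (E₀ - U r) ^ n ≤ ρ r) :
    ∃ R, 0 ≤ R ∧ E₀ ≤ U R := by
  have hmass : ∀ r, 0 < r → U r < E₀ →
      4 * π * B / (q + 3) * r ^ (q + 2 + 1) * (E₀ - U r) ^ n ≤ enclosedMass ρ r := by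
    intro r hr hUr
    have hinside : ∀ s ∈ Ioo 0 r, B * (E₀ - U r) ^ n * s ^ q ≤ ρ s := by
      intro s hs
      have hs₀ := hs.1
      have hUs : U s ≤ U r := hUmono hs₀.le hr.le hs.2.le
      calc B * (E₀ - U r) ^ n * s ^ q = B * s ^ q * (E₀ - U r) ^ n := by ring
        _ ≤ B * s ^ q * (E₀ - U s) ^ n := by gcongr
        _ ≤ ρ s := hlow s hs₀ (hUs.trans_lt hUr)
    calc 4 * π * B / (q + 3) * r ^ (q + 2 + 1) * (E₀ - U r) ^ n
        = 4 * π * (B * (E₀ - U r) ^ n) / (q + 3) * r ^ (q + 3) := by ring_nf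
      _ ≤ enclosedMass ρ r := mul_rpow_le_enclosedMass (by linarith) hr.le (hint r hr.le) hinside
  have hpos : ∀ {r : ℝ}, 1 ≤ r → 0 < r := fun hr => one_pos.trans_le hr
  obtain ⟨R, hR, hUR⟩ := exists_nonpos_of_laneEmden (y := fun r => E₀ - U r) one_pos
    (div_pos (by positivity) (by linarith)) hn (by linarith)
    (fun r hr => (hU r (hpos hr)).const_sub E₀)
    ((monotoneOn_enclosedMass hρ hint).mono (Ici_subset_Ici.2 zero_le_one))
    fun r hr hy => hmass r (hpos hr) (sub_pos.1 hy)
  exact ⟨R, (hpos hR).le, sub_nonpos.1 hUR⟩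

end EnclosedMass

/-! ### The density of a steady state -/

/-- The constant `2 ^ (l + 3 / 2) π c_{l,-1/2}` of the density, with `c_{l,-1/2}` written as the
value `B(l + 1, 1 / 2)` of the beta function. -/
noncomputable def densityConst (l : ℝ) : ℝ :=
  2 ^ (l + 3 / 2) * π * ProbabilityTheory.beta (l + 1) (1 / 2)

lemma densityConst_pos {l : ℝ} (hl : -1 < l) : 0 < densityConst l :=
  mul_pos (by positivity) (ProbabilityTheory.beta_pos (by linarith) (by norm_num))

section RhoRed

variable {φ U : ℝ → ℝ} {E₀ l : ℝ}

lemma rhoRed_eq (hl : -1 < l) (r : ℝ) :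
    rhoRed φ E₀ l U r = densityConst l * r ^ (2 * l) * energyMoment φ E₀ (l + 1 / 2) (U r) := by
  rw [rhoRed, integral_rpow_mul_one_sub_rpow hl (by norm_num), densityConst, energyMoment,
    show -(1 / 2 : ℝ) + 1 = 1 / 2 by norm_num]

lemma rhoRed_nonneg (hl : -1 < l) (hnonneg : ∀ E, 0 ≤ φ E) (hvanish : ∀ E, E₀ ≤ E → φ E = 0)
    {r : ℝ} (hr : 0 ≤ r) : 0 ≤ rhoRed φ E₀ l U r := by
  rw [rhoRed_eq hl]
  exact mul_nonneg (mul_nonneg (densityConst_pos hl).le (Real.rpow_nonneg hr _))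
    (energyMoment_nonneg hnonneg hvanish _)

lemma rhoRed_eq_zero (hvanish : ∀ E, E₀ ≤ E → φ E = 0) {r : ℝ} (hr : E₀ ≤ U r) :
    rhoRed φ E₀ l U r = 0 :=
  mul_eq_zero_of_right _ (energyMoment_eq_zero hvanish hr)

lemma intervalIntegrable_sq_mul_rhoRed (hl : -(1 / 2) ≤ l) (hnonneg : ∀ E, 0 ≤ φ E)
    (hvanish : ∀ E, E₀ ≤ E → φ E = 0) (hint : ∀ u ≤ E₀, IntervalIntegrable φ volume u E₀)
    (hUmono : MonotoneOn U (Ici 0)) {r : ℝ} (hr : 0 ≤ r) :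
    IntervalIntegrable (fun s => s ^ 2 * rhoRed φ E₀ l U s) volume 0 r := by
  have hsub : uIcc 0 r ⊆ Ici 0 := by rw [uIcc_of_le hr]; exact Icc_subset_Ici_self
  have hmoment : IntervalIntegrable (fun s => energyMoment φ E₀ (l + 1 / 2) (U s)) volume 0 r :=
    AntitoneOn.intervalIntegrable <|
      (antitone_energyMoment (by linarith) hnonneg hvanish hint).comp_monotoneOn
        (hUmono.mono hsub)
  have hweight : Continuous fun s : ℝ => densityConst l * s ^ (2 + 2 * l) :=
    (continuous_id.rpow_const fun _ => Or.inr (by linarith)).const_mul _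
  refine (hmoment.continuousOn_mul hweight.continuousOn).congr fun s hs => ?_
  have hs₀ : 0 ≤ s := hsub (uIoc_subset_uIcc hs)
  simp only [rhoRed_eq (by linarith : -1 < l)]
  rw [Real.rpow_add' hs₀ (by linarith), Real.rpow_two]
  ring

lemma exists_mul_sub_rpow_le_rhoRed {k b : ℝ} (hk : -1 < k) (hl : -(1 / 2) ≤ l) (hb : 0 < b)
    (hnonneg : ∀ E, 0 ≤ φ E) (hvanish : ∀ E, E₀ ≤ E → φ E = 0)
    (hint : ∀ u ≤ E₀, IntervalIntegrable φ volume u E₀)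
    (hlow : ∀ᶠ E in 𝓝[<] E₀, b * (E₀ - E) ^ k ≤ φ E) (hUmono : MonotoneOn U (Ici 0)) :
    ∃ B > 0, ∀ r, 0 < r → U r < E₀ →
      B * r ^ (2 * l) * (E₀ - U r) ^ (k + l + 3 / 2) ≤ rhoRed φ E₀ l U r := by
  obtain ⟨κ, hκ, hle⟩ := exists_mul_sub_rpow_le_energyMoment hk (by linarith : 0 ≤ l + 1 / 2) hb
    hnonneg hvanish hint hlow (U 0)
  have hK := densityConst_pos (by linarith : -1 < l)
  refine ⟨densityConst l * κ, mul_pos hK hκ, fun r hr hUr => ?_⟩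
  have hUr₀ : U 0 ≤ U r := hUmono (mem_Ici.2 le_rfl) hr.le hr.le
  calc densityConst l * κ * r ^ (2 * l) * (E₀ - U r) ^ (k + l + 3 / 2)
      = densityConst l * r ^ (2 * l) * (κ * (E₀ - U r) ^ (k + (l + 1 / 2) + 1)) := by ring_nf
    _ ≤ densityConst l * r ^ (2 * l) * energyMoment φ E₀ (l + 1 / 2) (U r) := by
        gcongr; exact hle _ hUr₀ hUr
    _ = rhoRed φ E₀ l U r := (rhoRed_eq (by linarith) r).symm

end RhoRed

/-! ### The ansatz function near the cut-off energy -/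

section Cutoff

variable {φ : ℝ → ℝ} {E₀ k : ℝ}

lemma isEquivalent_rpow_of_error_bound {c δ : ℝ} (hc : c ≠ 0) (hδ : 0 < δ)
    (hasymp : ∃ C ε : ℝ, 0 < ε ∧ ∀ E, E₀ - ε < E →
      |φ E - c * (max (E₀ - E) 0) ^ k| ≤ C * (max (E₀ - E) 0) ^ (k + δ)) :
    φ ~[𝓝[<] E₀] fun E => c * (E₀ - E) ^ k := by
  obtain ⟨C, ε, hε, hbound⟩ := hasymp
  have hlim : Tendsto (fun E => (E₀ - E) ^ δ) (𝓝[<] E₀) (𝓝 0) := by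
    have : ContinuousAt (fun E => (E₀ - E) ^ δ) E₀ :=
      (continuousAt_const.sub continuousAt_id).rpow_const (Or.inr hδ.le)
    simpa [Real.zero_rpow hδ.ne'] using this.tendsto.mono_left nhdsWithin_le_nhds
  have hO : (φ - fun E => c * (E₀ - E) ^ k) =O[𝓝[<] E₀] fun E => (E₀ - E) ^ δ * (E₀ - E) ^ k := by
    refine IsBigO.of_bound C ?_
    filter_upwards [Ioo_mem_nhdsLT (sub_lt_self E₀ hε)] with E hE
    have ht : 0 < E₀ - E := sub_pos.2 hE.2
    have := hbound E hE.1
    rw [max_eq_left ht.le, add_comm, Real.rpow_add ht] at this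
    rwa [Real.norm_of_nonneg (by positivity : 0 ≤ (E₀ - E) ^ δ * (E₀ - E) ^ k)]
  have ho : (fun E => (E₀ - E) ^ δ * (E₀ - E) ^ k) =o[𝓝[<] E₀] fun E => 1 * (E₀ - E) ^ k :=
    ((isLittleO_one_iff ℝ).2 hlim).mul_isBigO (isBigO_refl _ _)
  simp only [one_mul] at ho
  exact (hO.trans_isLittleO ho).const_mul_right hc

lemma eventually_half_mul_rpow_le {c : ℝ} (hc : 0 ≤ c)
    (hφ : φ ~[𝓝[<] E₀] fun E => c * (E₀ - E) ^ k) :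
    ∀ᶠ E in 𝓝[<] E₀, c / 2 * (E₀ - E) ^ k ≤ φ E := by
  filter_upwards [hφ.def one_half_pos, self_mem_nhdsWithin] with E hE hlt
  have : 0 ≤ (E₀ - E) ^ k := Real.rpow_nonneg (sub_nonneg.2 (le_of_lt hlt)) k
  rw [Real.norm_of_nonneg (mul_nonneg hc this), Pi.sub_apply, Real.norm_eq_abs] at hE
  linarith [neg_abs_le (φ E - c * (E₀ - E) ^ k)]

lemma eventually_mul_rpow_le_of_exponent_le {b k' : ℝ} (hb : 0 ≤ b) (hk : k ≤ k')
    (hφ : ∀ᶠ E in 𝓝[<] E₀, b * (E₀ - E) ^ k ≤ φ E) :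
    ∀ᶠ E in 𝓝[<] E₀, b * (E₀ - E) ^ k' ≤ φ E := by
  filter_upwards [hφ, Ioo_mem_nhdsLT (sub_one_lt E₀)] with E hE hmem
  exact (mul_le_mul_of_nonneg_left (Real.rpow_le_rpow_of_exponent_ge (by linarith [hmem.2])
    (by linarith [hmem.1]) hk) hb).trans hE

lemma locallyIntegrableOn_of_ae_le_on_compacts {s : Set ℝ} (hs : IsLocallyClosed s)
    (hmeas : AEStronglyMeasurable φ) (hnonneg : ∀ E, 0 ≤ φ E)
    (hloc : ∀ K : Set ℝ, IsCompact K → K ⊆ s → ∃ C : ℝ, ∀ᵐ E : ℝ, E ∈ K → φ E ≤ C) :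
    LocallyIntegrableOn φ s := by
  refine (locallyIntegrableOn_iff hs).2 fun K hKs hK => ?_
  obtain ⟨C, hC⟩ := hloc K hK hKs
  refine Measure.integrableOn_of_bounded (M := C) hK.measure_lt_top.ne hmeas ?_
  filter_upwards [ae_restrict_mem hK.measurableSet, ae_restrict_of_ae hC] with E hE hle
  rw [Real.norm_of_nonneg (hnonneg E)]
  exact hle hE

lemma intervalIntegrable_of_isBigO_rpow (hk : -1 < k) (hφ : LocallyIntegrableOn φ (Iio E₀))
    (hO : φ =O[𝓝[<] E₀] fun E => (E₀ - E) ^ k) {u : ℝ} (hu : u ≤ E₀) :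
    IntervalIntegrable φ volume u E₀ := by
  have hpow : IntegrableAtFilter (fun E => (E₀ - E) ^ k) (𝓝[<] E₀) volume :=
    ⟨Ioo (E₀ - 1) E₀, Ioo_mem_nhdsLT (sub_one_lt E₀),
      (intervalIntegrable_iff_integrableOn_Ioo_of_le (sub_one_lt E₀).le).1
        (intervalIntegrable_sub_rpow hk _ _)⟩
  have hmeas : StronglyMeasurableAtFilter φ (𝓝[<] E₀) volume :=
    ⟨Iio E₀, self_mem_nhdsWithin, hφ.aestronglyMeasurable⟩
  obtain ⟨s, hs, hnear⟩ := hO.integrableAtFilter hmeas hpow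
  obtain ⟨v, hv, hvs⟩ := mem_nhdsLT_iff_exists_Ioo_subset.1 hs
  have hfar : IntegrableOn φ (Icc u v) :=
    hφ.integrableOn_compact_subset (fun E hE => hE.2.trans_lt hv) isCompact_Icc
  rw [intervalIntegrable_iff_integrableOn_Ioo_of_le hu]
  refine (hfar.union (hnear.mono_set hvs)).mono_set fun E hE => ?_
  rcases le_or_gt E v with hEv | hEv
  · exact Or.inl ⟨hE.1.le, hEv⟩
  · exact Or.inr ⟨hEv, hE.2⟩

end Cutoff

theorem main_nonrelativistic_general {k l E₀ b : ℝ} (hl : -(1 / 2) ≤ l) (hkl : k < l + 3 / 2)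
    (hb : 0 < b) {φ : ℝ → ℝ} (hnonneg : ∀ E, 0 ≤ φ E) (hvanish : ∀ E, E₀ ≤ E → φ E = 0)
    (hint : ∀ u ≤ E₀, IntervalIntegrable φ volume u E₀)
    (hlow : ∀ᶠ E in 𝓝[<] E₀, b * (E₀ - E) ^ k ≤ φ E)
    {U : ℝ → ℝ} (hU₀ : ContinuousOn U (Ici 0))
    (hU : ∀ r ∈ Ioi (0 : ℝ), HasDerivAt U
      ((4 * π / r ^ 2) * ∫ s in (0 : ℝ)..r, s ^ 2 * rhoRed φ E₀ l U s) r) :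
    (∃ R : ℝ, ∀ r, R ≤ r → rhoRed φ E₀ l U r = 0) ∧
      IntegrableOn (fun r => r ^ 2 * rhoRed φ E₀ l U r) (Ioi 0) := by
  have hfield : ∀ r, 0 < r → HasDerivAt U (enclosedMass (rhoRed φ E₀ l U) r / r ^ 2) r :=
    fun r hr => (hU r hr).congr_deriv (div_mul_eq_mul_div _ _ _)
  have hρ : ∀ r, 0 ≤ r → 0 ≤ rhoRed φ E₀ l U r :=
    fun _ => rhoRed_nonneg (by linarith) hnonneg hvanish
  have hUmono := monotoneOn_of_hasDerivAt_enclosedMass hU₀ hfield hρ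
  have hρint : ∀ r, 0 ≤ r → IntervalIntegrable (fun s => s ^ 2 * rhoRed φ E₀ l U s) volume 0 r :=
    fun _ => intervalIntegrable_sq_mul_rhoRed hl hnonneg hvanish hint hUmono
  obtain ⟨k', hk', hk'l⟩ := exists_between (max_lt hkl (by linarith : 0 < l + 3 / 2))
  obtain ⟨hkk', hk'₀⟩ := max_lt_iff.1 hk'
  obtain ⟨B, hB, hρlow⟩ := exists_mul_sub_rpow_le_rhoRed (by linarith) hl hb hnonneg hvanish hint
    (eventually_mul_rpow_le_of_exponent_le hb.le hkk'.le hlow) hUmono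
  obtain ⟨R, hR, hUR⟩ := exists_le_of_hasDerivAt_enclosedMass hB (by linarith) (by linarith)
    hUmono hfield hρint hρ hρlow
  have hzero : ∀ r, R ≤ r → rhoRed φ E₀ l U r = 0 := fun r hr =>
    rhoRed_eq_zero hvanish (hUR.trans (hUmono hR (hR.trans hr) hr))
  refine ⟨⟨R, hzero⟩, ?_⟩
  rw [← Ioc_union_Ioi_eq_Ioi hR]
  refine ((intervalIntegrable_iff_integrableOn_Ioc_of_le hR).1 (hρint R hR)).union
    (integrableOn_zero.congr_fun (fun r hr => ?_) measurableSet_Ioi)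
  simp [hzero r (le_of_lt hr)]

theorem main_nonrelativistic
    (k l E₀ c δ : ℝ) (hk : -1 < k) (hl : -(1/2 : ℝ) < l)
    (hkl : 0 < k + l + 1 / 2) (hkl' : k < l + 3 / 2)
    (hc : 0 < c) (hδ : 0 < δ)
    (φ : ℝ → ℝ) (hmeas : Measurable φ) (hnonneg : ∀ E, 0 ≤ φ E)
    (hvanish : ∀ E, E₀ ≤ E → φ E = 0)
    (hloc : ∀ K : Set ℝ, IsCompact K → K ⊆ Iio E₀ →
      ∃ C : ℝ, ∀ᵐ E : ℝ, E ∈ K → φ E ≤ C)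
    (hasymp : ∃ C ε : ℝ, 0 < ε ∧ ∀ E, E₀ - ε < E →
      |φ E - c * (max (E₀ - E) 0) ^ k| ≤ C * (max (E₀ - E) 0) ^ (k + δ))
    (U : ℝ → ℝ) (hUC1 : ContDiffOn ℝ 1 U (Ici 0))
    (hU : ∀ r ∈ Ioi (0 : ℝ), HasDerivAt U
      ((4 * Real.pi / r ^ 2) * ∫ s in (0:ℝ)..r, s ^ 2 * rhoRed φ E₀ l U s) r) :
    (∃ R : ℝ, ∀ r, R ≤ r → rhoRed φ E₀ l U r = 0) ∧
      IntegrableOn (fun r => r ^ 2 * rhoRed φ E₀ l U r) (Ioi 0) := by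
  have hφ := isEquivalent_rpow_of_error_bound hc.ne' hδ hasymp
  have hlocint := locallyIntegrableOn_of_ae_le_on_compacts isOpen_Iio.isLocallyClosed
    hmeas.aestronglyMeasurable hnonneg hloc
  exact main_nonrelativistic_general hl.le hkl' (half_pos hc) hnonneg hvanish
    (fun _ => intervalIntegrable_of_isBigO_rpow hk hlocint hφ.isBigO.of_const_mul_right)
    (eventually_half_mul_rpow_le hc.le hφ) hUC1.continuousOn hU
end

section
/- Let R ∈ (0, ∞], c > 0, and let x, y ∈ C¹((0,R)) with x > 0 and y > 0 on (0,R) satisfy r x'(r) = α(r) y(r) − x(r) + x(r)·(x(r) + γ₁(r) y(r))/(1 − γ₂(r) x(r)) and r y'(r) = y(r)·(c − β(r)·(x(r) + γ₁(r) y(r))/(1 − γ₂(r) x(r))) on (0,R), where α, β, γ₁, γ₂ ∈ C((0,R)) satisfy: inf_{r∈(0,R)} α(r) > 0; lim_{r→R} β(r) = β₀ for some β₀ ∈ (0, c); γ₁ ≥ 0 and γ₂ ≥ 0 with lim_{r→R} γ₁(r) = lim_{r→R} γ₂(r) = 0; and 1 − γ₂(r) x(r) > 0 for all r ∈ (0,R).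 Then R < ∞. -/
open MeasureTheory Real Set Filter

/-- The filter of real numbers `r` tending to `R ∈ (0,∞]` from the left. -/
noncomputable def leftLim (R : EReal) : Filter ℝ :=
  Filter.comap (fun r : ℝ => (r : EReal)) (nhdsWithin R (Iio R))

/-!
In the logarithmic time `t = log r` and with `z = (x + γ₁ y) / (1 - γ₂ x) ≥ x`, the system reads
`x' = α y - x + x z`, `y' = y (c - β z)`. If `R = ∞` then eventually `β ≤ b` with `0 ≤ b < c`, and
`z` cancels from the lower bound `b (z - 1) + (c - b z) = c - b > 0` for the derivative of
`b log x + log y`. Hence this quantity tends to `∞`, so that at every late time `x` or `y` is large.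
In either case `α y - x + x z ≥ x² / 2`, and `x` blows up in finite time, a contradiction.
-/

theorem tendsto_atTop_of_eventually_le_deriv {f f' : ℝ → ℝ} {k : ℝ} (hk : 0 < k)
    (hf : ∀ᶠ t in atTop, HasDerivAt f (f' t) t) (hf' : ∀ᶠ t in atTop, k ≤ f' t) :
    Tendsto f atTop atTop := by
  obtain ⟨t₀, ht₀⟩ := eventually_atTop.1 (hf.and hf')
  have linear_bound : ∀ t ≥ t₀, f t₀ + k * (t - t₀) ≤ f t := by
    intro t ht
    have hdiff : ∀ s ∈ interior (Ici t₀), HasDerivAt f (f' s) s := fun s hs =>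
      (ht₀ s (interior_subset hs)).1
    have := (convex_Ici t₀).mul_sub_le_image_sub_of_le_deriv
      (fun s hs => (ht₀ s hs).1.continuousAt.continuousWithinAt)
      (fun s hs => (hdiff s hs).differentiableAt.differentiableWithinAt)
      (fun s hs => (ht₀ s (interior_subset hs)).2.trans_eq (hdiff s hs).deriv.symm)
      t₀ self_mem_Ici t ht ht
    linarith
  have linear_tendsto : Tendsto (fun t => f t₀ + k * (t - t₀)) atTop atTop :=
    tendsto_atTop_add_const_left _ _
      ((tendsto_atTop_add_const_right _ (-t₀) tendsto_id).const_mul_atTop hk)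
  exact tendsto_atTop_mono' _ ((eventually_ge_atTop t₀).mono linear_bound) linear_tendsto

theorem not_eventually_mul_sq_le_deriv {u u' : ℝ → ℝ} {k : ℝ} (hk : 0 < k)
    (hu : ∀ᶠ t in atTop, HasDerivAt u (u' t) t) (hpos : ∀ᶠ t in atTop, 0 < u t) :
    ¬ ∀ᶠ t in atTop, k * u t ^ 2 ≤ u' t := by
  intro hgrowth
  have neg_inv_tendsto : Tendsto (fun t => -(u t)⁻¹) atTop atTop := by
    refine tendsto_atTop_of_eventually_le_deriv (f' := fun t => -(-u' t / u t ^ 2)) hk ?_ ?_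
    · filter_upwards [hu, hpos] with t ht hut
      exact (ht.inv hut.ne').neg
    · filter_upwards [hpos, hgrowth] with t hut ht
      rw [neg_div, neg_neg, le_div_iff₀ (by positivity)]
      exact ht
  obtain ⟨t, ht, hut⟩ := ((neg_inv_tendsto.eventually_gt_atTop 0).and hpos).exists
  exact lt_asymm (neg_pos.1 ht) (inv_pos.2 hut)

theorem eventually_lt_or_lt_of_tendsto_mul_log_add_log {ι : Type*} {l : Filter ι} {x y : ι → ℝ}
    {b : ℝ} (hb : 0 ≤ b) (hx : ∀ᶠ t in l, 0 < x t) (hy : ∀ᶠ t in l, 0 < y t)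
    (h : Tendsto (fun t => b * log (x t) + log (y t)) l atTop) (M N : ℝ) :
    ∀ᶠ t in l, M < x t ∨ N < y t := by
  filter_upwards [hx, hy, h.eventually_gt_atTop (b * log M + log N)] with t hxt hyt hlarge
  by_contra! ⟨hxM, hyN⟩
  refine hlarge.not_ge ?_
  gcongr

/-- The differential inequalities at time `t` to which Makino's system reduces in the variable
`t = log r`. The constants `a` and `b` are a lower bound for `α` and an upper bound for `β`, and `z`
stands for the quotient `(x + γ₁ y) / (1 - γ₂ x)`, of which only `x ≤ z` is retained. -/
structure IsMakinoSupersolutionAt (a b c : ℝ) (x y x' y' z : ℝ → ℝ) (t : ℝ) : Prop where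
  hasDerivAt_x : HasDerivAt x (x' t) t
  hasDerivAt_y : HasDerivAt y (y' t) t
  x_pos : 0 < x t
  y_pos : 0 < y t
  x_le_z : x t ≤ z t
  le_x' : a * y t - x t + x t * z t ≤ x' t
  le_y' : y t * (c - b * z t) ≤ y' t

namespace IsMakinoSupersolutionAt

variable {a b c t : ℝ} {x y x' y' z : ℝ → ℝ}

theorem hasDerivAt_mul_log_add_log (h : IsMakinoSupersolutionAt a b c x y x' y' z t) :
    HasDerivAt (fun s => b * log (x s) + log (y s)) (b * (x' t / x t) + y' t / y t) t :=
  ((h.hasDerivAt_x.log h.x_pos.ne').const_mul b).add (h.hasDerivAt_y.log h.y_pos.ne')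

theorem sub_le_deriv_mul_log_add_log (ha : 0 ≤ a) (hb : 0 ≤ b)
    (h : IsMakinoSupersolutionAt a b c x y x' y' z t) :
    c - b ≤ b * (x' t / x t) + y' t / y t := by
  have hx : z t - 1 ≤ x' t / x t := by
    rw [le_div_iff₀ h.x_pos]
    linarith [h.le_x', mul_nonneg ha h.y_pos.le]
  have hy : c - b * z t ≤ y' t / y t := by
    rw [le_div_iff₀' h.y_pos]
    exact h.le_y'
  calc c - b = b * (z t - 1) + (c - b * z t) := by ring
    _ ≤ b * (x' t / x t) + y' t / y t := by gcongr

theorem half_mul_sq_le_x' (ha : 0 < a) (h : IsMakinoSupersolutionAt a b c x y x' y' z t)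
    (hlarge : 2 < x t ∨ 1 / a < y t) : 1 / 2 * x t ^ 2 ≤ x' t := by
  have hxz : x t * x t ≤ x t * z t := mul_le_mul_of_nonneg_left h.x_le_z h.x_pos.le
  suffices x t ≤ a * y t + x t ^ 2 / 2 by linarith [h.le_x']
  rcases hlarge with hx | hy
  · have hay : 0 < a * y t := mul_pos ha h.y_pos
    nlinarith
  · have hay : 1 < a * y t := (div_lt_iff₀' ha).1 hy
    linarith [sq_nonneg (x t - 1)]

theorem not_eventually_atTop (ha : 0 < a) (hb : 0 ≤ b) (hbc : b < c) :
    ¬ ∀ᶠ t in atTop, IsMakinoSupersolutionAt a b c x y x' y' z t := by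
  intro h
  have hx_pos : ∀ᶠ t in atTop, 0 < x t := h.mono fun _ ht => ht.x_pos
  have hy_pos : ∀ᶠ t in atTop, 0 < y t := h.mono fun _ ht => ht.y_pos
  have log_tendsto : Tendsto (fun t => b * log (x t) + log (y t)) atTop atTop :=
    tendsto_atTop_of_eventually_le_deriv (sub_pos.2 hbc)
      (h.mono fun _ ht => ht.hasDerivAt_mul_log_add_log)
      (h.mono fun _ ht => ht.sub_le_deriv_mul_log_add_log ha.le hb)
  have x_or_y_large : ∀ᶠ t in atTop, 2 < x t ∨ 1 / a < y t :=
    eventually_lt_or_lt_of_tendsto_mul_log_add_log hb hx_pos hy_pos log_tendsto 2 (1 / a)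
  refine not_eventually_mul_sq_le_deriv one_half_pos (h.mono fun _ ht => ht.hasDerivAt_x) hx_pos ?_
  filter_upwards [h, x_or_y_large] with t ht hlarge
  exact ht.half_mul_sq_le_x' ha hlarge

theorem comp_exp {α β : ℝ} (hx : HasDerivAt x (x' (exp t)) (exp t))
    (hy : HasDerivAt y (y' (exp t)) (exp t)) (hxpos : 0 < x (exp t)) (hypos : 0 < y (exp t))
    (hxz : x (exp t) ≤ z (exp t)) (hα : a ≤ α) (hβ : β ≤ b)
    (hx' : exp t * x' (exp t) = α * y (exp t) - x (exp t) + x (exp t) * z (exp t))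
    (hy' : exp t * y' (exp t) = y (exp t) * (c - β * z (exp t))) :
    IsMakinoSupersolutionAt a b c (x ∘ exp) (y ∘ exp)
      (fun s => exp s * x' (exp s)) (fun s => exp s * y' (exp s)) (z ∘ exp) t where
  hasDerivAt_x := by
    simpa only [mul_comm] using hx.comp t (hasDerivAt_exp t)
  hasDerivAt_y := by
    simpa only [mul_comm] using hy.comp t (hasDerivAt_exp t)
  x_pos := hxpos
  y_pos := hypos
  x_le_z := hxz
  le_x' := by
    rw [hx']
    simp only [Function.comp_apply]
    gcongr
  le_y' := by
    have hz : 0 ≤ z (exp t) := hxpos.le.trans hxz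
    rw [hy']
    simp only [Function.comp_apply]
    gcongr

end IsMakinoSupersolutionAt

theorem le_add_div_one_sub_mul {x p q : ℝ} (hp : 0 ≤ p) (hq : 0 ≤ q) (h : 0 < 1 - q * x) :
    x ≤ (x + p) / (1 - q * x) := by
  rw [le_div_iff₀ h]
  linarith [mul_nonneg hq (mul_self_nonneg x)]

theorem leftLim_top : leftLim ⊤ = atTop := by
  rw [leftLim, Iio_top, EReal.nhdsWithin_top, comap_map EReal.coe_injective]

theorem makino_lemma_general {R : EReal} {c : ℝ} (hc : 0 < c)
    {x y x' y' α β γ₁ γ₂ : ℝ → ℝ} {D : Set ℝ} (hD : D = {r : ℝ | 0 < r ∧ (r : EReal) < R})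
    (hx : ∀ r ∈ D, HasDerivAt x (x' r) r) (hy : ∀ r ∈ D, HasDerivAt y (y' r) r)
    (hxpos : ∀ r ∈ D, 0 < x r) (hypos : ∀ r ∈ D, 0 < y r)
    (heq1 : ∀ r ∈ D, r * x' r =
      α r * y r - x r + x r * (x r + γ₁ r * y r) / (1 - γ₂ r * x r))
    (heq2 : ∀ r ∈ D, r * y' r =
      y r * (c - β r * (x r + γ₁ r * y r) / (1 - γ₂ r * x r)))
    (hα : ∃ a > 0, ∀ᶠ r in leftLim R ⊓ 𝓟 D, a ≤ α r)
    (hβ : ∃ b < c, ∀ᶠ r in leftLim R ⊓ 𝓟 D, β r ≤ b)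
    (hγ₁nonneg : ∀ r ∈ D, 0 ≤ γ₁ r) (hγ₂nonneg : ∀ r ∈ D, 0 ≤ γ₂ r)
    (hdenom : ∀ r ∈ D, 0 < 1 - γ₂ r * x r) :
    R < ⊤ := by
  by_contra hR
  obtain rfl : R = ⊤ := not_lt_top_iff.1 hR
  obtain ⟨a, ha, haα⟩ := hα
  obtain ⟨b, hbc, hβb⟩ := hβ
  have mem_D : ∀ r, 0 < r → r ∈ D := fun r hr => hD ▸ ⟨hr, EReal.coe_lt_top r⟩
  have leftLim_inf : leftLim ⊤ ⊓ 𝓟 D = atTop := by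
    rw [leftLim_top, inf_eq_left, le_principal_iff]
    exact (eventually_gt_atTop 0).mono mem_D
  rw [leftLim_inf] at haα hβb
  let z : ℝ → ℝ := fun r => (x r + γ₁ r * y r) / (1 - γ₂ r * x r)
  have supersolution : ∀ᶠ t in atTop, IsMakinoSupersolutionAt a (max b 0) c (x ∘ exp) (y ∘ exp)
      (fun s => exp s * x' (exp s)) (fun s => exp s * y' (exp s)) (z ∘ exp) t := by
    filter_upwards [tendsto_exp_atTop.eventually haα, tendsto_exp_atTop.eventually hβb]
      with t hαt hβt
    have hr : exp t ∈ D := mem_D _ (exp_pos t)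
    have hxz : x (exp t) ≤ z (exp t) := le_add_div_one_sub_mul
      (mul_nonneg (hγ₁nonneg _ hr) (hypos _ hr).le) (hγ₂nonneg _ hr) (hdenom _ hr)
    exact .comp_exp (hx _ hr) (hy _ hr) (hxpos _ hr) (hypos _ hr) hxz hαt
      (hβt.trans (le_max_left b 0))
      (by rw [heq1 _ hr, mul_div_assoc]) (by rw [heq2 _ hr, mul_div_assoc])
  exact IsMakinoSupersolutionAt.not_eventually_atTop ha (le_max_right b 0) (max_lt hbc hc)
    supersolution

theorem makino_lemma
    (R : EReal) (hR : 0 < R) (c : ℝ) (hc : 0 < c)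
    (x y x' y' α β γ₁ γ₂ : ℝ → ℝ)
    (D : Set ℝ) (hD : D = {r : ℝ | 0 < r ∧ (r : EReal) < R})
    (hx : ∀ r ∈ D, HasDerivAt x (x' r) r)
    (hy : ∀ r ∈ D, HasDerivAt y (y' r) r)
    (hx'c : ContinuousOn x' D) (hy'c : ContinuousOn y' D)
    (hxpos : ∀ r ∈ D, 0 < x r) (hypos : ∀ r ∈ D, 0 < y r)
    (hαc : ContinuousOn α D) (hβc : ContinuousOn β D)
    (hγ₁c : ContinuousOn γ₁ D) (hγ₂c : ContinuousOn γ₂ D)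
    (heq1 : ∀ r ∈ D, r * x' r =
      α r * y r - x r + x r * (x r + γ₁ r * y r) / (1 - γ₂ r * x r))
    (heq2 : ∀ r ∈ D, r * y' r =
      y r * (c - β r * (x r + γ₁ r * y r) / (1 - γ₂ r * x r)))
    (hα : ∃ a : ℝ, 0 < a ∧ ∀ r ∈ D, a ≤ α r)
    (β₀ : ℝ) (hβ₀pos : 0 < β₀) (hβ₀c : β₀ < c)
    (hβlim : Tendsto β (leftLim R ⊓ Filter.principal D) (nhds β₀))
    (hγ₁nonneg : ∀ r ∈ D, 0 ≤ γ₁ r) (hγ₂nonneg : ∀ r ∈ D, 0 ≤ γ₂ r)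
    (hγ₁lim : Tendsto γ₁ (leftLim R ⊓ Filter.principal D) (nhds 0))
    (hγ₂lim : Tendsto γ₂ (leftLim R ⊓ Filter.principal D) (nhds 0))
    (hdenom : ∀ r ∈ D, 0 < 1 - γ₂ r * x r) :
    R < ⊤ := by
  obtain ⟨b, hβ₀b, hbc⟩ := exists_between hβ₀c
  exact makino_lemma_general hc hD hx hy hxpos hypos heq1 heq2
    (hα.imp fun _ ⟨ha, haα⟩ => ⟨ha, eventually_inf_principal.2 (.of_forall haα)⟩)
    ⟨b, hbc, hβlim.eventually_le_const hβ₀b⟩ hγ₁nonneg hγ₂nonneg hdenom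
end

section
/- Let R ∈ (0, ∞] and let x ∈ C¹((0,R)) with x > 0 on (0,R) satisfy the differential inequality r x'(r) ≥ x(r)(x(r) − 1) for all r ∈ (0,R). If there exists r* ∈ (0,R) with x(r*) > 1, then x(r) > 1 for all r ∈ [r*, R), and R ≤ r* · x(r*)/(x(r*) − 1). -/
open MeasureTheory Real Set

/-!
Put `u r = (1 - 1 / x r) / r`. Its derivative `(r x' - x (x - 1)) / (r x)²` is nonnegative, so `u`
is nondecreasing wherever `x` does not vanish. If `x r* > 1`, the inequality forces `x' > 0`
whenever `x` returns to the level `x r*`, so `x` never drops below that level. Hence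
`u r* ≤ u r < 1 / r` for every `r ≥ r*` in the domain, that is,
`r < 1 / u r* = r* x r* / (x r* - 1)`.
-/

theorem monotoneOn_Icc_of_deriv_right_nonneg {f f' : ℝ → ℝ} {a b : ℝ}
    (hf : ContinuousOn f (Icc a b)) (hf' : ∀ r ∈ Ico a b, HasDerivWithinAt f (f' r) (Ici r) r)
    (hf'_nonneg : ∀ r ∈ Ico a b, 0 ≤ f' r) : MonotoneOn f (Icc a b) := by
  intro c hc d hd hcd
  have hIco : Ico c d ⊆ Ico a b := Ico_subset_Ico hc.1 hd.2
  exact image_le_of_deriv_right_le_deriv_boundary (f := fun _ ↦ f c) continuousOn_const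
    (fun r _ ↦ hasDerivWithinAt_const r _ _) le_rfl (hf.mono (Icc_subset_Icc hc.1 hd.2))
    (fun r hr ↦ hf' r (hIco hr)) (fun r hr ↦ hf'_nonneg r (hIco hr)) (right_mem_Icc.2 hcd)

theorem hasDerivWithinAt_one_sub_inv_div {𝕜 : Type*} [NontriviallyNormedField 𝕜] {x : 𝕜 → 𝕜}
    {x' r : 𝕜} {s : Set 𝕜} (hx : HasDerivWithinAt x x' s r) (hr : r ≠ 0) (hxr : x r ≠ 0) :
    HasDerivWithinAt (fun t ↦ (1 - (x t)⁻¹) / t)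
      ((r * x' - x r * (x r - 1)) / (x r * r) ^ 2) s r := by
  refine (((hx.fun_inv hxr).const_sub 1).fun_div (hasDerivWithinAt_id r s) hr).congr_deriv ?_
  simp only [id]
  field_simp

section Riccati

variable {x x' : ℝ → ℝ} {a b : ℝ}

theorem monotoneOn_one_sub_inv_div_of_riccati (h0 : 0 ∉ Icc a b) (hxc : ContinuousOn x (Icc a b))
    (hx : ∀ r ∈ Ico a b, HasDerivWithinAt x (x' r) (Ici r) r)
    (hineq : ∀ r ∈ Ico a b, x r * (x r - 1) ≤ r * x' r) (hx0 : ∀ r ∈ Icc a b, x r ≠ 0) :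
    MonotoneOn (fun r ↦ (1 - (x r)⁻¹) / r) (Icc a b) := by
  have hr0 : ∀ r ∈ Icc a b, r ≠ 0 := fun r hr ↦ ne_of_mem_of_not_mem hr h0
  exact monotoneOn_Icc_of_deriv_right_nonneg
    ((continuousOn_const.sub (hxc.inv₀ hx0)).div continuousOn_id hr0)
    (fun r hr ↦ hasDerivWithinAt_one_sub_inv_div (hx r hr) (hr0 r (Ico_subset_Icc_self hr))
      (hx0 r (Ico_subset_Icc_self hr)))
    (fun r hr ↦ div_nonneg (sub_nonneg.2 (hineq r hr)) (sq_nonneg _))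

theorem apply_left_le_of_riccati (ha : 0 < a) (hxc : ContinuousOn x (Icc a b))
    (hx : ∀ r ∈ Ico a b, HasDerivWithinAt x (x' r) (Ici r) r)
    (hineq : ∀ r ∈ Ico a b, x r * (x r - 1) ≤ r * x' r) (hxa : 1 < x a) :
    ∀ r ∈ Icc a b, x a ≤ x r := by
  have hx'_pos : ∀ r ∈ Ico a b, x a = x r → 0 < x' r := by
    intro r hr hxr
    have hprod : 0 < x r * (x r - 1) := by
      rw [← hxr]
      exact mul_pos (one_pos.trans hxa) (sub_pos.2 hxa)
    exact pos_of_mul_pos_right (hprod.trans_le (hineq r hr)) (ha.trans_le hr.1).le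
  intro r hr
  exact image_le_of_deriv_right_lt_deriv_boundary' (f := fun _ ↦ x a) continuousOn_const
    (fun r _ ↦ hasDerivWithinAt_const r _ _) le_rfl hxc hx hx'_pos hr

theorem lt_mul_div_sub_one_of_riccati (ha : 0 < a) (hab : a ≤ b) (hxc : ContinuousOn x (Icc a b))
    (hx : ∀ r ∈ Ico a b, HasDerivWithinAt x (x' r) (Ici r) r)
    (hineq : ∀ r ∈ Ico a b, x r * (x r - 1) ≤ r * x' r) (hxa : 1 < x a) :
    b < a * x a / (x a - 1) := by
  have hb : 0 < b := ha.trans_le hab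
  have hxa0 : 0 < x a := one_pos.trans hxa
  have hsub : 0 < x a - 1 := sub_pos.2 hxa
  have hxpos : ∀ r ∈ Icc a b, 0 < x r := fun r hr ↦
    hxa0.trans_le (apply_left_le_of_riccati ha hxc hx hineq hxa r hr)
  have hmono : MonotoneOn (fun r ↦ (1 - (x r)⁻¹) / r) (Icc a b) :=
    monotoneOn_one_sub_inv_div_of_riccati (fun h ↦ ha.not_ge h.1) hxc hx hineq
      fun r hr ↦ (hxpos r hr).ne'
  have hlt : (a * x a / (x a - 1))⁻¹ < b⁻¹ := by
    calc (a * x a / (x a - 1))⁻¹ = (1 - (x a)⁻¹) / a := by field_simp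
      _ ≤ (1 - (x b)⁻¹) / b := hmono (left_mem_Icc.2 hab) (right_mem_Icc.2 hab) hab
      _ < 1 / b := by
        gcongr
        exact sub_lt_self 1 (inv_pos.2 (hxpos b (right_mem_Icc.2 hab)))
      _ = b⁻¹ := one_div b
  exact (inv_lt_inv₀ (by positivity) hb).1 hlt

end Riccati

theorem riccati_blowup_general {R : EReal} {x x' : ℝ → ℝ} {rstar : ℝ}
    (hxc : ContinuousOn x {r : ℝ | rstar ≤ r ∧ (r : EReal) < R})
    (hx : ∀ r : ℝ, rstar ≤ r → (r : EReal) < R → HasDerivWithinAt x (x' r) (Ici r) r)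
    (hineq : ∀ r : ℝ, rstar ≤ r → (r : EReal) < R → x r * (x r - 1) ≤ r * x' r)
    (hrstar0 : 0 < rstar) (hxstar : 1 < x rstar) :
    (∀ r : ℝ, rstar ≤ r → (r : EReal) < R → 1 < x r) ∧
      R ≤ ((rstar * x rstar / (x rstar - 1) : ℝ) : EReal) := by
  have hlt : ∀ {b r : ℝ}, (b : EReal) < R → r ≤ b → (r : EReal) < R := fun hb hr ↦
    (EReal.coe_le_coe_iff.2 hr).trans_lt hb
  have hxc_Icc : ∀ {b : ℝ}, (b : EReal) < R → ContinuousOn x (Icc rstar b) := fun hb ↦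
    hxc.mono fun _ hr ↦ ⟨hr.1, hlt hb hr.2⟩
  constructor
  · intro b hab hb
    exact hxstar.trans_le <| apply_left_le_of_riccati hrstar0 (hxc_Icc hb)
      (fun r hr ↦ hx r hr.1 (hlt hb hr.2.le)) (fun r hr ↦ hineq r hr.1 (hlt hb hr.2.le))
      hxstar b (right_mem_Icc.2 hab)
  · by_contra! hb
    have hab : rstar ≤ rstar * x rstar / (x rstar - 1) := by
      rw [le_div_iff₀ (sub_pos.2 hxstar)]
      linarith
    exact lt_irrefl _ <| lt_mul_div_sub_one_of_riccati hrstar0 hab (hxc_Icc hb)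
      (fun r hr ↦ hx r hr.1 (hlt hb hr.2.le)) (fun r hr ↦ hineq r hr.1 (hlt hb hr.2.le)) hxstar

theorem riccati_blowup
    (R : EReal) (hR : 0 < R) (x x' : ℝ → ℝ)
    (hx : ∀ r : ℝ, 0 < r → (r : EReal) < R → HasDerivAt x (x' r) r)
    (hx'c : ContinuousOn x' {r : ℝ | 0 < r ∧ (r : EReal) < R})
    (hxpos : ∀ r : ℝ, 0 < r → (r : EReal) < R → 0 < x r)
    (hineq : ∀ r : ℝ, 0 < r → (r : EReal) < R → x r * (x r - 1) ≤ r * x' r)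
    (rstar : ℝ) (hrstar0 : 0 < rstar) (hrstarR : (rstar : EReal) < R)
    (hxstar : 1 < x rstar) :
    (∀ r : ℝ, rstar ≤ r → (r : EReal) < R → 1 < x r) ∧
      R ≤ ((rstar * x rstar / (x rstar - 1) : ℝ) : EReal) :=
  riccati_blowup_general
    (fun r hr ↦ (hx r (hrstar0.trans_le hr.1) hr.2).continuousAt.continuousWithinAt)
    (fun r hr hrR ↦ (hx r (hrstar0.trans_le hr) hrR).hasDerivWithinAt)
    (fun r hr ↦ hineq r (hrstar0.trans_le hr)) hrstar0 hxstar
end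

section
/- Let E₀ ∈ ℝ, c > 0, δ > 0, k > −1, m > −1 with k + m + 1 > 0, and let φ : ℝ → [0,∞) be measurable with φ(E) = 0 for E ≥ E₀ and φ(E) = c(E₀ − E)₊^k + O((E₀ − E)₊^{k+δ}) as E → E₀−. Then g_m(u) = ∫_u^{E₀} φ(E)(E − u)^m dE satisfies g_m(u) = c · c_{k,m} (E₀ − u)^{k+m+1} + O((E₀ − u)^{k+m+δ+1}) as u → E₀−, where c_{k,m} = ∫₀¹ s^k (1−s)^m ds. -/
open MeasureTheory Real Set

open Filter Asymptotics
open scoped Topology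

/-!
The map `φ ↦ g_m` is linear and has a positive kernel, and the substitution
`E = E₀ - (E₀ - u) s` shows that it sends `(E₀ - E) ^ k` to exactly
`c_{k,m} (E₀ - u) ^ (k + m + 1)`. Positivity turns a bound `O((E₀ - E) ^ l)` on the remainder of
`φ` into the bound `O((E₀ - u) ^ (l + m + 1))` on its image.
-/

section LeftNeighborhoods

theorem eventually_nhdsLT_forall_mem_Ioo {α : Type*} [TopologicalSpace α] [LinearOrder α]
    [OrderTopology α] [NoMinOrder α] {b : α} {p : α → Prop} (hp : ∀ᶠ x in 𝓝[<] b, p x) :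
    ∀ᶠ u in 𝓝[<] b, ∀ x ∈ Ioo u b, p x := by
  obtain ⟨a, hab, ha⟩ := (nhdsLT_basis b).eventually_iff.1 hp
  filter_upwards [Ioo_mem_nhdsLT hab] with u hu x hx
  exact ha ⟨hu.1.trans hx.1, hx.2⟩

theorem isBigO_rpow_nhdsLT_iff {F : Type*} [Norm F] {b r : ℝ} {f : ℝ → F} :
    f =O[𝓝[<] b] (fun x => (b - x) ^ r) ↔
      ∃ C ε : ℝ, 0 < ε ∧ ∀ x, b - ε < x → x < b → ‖f x‖ ≤ C * (b - x) ^ r := by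
  have norm_rpow {x : ℝ} (hx : x < b) : ‖(b - x) ^ r‖ = (b - x) ^ r :=
    norm_of_nonneg (rpow_nonneg (sub_nonneg.2 hx.le) r)
  rw [isBigO_iff]
  refine exists_congr fun C => ?_
  rw [(nhdsLT_basis b).eventually_iff]
  constructor
  · rintro ⟨a, hab, ha⟩
    refine ⟨b - a, sub_pos.2 hab, fun x hax hxb => ?_⟩
    rw [sub_sub_cancel] at hax
    simpa only [norm_rpow hxb] using ha ⟨hax, hxb⟩
  · rintro ⟨ε, hε, h⟩
    refine ⟨b - ε, sub_lt_self b hε, fun x hx => ?_⟩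
    simpa only [norm_rpow hx.2] using h x hx.1 hx.2

end LeftNeighborhoods

section BetaKernel

/-- The constant `c_{k,m}` of the expansion of `g_m`. The exponents are not shifted by one as in
Euler's convention: this is `B(k + 1, m + 1)`. -/
noncomputable def betaConstant (k m : ℝ) : ℝ :=
  ∫ s in (0 : ℝ)..1, s ^ k * (1 - s) ^ m

variable {a b k m : ℝ}

theorem intervalIntegrable_rpow_mul_one_sub_rpow (hk : -1 < k) (hm : -1 < m) :
    IntervalIntegrable (fun s : ℝ => s ^ k * (1 - s) ^ m) volume 0 1 := by
  have hbeta := (Complex.betaIntegral_convergent (u := ((k + 1 : ℝ) : ℂ)) (v := ((m + 1 : ℝ) : ℂ))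
    (by rw [Complex.ofReal_re]; linarith) (by rw [Complex.ofReal_re]; linarith)).norm
  refine hbeta.congr_uIoo fun s hs => ?_
  rw [uIoo_of_le zero_le_one] at hs
  have norm_one_sub_cpow (z : ℂ) : ‖(1 - (s : ℂ)) ^ z‖ = (1 - s) ^ z.re := by
    rw [← Complex.norm_cpow_eq_rpow_re_of_pos (sub_pos.2 hs.2), Complex.ofReal_sub,
      Complex.ofReal_one]
  simp only [norm_mul, Complex.norm_cpow_eq_rpow_re_of_pos hs.1, norm_one_sub_cpow,
    Complex.sub_re, Complex.ofReal_re, Complex.one_re, add_sub_cancel_right]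

theorem sub_rpow_mul_sub_rpow_affine (hab : a < b) {s : ℝ} (hs : s ∈ Ioo (0 : ℝ) 1) :
    (b - (b - (b - a) * s)) ^ k * (b - (b - a) * s - a) ^ m =
      (b - a) ^ (k + m) * (s ^ k * (1 - s) ^ m) := by
  have hL : 0 < b - a := sub_pos.2 hab
  have hb : b - (b - (b - a) * s) = (b - a) * s := by ring
  have ha : b - (b - a) * s - a = (b - a) * (1 - s) := by ring
  rw [hb, ha, mul_rpow hL.le hs.1.le, mul_rpow hL.le (sub_nonneg.2 hs.2.le), rpow_add hL]
  ring

theorem intervalIntegrable_sub_rpow_mul_sub_rpow (hab : a < b) (hk : -1 < k) (hm : -1 < m) :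
    IntervalIntegrable (fun x => (b - x) ^ k * (x - a) ^ m) volume a b := by
  have hL : b - a ≠ 0 := (sub_pos.2 hab).ne'
  have hunit : IntervalIntegrable
      (fun s => (b - (b - (b - a) * s)) ^ k * (b - (b - a) * s - a) ^ m) volume 0 1 := by
    refine ((intervalIntegrable_rpow_mul_one_sub_rpow hk hm).const_mul
      ((b - a) ^ (k + m))).congr_uIoo fun s hs => ?_
    rw [uIoo_of_le zero_le_one] at hs
    exact (sub_rpow_mul_sub_rpow_affine hab hs).symm
  have hreflected : IntervalIntegrable
      (fun t => (b - (b - t)) ^ k * (b - t - a) ^ m) volume 0 (b - a) := by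
    rw [← IntervalIntegrable.comp_mul_left_iff hL, zero_div, div_self hL]
    exact hunit
  simpa only [sub_sub_cancel, sub_zero] using (hreflected.comp_sub_left b).symm

theorem integral_sub_rpow_mul_sub_rpow (hab : a < b) :
    ∫ x in a..b, (b - x) ^ k * (x - a) ^ m = betaConstant k m * (b - a) ^ (k + m + 1) := by
  have hL : 0 < b - a := sub_pos.2 hab
  calc ∫ x in a..b, (b - x) ^ k * (x - a) ^ m
      = (b - a) * ∫ s in (0 : ℝ)..1,
          (b - (b - (b - a) * s)) ^ k * (b - (b - a) * s - a) ^ m := by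
        rw [intervalIntegral.mul_integral_comp_sub_mul
          (f := fun x => (b - x) ^ k * (x - a) ^ m), mul_one, mul_zero, sub_sub_cancel, sub_zero]
    _ = (b - a) * ((b - a) ^ (k + m) * betaConstant k m) := by
        rw [intervalIntegral.integral_congr_Ioo_of_le zero_le_one
          fun s hs => sub_rpow_mul_sub_rpow_affine hab hs,
          intervalIntegral.integral_const_mul, betaConstant]
    _ = betaConstant k m * (b - a) ^ (k + m + 1) := by
        rw [rpow_add_one hL.ne']
        ring

end BetaKernel

variable {F : Type*} [NormedAddCommGroup F] [NormedSpace ℝ F]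

section DensityFunctional

/-- The density functional `g_m` of the energy profile `φ` with cut-off energy `E₀`. The weight
stands on the left as a scalar so that `φ` may take values in a normed space. -/
noncomputable def densityFunctional (m E₀ : ℝ) (φ : ℝ → F) (u : ℝ) : F :=
  ∫ E in u..E₀, (E - u) ^ m • φ E

variable {E₀ u k l m C : ℝ} {φ ψ : ℝ → F} {c : F}

theorem intervalIntegrable_rpow_smul_rpow_smul (hu : u < E₀) (hk : -1 < k) (hm : -1 < m) (c : F) :
    IntervalIntegrable (fun E => (E - u) ^ m • (E₀ - E) ^ k • c) volume u E₀ := by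
  simpa only [smul_smul, mul_comm] using
    (intervalIntegrable_sub_rpow_mul_sub_rpow hu hk hm).smul_continuousOn
      (continuousOn_const (c := c))

theorem densityFunctional_rpow_smul [CompleteSpace F] (hu : u < E₀) :
    densityFunctional m E₀ (fun E => (E₀ - E) ^ k • c) u =
      (betaConstant k m * (E₀ - u) ^ (k + m + 1)) • c := by
  simp only [densityFunctional, smul_smul, mul_comm ((_ - u) ^ m),
    intervalIntegral.integral_smul_const, integral_sub_rpow_mul_sub_rpow hu]

theorem ae_norm_rpow_smul_le (hψ : ∀ E ∈ Ioo u E₀, ‖ψ E‖ ≤ C * (E₀ - E) ^ l) :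
    ∀ᵐ E ∂volume.restrict (Ioc u E₀),
      ‖(E - u) ^ m • ψ E‖ ≤ C * ((E₀ - E) ^ l * (E - u) ^ m) := by
  rw [← restrict_Ioo_eq_restrict_Ioc]
  refine ae_restrict_of_forall_mem measurableSet_Ioo fun E hE => ?_
  have hweight : 0 ≤ (E - u) ^ m := rpow_nonneg (sub_nonneg.2 hE.1.le) m
  calc ‖(E - u) ^ m • ψ E‖ = ‖ψ E‖ * (E - u) ^ m := by
        rw [norm_smul, norm_of_nonneg hweight, mul_comm]
    _ ≤ C * (E₀ - E) ^ l * (E - u) ^ m := mul_le_mul_of_nonneg_right (hψ E hE) hweight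
    _ = C * ((E₀ - E) ^ l * (E - u) ^ m) := mul_assoc _ _ _

theorem norm_densityFunctional_le (hu : u < E₀) (hl : -1 < l) (hm : -1 < m)
    (hψ : ∀ E ∈ Ioo u E₀, ‖ψ E‖ ≤ C * (E₀ - E) ^ l) :
    ‖densityFunctional m E₀ ψ u‖ ≤ C * betaConstant l m * (E₀ - u) ^ (l + m + 1) :=
  calc ‖densityFunctional m E₀ ψ u‖ ≤ ∫ E in u..E₀, C * ((E₀ - E) ^ l * (E - u) ^ m) :=
        intervalIntegral.norm_integral_le_of_norm_le hu.le
          ((ae_restrict_iff' measurableSet_Ioc).1 (ae_norm_rpow_smul_le hψ))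
          ((intervalIntegrable_sub_rpow_mul_sub_rpow hu hl hm).const_mul C)
    _ = C * betaConstant l m * (E₀ - u) ^ (l + m + 1) := by
        rw [intervalIntegral.integral_const_mul, integral_sub_rpow_mul_sub_rpow hu, mul_assoc]

theorem isBigO_densityFunctional (hl : -1 < l) (hm : -1 < m)
    (hψ : ψ =O[𝓝[<] E₀] fun E => (E₀ - E) ^ l) :
    densityFunctional m E₀ ψ =O[𝓝[<] E₀] fun u => (E₀ - u) ^ (l + m + 1) := by
  obtain ⟨C, ε, hε, hC⟩ := isBigO_rpow_nhdsLT_iff.1 hψ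
  exact isBigO_rpow_nhdsLT_iff.2 ⟨C * betaConstant l m, ε, hε, fun u hεu hu =>
    norm_densityFunctional_le hu hl hm fun E hE => hC E (hεu.trans hE.1) hE.2⟩

theorem eventually_intervalIntegrable_rpow_smul (hl : -1 < l) (hm : -1 < m)
    (hmeas : StronglyMeasurableAtFilter ψ (𝓝[<] E₀))
    (hψ : ψ =O[𝓝[<] E₀] fun E => (E₀ - E) ^ l) :
    ∀ᶠ u in 𝓝[<] E₀, IntervalIntegrable (fun E => (E - u) ^ m • ψ E) volume u E₀ := by
  obtain ⟨C, ε, hε, hC⟩ := isBigO_rpow_nhdsLT_iff.1 hψ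
  obtain ⟨s, hs, hψs⟩ := hmeas
  filter_upwards [Ioo_mem_nhdsLT (sub_lt_self E₀ hε), eventually_nhdsLT_forall_mem_Ioo hs]
    with u hu hus
  refine ((intervalIntegrable_sub_rpow_mul_sub_rpow hu.2 hl hm).const_mul C).mono_fun' ?_ ?_ <;>
    rw [uIoc_of_le hu.2.le]
  · rw [← restrict_Ioo_eq_restrict_Ioc]
    exact (Measurable.aestronglyMeasurable (by fun_prop)).smul (hψs.mono_set hus)
  · exact ae_norm_rpow_smul_le fun E hE => hC E (hu.1.trans hE.1) hE.2

end DensityFunctional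

theorem gm_asymptotics_general [CompleteSpace F] {E₀ k l m : ℝ} {φ : ℝ → F} {c : F}
    (hk : -1 < k) (hl : -1 < l) (hm : -1 < m)
    (hmeas : StronglyMeasurableAtFilter φ (𝓝[<] E₀))
    (hasymp : (fun E => φ E - (E₀ - E) ^ k • c) =O[𝓝[<] E₀] fun E => (E₀ - E) ^ l) :
    (fun u => densityFunctional m E₀ φ u - (betaConstant k m * (E₀ - u) ^ (k + m + 1)) • c)
      =O[𝓝[<] E₀] fun u => (E₀ - u) ^ (l + m + 1) := by
  refine (isBigO_densityFunctional hl hm hasymp).congr' ?_ .rfl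
  have hmeas_rem : StronglyMeasurableAtFilter (fun E => φ E - (E₀ - E) ^ k • c) (𝓝[<] E₀) := by
    obtain ⟨s, hs, hφs⟩ := hmeas
    exact ⟨s, hs, hφs.sub ((Measurable.aestronglyMeasurable (by fun_prop)).smul_const c)⟩
  filter_upwards [eventually_intervalIntegrable_rpow_smul hl hm hmeas_rem hasymp,
    self_mem_nhdsWithin] with u hrem hu
  have hpow := intervalIntegrable_rpow_smul_rpow_smul hu hk hm c
  have hφ : IntervalIntegrable (fun E => (E - u) ^ m • φ E) volume u E₀ := by
    simpa only [smul_sub, sub_add_cancel] using hrem.add hpow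
  rw [← densityFunctional_rpow_smul hu]
  simp only [densityFunctional, smul_sub, intervalIntegral.integral_sub hφ hpow]

theorem gm_asymptotics
    (E₀ c δ k m : ℝ) (hc : 0 < c) (hδ : 0 < δ) (hk : -1 < k) (hm : -1 < m)
    (hkm : 0 < k + m + 1)
    (φ : ℝ → ℝ) (hmeas : Measurable φ)
    (hnonneg : ∀ E, 0 ≤ φ E)
    (hvanish : ∀ E, E₀ ≤ E → φ E = 0)
    (hasymp : ∃ C ε : ℝ, 0 < ε ∧ ∀ E, E₀ - ε < E →
      |φ E - c * (max (E₀ - E) 0) ^ k| ≤ C * (max (E₀ - E) 0) ^ (k + δ)) :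
    ∃ C ε : ℝ, 0 < ε ∧ ∀ u, E₀ - ε < u → u < E₀ →
      |(∫ E in u..E₀, φ E * (E - u) ^ m) -
          c * (∫ s in (0:ℝ)..1, s ^ k * (1 - s) ^ m) * (E₀ - u) ^ (k + m + 1)| ≤
        C * (E₀ - u) ^ (k + m + δ + 1) := by
  obtain ⟨C, ε, hε, hC⟩ := hasymp
  have hbigO : (fun E => φ E - (E₀ - E) ^ k • c) =O[𝓝[<] E₀] fun E => (E₀ - E) ^ (k + δ) :=
    isBigO_rpow_nhdsLT_iff.2 ⟨C, ε, hε, fun E hεE hE => by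
      simpa only [max_eq_left (sub_nonneg.2 hE.le), smul_eq_mul, norm_eq_abs, mul_comm c]
        using hC E hεE⟩
  have h := isBigO_rpow_nhdsLT_iff.1 (gm_asymptotics_general hk (by linarith) hm
    hmeas.aestronglyMeasurable.stronglyMeasurableAtFilter hbigO)
  simpa only [densityFunctional, betaConstant, smul_eq_mul, norm_eq_abs, mul_comm, mul_left_comm,
    mul_assoc, add_right_comm k m δ] using h
end

section
/- Let n be a real number with 3 < n < 5. Then there exists a function ρ : [0,∞) → [0,∞) such that: ρ(r) = g(r²) for some C^∞ function g on [0,∞); ρ'(r) < 0 for all r > 0; ρ''(0) < 0; ρ(r) = r^{−2n/(n−1)} for all r > 1; and ∫₀¹ r² ρ(r) dr = (n−1)/(n−3). -/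
open MeasureTheory Real Set

/-!
In the variable `s = r²` the profile equals a given smooth decreasing `f` for `s > 1` and has to be
continued to a neighbourhood of `[0, 1]`, smoothly and with negative derivative. Composing `f` with
a smooth increasing `h` that is the identity on `[1, ∞)` and satisfies `h 0 ≈ 1` keeps the
continuation close to `f 1` on `[0, 1]`, so that its weighted integral comes close to the infimum
`f 1 * ∫ w`. Adding a nonnegative multiple of a smooth nonincreasing function supported in
`(-∞, 1]` then raises the integral to any prescribed larger value. For `f s = s ^ (-n / (n - 1))`
and `w r = r²` the infimum is `1 / 3`, which is less than `(n - 1) / (n - 3)`.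
-/

lemma deriv_comp_sq {g : ℝ → ℝ} {r : ℝ} (hg : DifferentiableAt ℝ g (r ^ 2)) :
    deriv (fun r => g (r ^ 2)) r = deriv g (r ^ 2) * (2 * r) := by
  have hsq : HasDerivAt (fun r : ℝ => r ^ 2) (2 * r) r := by simpa using hasDerivAt_pow 2 r
  exact (HasDerivAt.comp (h := fun r : ℝ => r ^ 2) r hg.hasDerivAt hsq).deriv

lemma iteratedDeriv_two_comp_sq_zero {g : ℝ → ℝ} (hg : ContDiffAt ℝ 2 g 0) :
    iteratedDeriv 2 (fun r => g (r ^ 2)) 0 = 2 * deriv g 0 := by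
  have hsq : Filter.Tendsto (fun r : ℝ => r ^ 2) (nhds 0) (nhds 0) := by
    simpa using (continuous_pow 2).tendsto (0 : ℝ)
  have hderiv : deriv (fun r => g (r ^ 2)) =ᶠ[nhds 0] fun r => deriv g (r ^ 2) * (2 * r) := by
    filter_upwards [hsq.eventually (hg.eventually (by simp))] with r hr
    exact deriv_comp_sq (hr.differentiableAt (by simp))
  have hg' : DifferentiableAt ℝ (deriv g) (0 ^ 2) := by
    rw [zero_pow two_ne_zero]
    exact (hg.derivWithin (m := 1) (by norm_num)).differentiableAt (by simp)
  have hcomp : DifferentiableAt ℝ (fun r : ℝ => deriv g (r ^ 2)) 0 :=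
    DifferentiableAt.comp (f := fun r : ℝ => r ^ 2) 0 hg' (differentiableAt_pow 2)
  have hprod := hcomp.hasDerivAt.mul ((hasDerivAt_id (0 : ℝ)).const_mul 2)
  rw [iteratedDeriv_succ, iteratedDeriv_one, hderiv.deriv_eq]
  simpa [mul_comm, Pi.mul_def] using hprod.deriv

lemma contDiffOn_comp_sqrt {F : ℝ → ℝ} {k : WithTop ℕ∞} (hF : ContDiffOn ℝ k F (Ioi 0)) :
    ContDiffOn ℝ k (fun s => F √s) (Ioi 0) :=
  hF.comp (fun _ hs => (contDiffAt_sqrt (ne_of_gt hs)).contDiffWithinAt) fun _ hs => sqrt_pos.2 hs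

lemma deriv_comp_sqrt_neg {F : ℝ → ℝ} {s : ℝ} (hs : 0 < s) (hF' : deriv F √s < 0) :
    deriv (fun s => F √s) s < 0 := by
  have hderiv := HasDerivAt.comp s (differentiableAt_of_deriv_ne_zero hF'.ne).hasDerivAt
    (hasDerivAt_sqrt hs.ne')
  exact hderiv.deriv.trans_lt (mul_neg_of_neg_of_pos hF' (by positivity))

lemma contDiffOn_rpow_const_Ioi (p : ℝ) {k : WithTop ℕ∞} :
    ContDiffOn ℝ k (fun r : ℝ => r ^ p) (Ioi 0) :=
  contDiffOn_id.rpow_const_of_ne fun _ hr => ne_of_gt hr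

lemma deriv_rpow_const_neg {p r : ℝ} (hp : p < 0) (hr : 0 < r) :
    deriv (fun r : ℝ => r ^ p) r < 0 := by
  rw [Real.deriv_rpow_const]
  exact mul_neg_of_neg_of_pos hp (rpow_pos_of_pos hr _)

lemma exists_contDiff_leftInverse_of_deriv_pos {k : WithTop ℕ∞} {p : ℝ → ℝ} (hp : ContDiff ℝ k p)
    (hp' : ∀ x, 0 < deriv p x) (hsurj : Function.Surjective p) :
    ∃ q : ℝ → ℝ, ContDiff ℝ k q ∧ (∀ y, 0 < deriv q y) ∧ Function.LeftInverse q p := by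
  let P : ℝ ≃o ℝ := (strictMono_of_deriv_pos hp').orderIsoOfSurjective p hsurj
  have hderiv (x : ℝ) : HasDerivAt P (deriv p x) x :=
    (differentiableAt_of_deriv_ne_zero (hp' x).ne').hasDerivAt
  refine ⟨P.symm, P.toHomeomorph.contDiff_symm_deriv (fun x => (hp' x).ne') hderiv hp,
    fun y => ?_, P.symm_apply_apply⟩
  have hinv : HasDerivAt P.symm (deriv p (P.symm y))⁻¹ y :=
    (hderiv _).of_local_left_inverse P.symm.continuous.continuousAt (hp' _).ne'
      (.of_forall P.apply_symm_apply)
  exact hinv.deriv ▸ inv_pos.2 (hp' _)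

/-- The smooth nonincreasing function that vanishes exactly on `[b, ∞)`; it serves both to bend the
identity below `b` and to raise integrals without changing values beyond `b`. -/
noncomputable def leftGlue (b s : ℝ) : ℝ := expNegInvGlue (b - s)

lemma contDiff_leftGlue (b : ℝ) : ContDiff ℝ (⊤ : ℕ∞) (leftGlue b) :=
  expNegInvGlue.contDiff.comp (contDiff_const.sub contDiff_id)

lemma differentiable_leftGlue (b : ℝ) : Differentiable ℝ (leftGlue b) :=
  (contDiff_leftGlue b).differentiable (by simp)

lemma deriv_leftGlue_nonpos (b s : ℝ) : deriv (leftGlue b) s ≤ 0 :=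
  Antitone.deriv_nonpos fun _ _ hst => expNegInvGlue.monotone (sub_le_sub_left hst b)

lemma leftGlue_pos {b s : ℝ} (hs : s < b) : 0 < leftGlue b s :=
  expNegInvGlue.pos_of_pos (sub_pos.2 hs)

lemma leftGlue_nonneg (b s : ℝ) : 0 ≤ leftGlue b s :=
  expNegInvGlue.nonneg _

lemma leftGlue_of_le {b s : ℝ} (hs : b ≤ s) : leftGlue b s = 0 :=
  expNegInvGlue.zero_of_nonpos (sub_nonpos.2 hs)

lemma surjective_sub_const_mul_leftGlue {N : ℝ} (hN : 0 ≤ N) (b : ℝ) :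
    Function.Surjective fun s => s - N * leftGlue b s := by
  refine Continuous.surjective
    (continuous_id.sub (continuous_const.mul (contDiff_leftGlue b).continuous)) ?_ ?_
  · refine Filter.tendsto_id.congr' ?_
    filter_upwards [Filter.eventually_ge_atTop b] with s hs
    simp [leftGlue_of_le hs]
  · exact Filter.tendsto_atBot_mono
      (fun s => sub_le_self s (mul_nonneg hN (leftGlue_nonneg b s))) Filter.tendsto_id

-- There is no convenient formula for `h`, but `s - N * leftGlue b s` with `N` large is a possible
-- inverse: it is at most `a` at `c`.
lemma exists_contDiff_deriv_pos_eq_self_of_le (a : ℝ) {b c : ℝ} (hcb : c < b) :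
    ∃ h : ℝ → ℝ, ContDiff ℝ (⊤ : ℕ∞) h ∧ (∀ s, 0 < deriv h s) ∧ (∀ s, b ≤ s → h s = s) ∧
      c ≤ h a := by
  have hglue : 0 < leftGlue b c := leftGlue_pos hcb
  set N : ℝ := |c - a| / leftGlue b c
  have hN : 0 ≤ N := by positivity
  set p : ℝ → ℝ := fun s => s - N * leftGlue b s with hp_def
  have hp : ContDiff ℝ (⊤ : ℕ∞) p :=
    contDiff_id.sub (contDiff_const.mul (contDiff_leftGlue b))
  have hp' (s : ℝ) : 0 < deriv p s := by
    have hderiv : HasDerivAt p (1 - N * deriv (leftGlue b) s) s :=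
      (hasDerivAt_id s).sub ((differentiable_leftGlue b s).hasDerivAt.const_mul N)
    rw [hderiv.deriv]
    linarith [mul_nonpos_of_nonneg_of_nonpos hN (deriv_leftGlue_nonpos b s)]
  obtain ⟨h, hh, hh', hleft⟩ :=
    exists_contDiff_leftInverse_of_deriv_pos hp hp' (surjective_sub_const_mul_leftGlue hN b)
  refine ⟨h, hh, hh', fun s hs => ?_, ?_⟩
  · simpa [hp_def, leftGlue_of_le hs] using hleft s
  · have hpc : p c ≤ a := by
      simp only [hp_def, N, div_mul_cancel₀ _ hglue.ne']
      linarith [le_abs_self (c - a)]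
    exact (hleft c).symm.trans_le ((strictMono_of_deriv_pos hh').monotone hpc)

/-- `g` continues `f` from `(1, ∞)` to a function that is smooth with negative derivative at every
point of `[0, ∞)`. These are the admissible profiles in the variable `s = r²`, with the behaviour
outside the unit ball prescribed by `f`. -/
structure IsRegularization (f g : ℝ → ℝ) : Prop where
  contDiffAt : ∀ s, 0 ≤ s → ContDiffAt ℝ (⊤ : ℕ∞) g s
  deriv_neg : ∀ s, 0 ≤ s → deriv g s < 0
  eq_of_one_lt : ∀ s, 1 < s → g s = f s

namespace IsRegularization

variable {f g : ℝ → ℝ}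

lemma differentiableAt (hg : IsRegularization f g) {s : ℝ} (hs : 0 ≤ s) :
    DifferentiableAt ℝ g s :=
  (hg.contDiffAt s hs).differentiableAt (by simp)

lemma contDiffOn (hg : IsRegularization f g) : ContDiffOn ℝ (⊤ : ℕ∞) g (Ici 0) :=
  fun s hs => (hg.contDiffAt s hs).contDiffWithinAt

lemma strictAntiOn (hg : IsRegularization f g) : StrictAntiOn g (Ici 0) :=
  strictAntiOn_of_deriv_neg (convex_Ici 0) hg.contDiffOn.continuousOn fun s hs =>
    hg.deriv_neg s (interior_subset hs)

lemma nonneg (hg : IsRegularization f g) (hf : ∀ s, 1 < s → 0 ≤ f s) {s : ℝ} (hs : 0 ≤ s) :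
    0 ≤ g s :=
  calc 0 ≤ f (s + 2) := hf _ (by linarith)
    _ = g (s + 2) := (hg.eq_of_one_lt _ (by linarith)).symm
    _ ≤ g s := hg.strictAntiOn.antitoneOn hs (mem_Ici.2 (by linarith)) (by linarith)

lemma continuous_comp_sq (hg : IsRegularization f g) : Continuous fun r => g (r ^ 2) :=
  hg.contDiffOn.continuousOn.comp_continuous (continuous_pow 2) sq_nonneg

lemma add_const_mul_leftGlue (hg : IsRegularization f g) {c : ℝ} (hc : 0 ≤ c) :
    IsRegularization f fun s => g s + c * leftGlue 1 s where
  contDiffAt s hs :=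
    (hg.contDiffAt s hs).add (contDiff_const.mul (contDiff_leftGlue 1)).contDiffAt
  deriv_neg s hs := by
    have hderiv : HasDerivAt (fun s => g s + c * leftGlue 1 s)
        (deriv g s + c * deriv (leftGlue 1) s) s :=
      (hg.differentiableAt hs).hasDerivAt.add
        ((differentiable_leftGlue 1 s).hasDerivAt.const_mul c)
    rw [hderiv.deriv]
    exact add_neg_of_neg_of_nonpos (hg.deriv_neg s hs)
      (mul_nonpos_of_nonneg_of_nonpos hc (deriv_leftGlue_nonpos 1 s))
  eq_of_one_lt s hs := by rw [leftGlue_of_le hs.le, mul_zero, add_zero, hg.eq_of_one_lt s hs]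

lemma comp {h : ℝ → ℝ} (hf : ContDiffOn ℝ (⊤ : ℕ∞) f (Ioi 0)) (hf' : ∀ s, 0 < s → deriv f s < 0)
    (hh : ContDiff ℝ (⊤ : ℕ∞) h) (hh' : ∀ s, 0 < deriv h s) (hh1 : ∀ s, 1 ≤ s → h s = s)
    (hh0 : 0 < h 0) : IsRegularization f (f ∘ h) := by
  have hpos {s : ℝ} (hs : 0 ≤ s) : 0 < h s :=
    hh0.trans_le ((strictMono_of_deriv_pos hh').monotone hs)
  refine ⟨fun s hs => (hf.contDiffAt (Ioi_mem_nhds (hpos hs))).comp s hh.contDiffAt,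
    fun s hs => ?_, fun s hs => congrArg f (hh1 s hs.le)⟩
  rw [deriv_comp s (differentiableAt_of_deriv_ne_zero (hf' _ (hpos hs)).ne)
    (differentiableAt_of_deriv_ne_zero (hh' s).ne')]
  exact mul_neg_of_neg_of_pos (hf' _ (hpos hs)) (hh' s)

end IsRegularization

lemma exists_isRegularization_zero_lt {f : ℝ → ℝ} {L : ℝ} (hf : ContDiffOn ℝ (⊤ : ℕ∞) f (Ioi 0))
    (hf' : ∀ s, 0 < s → deriv f s < 0) (hL : f 1 < L) :
    ∃ g, IsRegularization f g ∧ g 0 < L := by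
  have hpos_lt : ∀ᶠ c in nhds (1 : ℝ), 0 < c ∧ f c < L :=
    (eventually_gt_nhds one_pos).and
      ((hf.continuousOn.continuousAt (Ioi_mem_nhds one_pos)).eventually_lt_const hL)
  obtain ⟨c, ⟨hc0, hcL⟩, hc1⟩ : ∃ c, (0 < c ∧ f c < L) ∧ c < 1 :=
    ((hpos_lt.filter_mono nhdsWithin_le_nhds).and
      (self_mem_nhdsWithin : ∀ᶠ c in nhdsWithin (1 : ℝ) (Iio 1), c < 1)).exists
  obtain ⟨h, hh, hh', hh1, hch⟩ := exists_contDiff_deriv_pos_eq_self_of_le 0 hc1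
  have hh0 : 0 < h 0 := hc0.trans_le hch
  have hanti : StrictAntiOn f (Ioi 0) :=
    strictAntiOn_of_deriv_neg (convex_Ioi 0) hf.continuousOn fun s hs =>
      hf' s (interior_subset hs)
  exact ⟨f ∘ h, .comp hf hf' hh hh' hh1 hh0, (hanti.antitoneOn hc0 hh0 hch).trans_lt hcL⟩

section Integral

variable {w : ℝ → ℝ}

lemma integral_mul_comp_sq_le {g : ℝ → ℝ} (hw : IntervalIntegrable w volume 0 1)
    (hw0 : ∀ r ∈ Ioo (0 : ℝ) 1, 0 ≤ w r) (hg : AntitoneOn g (Ici 0))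
    (hgc : Continuous fun r => g (r ^ 2)) :
    ∫ r in (0 : ℝ)..1, w r * g (r ^ 2) ≤ (∫ r in (0 : ℝ)..1, w r) * g 0 := by
  rw [← intervalIntegral.integral_mul_const]
  refine intervalIntegral.integral_mono_on_of_le_Ioo zero_le_one
    (hw.mul_continuousOn hgc.continuousOn) (hw.mul_const _) fun r hr => ?_
  exact mul_le_mul_of_nonneg_left (hg self_mem_Ici (sq_nonneg r) (sq_nonneg r)) (hw0 r hr)

lemma continuous_leftGlue_sq (b : ℝ) : Continuous fun r => leftGlue b (r ^ 2) :=
  (contDiff_leftGlue b).continuous.comp (continuous_pow 2)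

lemma integral_mul_leftGlue_sq_pos (hw : IntervalIntegrable w volume 0 1)
    (hw0 : ∀ r ∈ Ioo (0 : ℝ) 1, 0 < w r) :
    0 < ∫ r in (0 : ℝ)..1, w r * leftGlue 1 (r ^ 2) := by
  refine intervalIntegral.intervalIntegral_pos_of_pos_on
    (hw.mul_continuousOn (continuous_leftGlue_sq 1).continuousOn) (fun r hr => ?_) zero_lt_one
  exact mul_pos (hw0 r hr) (leftGlue_pos (pow_lt_one₀ hr.1.le hr.2 two_ne_zero))

lemma exists_isRegularization_integral_eq {f : ℝ → ℝ} {M : ℝ}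
    (hf : ContDiffOn ℝ (⊤ : ℕ∞) f (Ioi 0)) (hf' : ∀ s, 0 < s → deriv f s < 0)
    (hw : IntervalIntegrable w volume 0 1) (hw0 : ∀ r ∈ Ioo (0 : ℝ) 1, 0 < w r)
    (hM : (∫ r in (0 : ℝ)..1, w r) * f 1 < M) :
    ∃ g, IsRegularization f g ∧ ∫ r in (0 : ℝ)..1, w r * g (r ^ 2) = M := by
  have hW : 0 < ∫ r in (0 : ℝ)..1, w r :=
    intervalIntegral.intervalIntegral_pos_of_pos_on hw hw0 zero_lt_one
  obtain ⟨g, hg, hgL⟩ := exists_isRegularization_zero_lt hf hf' ((lt_div_iff₀' hW).2 hM)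
  have hle : ∫ r in (0 : ℝ)..1, w r * g (r ^ 2) ≤ M :=
    (integral_mul_comp_sq_le hw (fun r hr => (hw0 r hr).le) hg.strictAntiOn.antitoneOn
      hg.continuous_comp_sq).trans ((lt_div_iff₀' hW).1 hgL).le
  have hB := integral_mul_leftGlue_sq_pos hw hw0
  set I := ∫ r in (0 : ℝ)..1, w r * g (r ^ 2)
  set B := ∫ r in (0 : ℝ)..1, w r * leftGlue 1 (r ^ 2)
  refine ⟨_, hg.add_const_mul_leftGlue (div_nonneg (sub_nonneg.2 hle) hB.le), ?_⟩
  calc ∫ r in (0 : ℝ)..1, w r * (g (r ^ 2) + (M - I) / B * leftGlue 1 (r ^ 2))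
      = ∫ r in (0 : ℝ)..1, w r * g (r ^ 2) + (M - I) / B * (w r * leftGlue 1 (r ^ 2)) := by
        simp only [mul_add, mul_left_comm]
    _ = I + (M - I) / B * B := by
        rw [intervalIntegral.integral_add
          (hw.mul_continuousOn hg.continuous_comp_sq.continuousOn)
          ((hw.mul_continuousOn (continuous_leftGlue_sq 1).continuousOn).const_mul _),
          intervalIntegral.integral_const_mul]
    _ = M := by rw [div_mul_cancel₀ _ hB.ne', add_sub_cancel]

end Integral

theorem singular_profile_exists_general {F w : ℝ → ℝ} {M : ℝ}
    (hF : ContDiffOn ℝ (⊤ : ℕ∞) F (Ioi 0)) (hF' : ∀ r, 0 < r → deriv F r < 0)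
    (hF0 : ∀ r, 1 < r → 0 ≤ F r) (hw : IntervalIntegrable w volume 0 1)
    (hw0 : ∀ r ∈ Ioo (0 : ℝ) 1, 0 < w r) (hM : (∫ r in (0 : ℝ)..1, w r) * F 1 < M) :
    ∃ ρ : ℝ → ℝ,
      (∀ r : ℝ, 0 ≤ r → 0 ≤ ρ r) ∧
      (∃ g : ℝ → ℝ, ContDiffOn ℝ (⊤ : ℕ∞) g (Ici 0) ∧ ∀ r : ℝ, ρ r = g (r ^ 2)) ∧
      (∀ r : ℝ, 0 < r → deriv ρ r < 0) ∧
      iteratedDeriv 2 ρ 0 < 0 ∧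
      (∀ r : ℝ, 1 < r → ρ r = F r) ∧
      (∫ r in (0 : ℝ)..1, w r * ρ r) = M := by
  obtain ⟨g, hg, hgM⟩ := exists_isRegularization_integral_eq (contDiffOn_comp_sqrt hF)
    (fun s hs => deriv_comp_sqrt_neg hs (hF' _ (sqrt_pos.2 hs))) hw hw0 (by simpa using hM)
  refine ⟨fun r => g (r ^ 2), fun r _ => ?_, ⟨g, hg.contDiffOn, fun _ => rfl⟩, fun r hr => ?_, ?_,
    fun r hr => ?_, hgM⟩
  · exact hg.nonneg (fun s hs => hF0 _ (lt_sqrt_of_sq_lt (by simpa using hs))) (sq_nonneg r)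
  · rw [deriv_comp_sq (hg.differentiableAt (sq_nonneg r))]
    exact mul_neg_of_neg_of_pos (hg.deriv_neg _ (sq_nonneg r)) (by positivity)
  · rw [iteratedDeriv_two_comp_sq_zero (contDiffAt_infty.1 (hg.contDiffAt 0 le_rfl) 2)]
    exact mul_neg_of_pos_of_neg two_pos (hg.deriv_neg 0 le_rfl)
  · exact (hg.eq_of_one_lt _ (one_lt_pow₀ hr two_ne_zero)).trans
      (congrArg F (sqrt_sq (by linarith)))

lemma integral_sq_lt_sub_one_div_sub_three {n : ℝ} (hn : 3 < n) :
    ∫ r in (0 : ℝ)..1, r ^ 2 < (n - 1) / (n - 3) := by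
  rw [integral_pow, lt_div_iff₀ (by linarith)]
  norm_num
  linarith

theorem singular_profile_exists (n : ℝ) (hn1 : 3 < n) (hn2 : n < 5) :
    ∃ ρ : ℝ → ℝ,
      (∀ r : ℝ, 0 ≤ r → 0 ≤ ρ r) ∧
      (∃ g : ℝ → ℝ, ContDiffOn ℝ (⊤ : ℕ∞) g (Ici 0) ∧ ∀ r : ℝ, ρ r = g (r ^ 2)) ∧
      (∀ r : ℝ, 0 < r → deriv ρ r < 0) ∧
      iteratedDeriv 2 ρ 0 < 0 ∧
      (∀ r : ℝ, 1 < r → ρ r = r ^ (-(2 * n / (n - 1)))) ∧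
      (∫ r in (0:ℝ)..1, r ^ 2 * ρ r) = (n - 1) / (n - 3) := by
  have hexp : -(2 * n / (n - 1)) < 0 := neg_neg_of_pos (div_pos (by linarith) (by linarith))
  exact singular_profile_exists_general (contDiffOn_rpow_const_Ioi _)
    (fun _ => deriv_rpow_const_neg hexp) (fun r hr => rpow_nonneg (by linarith) _)
    ((continuous_pow 2).intervalIntegrable 0 1) (fun r hr => pow_pos hr.1 2)
    (by simpa only [one_rpow, mul_one] using integral_sq_lt_sub_one_div_sub_three hn1)
end
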